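/- arXiv:2109.01027 — 4 statements merged into one kernel-verified Lean document; each statement's English description precedes it below -/
import Mathlib

section
/- There exist constants ε₀ > 0, C > 0 and γ ∈ (0,1), depending only on N, Λ and β, such that the following holds: for every R > 0, every ε with 0 < ε < ε₀R, every bounded Borel measurable f : ℝ^N → ℝ, and every bounded Borel measurable u : ℝ^N → ℝ satisfying, for every x ∈ B_{2R}(0), both u(x) ≤ α sup_{z ∈ B_Λ} (u(x+εz)+u(x−εz))/2 + β ⨍_{B_ε(x)} u(y) dy + ε² |f(x)| and u(x) ≥ α inf_{z ∈ B_Λ} (u(x+εz)+u(x−εz))/2 + β ⨍_{B_ε(x)} u(y) dy − ε² |f(x)| (equivalently, L⁺_ε u ≥ −|f| and L⁻_ε u ≤ |f| on B_{2R}(0)), one has |u(x) − u(z)| ≤ (C / R^γ)( sup_{B_{2R}(0)} |u| + R² sup_{B_{2R}(0)} |f| )( |x − z|^γ + ε^γ ) for all x, z ∈ B_R(0). -/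
open MeasureTheory Metric

noncomputable section

/-- Second difference `δu(x,y) = u(x+y) + u(x−y) − 2u(x)`. -/
def secondDiff (N : ℕ) (u : EuclideanSpace ℝ (Fin N) → ℝ) (x y : EuclideanSpace ℝ (Fin N)) : ℝ :=
  u (x + y) + u (x - y) - 2 * u x

/-- Discrete maximal Pucci-type operator `L⁺_ε`. -/
def LepsPlus (N : ℕ) (Λ α β ε : ℝ) (u : EuclideanSpace ℝ (Fin N) → ℝ)
    (x : EuclideanSpace ℝ (Fin N)) : ℝ :=
  (1 / (2 * ε ^ 2)) *
    (α * sSup ((fun z => secondDiff N u x (ε • z)) '' ball (0 : EuclideanSpace ℝ (Fin N)) Λ) +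
      β * ⨍ y in ball (0 : EuclideanSpace ℝ (Fin N)) 1, secondDiff N u x (ε • y))

/-- Discrete minimal Pucci-type operator `L⁻_ε`. -/
def LepsMinus (N : ℕ) (Λ α β ε : ℝ) (u : EuclideanSpace ℝ (Fin N) → ℝ)
    (x : EuclideanSpace ℝ (Fin N)) : ℝ :=
  (1 / (2 * ε ^ 2)) *
    (α * sInf ((fun z => secondDiff N u x (ε • z)) '' ball (0 : EuclideanSpace ℝ (Fin N)) Λ) +
      β * ⨍ y in ball (0 : EuclideanSpace ℝ (Fin N)) 1, secondDiff N u x (ε • y))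



/-- supersolution at a point, in a form free of infima -/
def IsSuper (N : ℕ) (Λ β ε ρ : ℝ) (u : EuclideanSpace ℝ (Fin N) → ℝ)
    (x : EuclideanSpace ℝ (Fin N)) : Prop :=
  ∀ m : ℝ, (∀ h ∈ ball (0 : EuclideanSpace ℝ (Fin N)) (Λ * ε), m ≤ secondDiff N u x h) →
    (1 - β) * m + β * ⨍ y in ball (0 : EuclideanSpace ℝ (Fin N)) 1, secondDiff N u x (ε • y) ≤ ρ

/-- bounded measurable -/
def BM (N : ℕ) (u : EuclideanSpace ℝ (Fin N) → ℝ) : Prop :=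
  Measurable u ∧ ∃ M, ∀ y, |u y| ≤ M

/-- volume of the unit ball -/
def om (N : ℕ) : ℝ := (volume : Measure (EuclideanSpace ℝ (Fin N))).real (ball 0 1)

lemma om_pos (N : ℕ) : 0 < om N := by
  unfold om
  rw [measureReal_def]
  exact ENNReal.toReal_pos (measure_ball_pos _ _ one_pos).ne' measure_ball_lt_top.ne

lemma vol_ball {N : ℕ} (x : EuclideanSpace ℝ (Fin N)) {r : ℝ} (hr : 0 < r) :
    volume (ball x r) = ENNReal.ofReal (r ^ N * om N) := by
  have h := Measure.addHaar_ball_mul_of_pos (volume : Measure (EuclideanSpace ℝ (Fin N))) x hr 1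
  rw [mul_one] at h
  rw [h, ENNReal.ofReal_mul (by positivity), om, ofReal_measureReal measure_ball_lt_top.ne]
  simp

lemma vol_closedBall {N : ℕ} (x : EuclideanSpace ℝ (Fin N)) {r : ℝ} (hr : 0 < r) :
    volume (closedBall x r) = ENNReal.ofReal (r ^ N * om N) := by
  have h := Measure.addHaar_closedBall (volume : Measure (EuclideanSpace ℝ (Fin N))) x hr.le
  rw [h, ENNReal.ofReal_mul (by positivity), om, ofReal_measureReal measure_ball_lt_top.ne]
  simp

lemma volr_ball {N : ℕ} (x : EuclideanSpace ℝ (Fin N)) {r : ℝ} (hr : 0 < r) :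
    volume.real (ball x r) = r ^ N * om N := by
  rw [measureReal_def, vol_ball x hr, ENNReal.toReal_ofReal]
  have := om_pos N; positivity

open scoped Pointwise in
lemma int_comp {N : ℕ} (g : EuclideanSpace ℝ (Fin N) → ℝ) (x : EuclideanSpace ℝ (Fin N)) {ε : ℝ}
    (hε : 0 < ε) :
    ∫ y in ball (0 : EuclideanSpace ℝ (Fin N)) 1, g (x + ε • y) =
      (ε ^ N)⁻¹ * ∫ p in ball x ε, g p := by
  have h1 := Measure.setIntegral_comp_smul_of_pos (volume : Measure (EuclideanSpace ℝ (Fin N)))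
    (fun y => g (x + y)) (ball 0 1) hε
  rw [h1, smul_eq_mul]
  have h2 : ε • ball (0 : EuclideanSpace ℝ (Fin N)) 1 = (fun y => x + y) ⁻¹' (ball x ε) := by
    rw [_root_.smul_ball hε.ne']
    simp [abs_of_pos hε]
  rw [h2, (measurePreserving_add_left volume x).setIntegral_preimage_emb
    (MeasurableEquiv.addLeft x).measurableEmbedding]
  simp

lemma BM.integrableOn {N : ℕ} {u : EuclideanSpace ℝ (Fin N) → ℝ} (hu : BM N u)
    {s : Set (EuclideanSpace ℝ (Fin N))} (hs : volume s ≠ ⊤) : IntegrableOn u s := by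
  obtain ⟨hm, M, hM⟩ := hu
  exact Measure.integrableOn_of_bounded hs hm.aestronglyMeasurable (M := M)
    (Filter.Eventually.of_forall (fun y => by simpa using hM y))

lemma BM.integrableOn_ball {N : ℕ} {u : EuclideanSpace ℝ (Fin N) → ℝ} (hu : BM N u)
    (x : EuclideanSpace ℝ (Fin N)) (r : ℝ) : IntegrableOn u (ball x r) :=
  hu.integrableOn measure_ball_lt_top.ne

lemma BM.comp {N : ℕ} {u : EuclideanSpace ℝ (Fin N) → ℝ} (hu : BM N u)
    {φ : EuclideanSpace ℝ (Fin N) → EuclideanSpace ℝ (Fin N)} (hφ : Measurable φ) :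
    BM N (fun y => u (φ y)) :=
  ⟨hu.1.comp hφ, hu.2.imp fun _ hM y => hM _⟩

lemma BM.sd {N : ℕ} {u : EuclideanSpace ℝ (Fin N) → ℝ} (hu : BM N u)
    (x : EuclideanSpace ℝ (Fin N)) (ε : ℝ) : BM N (fun y => secondDiff N u x (ε • y)) := by
  obtain ⟨hm, M, hM⟩ := hu
  refine ⟨?_, 4 * M, fun y => ?_⟩
  · unfold secondDiff
    have h1 : Measurable fun y : EuclideanSpace ℝ (Fin N) => u (x + ε • y) :=
      hm.comp (by fun_prop)
    have h2 : Measurable fun y : EuclideanSpace ℝ (Fin N) => u (x - ε • y) :=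
      hm.comp (by fun_prop)
    exact (h1.add h2).sub_const _
  · unfold secondDiff
    have h1 := abs_le.1 (hM (x + ε • y))
    have h2 := abs_le.1 (hM (x - ε • y))
    have h3 := abs_le.1 (hM x)
    rw [abs_le]
    constructor <;> linarith

lemma IsSuper.mono {N : ℕ} {Λ β ε ρ ρ' : ℝ} {u : EuclideanSpace ℝ (Fin N) → ℝ}
    {x : EuclideanSpace ℝ (Fin N)} (h : IsSuper N Λ β ε ρ u x) (hρ : ρ ≤ ρ') :
    IsSuper N Λ β ε ρ' u x := fun m hm => (h m hm).trans hρ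

/-- scaling -/
lemma IsSuper.scale {N : ℕ} {Λ β ε ρ : ℝ} {u : EuclideanSpace ℝ (Fin N) → ℝ}
    (x₀ p : EuclideanSpace ℝ (Fin N)) {r : ℝ} (hr : 0 < r) (a : ℝ) {ω : ℝ} (hω : 0 < ω)
    (h : IsSuper N Λ β ε ρ u (x₀ + r • p)) :
    IsSuper N Λ β (ε / r) (ρ / ω) (fun q => (u (x₀ + r • q) - a) / ω) p := by
  have key : ∀ k : EuclideanSpace ℝ (Fin N),
      secondDiff N (fun q => (u (x₀ + r • q) - a) / ω) p k
        = secondDiff N u (x₀ + r • p) (r • k) / ω := by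
    intro k
    simp only [secondDiff, smul_add, smul_sub, add_assoc, add_sub_assoc]
    ring
  intro m hm
  have h1 := h (m * ω) (fun k hk => by
    have h2 := hm (r⁻¹ • k) (by
      rw [mem_ball_zero_iff] at hk ⊢
      rw [norm_smul, Real.norm_eq_abs, abs_of_pos (inv_pos.2 hr)]
      rw [inv_mul_lt_iff₀ hr]
      calc ‖k‖ < Λ * ε := hk
        _ = r * (Λ * (ε / r)) := by field_simp)
    rw [key, smul_smul, mul_inv_cancel₀ hr.ne', one_smul, le_div_iff₀ hω] at h2
    exact h2)
  rw [le_div_iff₀ hω]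
  refine le_trans (le_of_eq ?_) h1
  simp only [key, smul_smul, mul_div_cancel₀ _ hr.ne']
  simp only [setAverage_eq, integral_div, smul_eq_mul]
  have hω' := hω.ne'
  field_simp

/-- averages of lower bounds -/
lemma avg_ge {N : ℕ} {F G : EuclideanSpace ℝ (Fin N) → ℝ} {b : ℝ}
    (hF : IntegrableOn F (ball 0 1)) (hG : IntegrableOn G (ball 0 1))
    (h : ∀ y ∈ ball (0 : EuclideanSpace ℝ (Fin N)) 1, G y - b ≤ F y) :
    (⨍ y in ball (0 : EuclideanSpace ℝ (Fin N)) 1, G y) - b ≤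
      ⨍ y in ball (0 : EuclideanSpace ℝ (Fin N)) 1, F y := by
  have h0 := om_pos N
  have hc : IntegrableOn (fun _ : EuclideanSpace ℝ (Fin N) => b) (ball 0 1) :=
    integrableOn_const measure_ball_lt_top.ne
  have h1 := setIntegral_mono_on (hG.sub hc) hF measurableSet_ball h
  rw [integral_sub' hG hc, setIntegral_const] at h1
  rw [setAverage_eq, setAverage_eq, smul_eq_mul, smul_eq_mul]
  change _ - om N * b ≤ _ at h1
  change (om N)⁻¹ * _ - b ≤ (om N)⁻¹ * _
  have := mul_le_mul_of_nonneg_left h1 (inv_pos.2 h0).le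
  rw [mul_sub, inv_mul_cancel_left₀ h0.ne'] at this
  exact this

lemma keyK {N : ℕ} {Λ β ε ρ b : ℝ} {u g : EuclideanSpace ℝ (Fin N) → ℝ}
    {x : EuclideanSpace ℝ (Fin N)} (hΛ : 1 ≤ Λ) (hβ : β ∈ Set.Ioc (0 : ℝ) 1) (hε : 0 < ε)
    (hu : BM N u) (hs : IsSuper N Λ β ε ρ u x) (hg : Measurable g)
    (hgb : ∃ M, ∀ y ∈ ball x ε, |g y| ≤ M)
    (hg0 : ∀ y ∈ ball x (Λ * ε), 0 ≤ g y)
    (hgu : ∀ h ∈ ball (0 : EuclideanSpace ℝ (Fin N)) (Λ * ε),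
      g (x + h) + g (x - h) - b ≤ secondDiff N u x h) :
    β * ∫ y in ball x ε, g y ≤ (ρ + b) * (ε ^ N * om N) := by
  have hm : ∀ h ∈ ball (0 : EuclideanSpace ℝ (Fin N)) (Λ * ε), x + h ∈ ball x (Λ * ε) ∧
      x - h ∈ ball x (Λ * ε) := by
    intro h hh
    simpa [mem_ball, dist_eq_norm] using hh
  have h1 := hs (-b) (fun h hh => by
    have := hgu h hh
    have h2 := hg0 _ (hm h hh).1
    have h3 := hg0 _ (hm h hh).2
    linarith)
  obtain ⟨M, hM⟩ := hgb
  have hgi : IntegrableOn (fun y => g (x + ε • y)) (ball 0 1) := by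
    apply Measure.integrableOn_of_bounded (M := M) measure_ball_lt_top.ne
    · exact (hg.comp (by fun_prop : Measurable fun y : EuclideanSpace ℝ (Fin N) =>
        x + ε • y)).aestronglyMeasurable
    · refine (ae_restrict_iff' measurableSet_ball).2 (Filter.Eventually.of_forall fun y hy => ?_)
      rw [Real.norm_eq_abs]
      apply hM
      rw [mem_ball_zero_iff] at hy
      rw [mem_ball, dist_eq_norm, add_sub_cancel_left, norm_smul, Real.norm_eq_abs, abs_of_pos hε]
      nlinarith
  have h2 : (⨍ y in ball (0 : EuclideanSpace ℝ (Fin N)) 1, g (x + ε • y)) - b ≤ _ :=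
    avg_ge (((hu.sd x ε)).integrableOn_ball 0 1) hgi (fun y hy => by
      have hy' : ε • y ∈ ball (0 : EuclideanSpace ℝ (Fin N)) (Λ * ε) := by
        rw [mem_ball_zero_iff] at hy ⊢
        rw [norm_smul, Real.norm_eq_abs, abs_of_pos hε]
        nlinarith
      have := hgu _ hy'
      have h3 := hg0 _ (hm _ hy').2
      linarith)
  have h0 := om_pos N
  have h3 : β * (⨍ y in ball (0 : EuclideanSpace ℝ (Fin N)) 1, g (x + ε • y)) ≤ ρ + b := by
    have := mul_le_mul_of_nonneg_left h2 hβ.1.le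
    linarith
  rw [setAverage_eq, int_comp _ _ hε, smul_eq_mul] at h3
  change β * ((om N)⁻¹ * _) ≤ _ at h3
  have hp : 0 < ε ^ N * om N := by positivity
  calc _ = (β * ((om N)⁻¹ * ((ε ^ N)⁻¹ * ∫ p in ball x ε, g p))) * (ε ^ N * om N) := by
        field_simp
    _ ≤ _ := mul_le_mul_of_nonneg_right h3 hp.le

lemma cheb {N : ℕ} {ε l : ℝ} {g : EuclideanSpace ℝ (Fin N) → ℝ}
    {x : EuclideanSpace ℝ (Fin N)} (hg : IntegrableOn g (ball x ε))
    (hg0 : ∀ y ∈ ball x ε, 0 ≤ g y) {S : Set (EuclideanSpace ℝ (Fin N))} (hS : MeasurableSet S)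
    (hSb : S ⊆ ball x ε) (hl : ∀ y ∈ S, l ≤ g y) :
    l * volume.real S ≤ ∫ y in ball x ε, g y := by
  have h1 : volume S ≠ ⊤ := ((measure_mono hSb).trans_lt measure_ball_lt_top).ne
  have h2 : ∫ y in S, g y ≤ ∫ y in ball x ε, g y :=
    setIntegral_mono_set hg ((ae_restrict_iff' measurableSet_ball).2
      (Filter.Eventually.of_forall hg0)) (Filter.Eventually.of_forall hSb)
  refine le_trans ?_ h2
  have h3 := setIntegral_mono_on (f := fun _ => l) (integrableOn_const h1) (hg.mono_set hSb) hS hl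
  rw [setIntegral_const, smul_eq_mul] at h3
  linarith


/-- gap between `u` and the touching paraboloid -/
def gq {N : ℕ} (u : EuclideanSpace ℝ (Fin N) → ℝ) (ε : ℝ) (x y p : EuclideanSpace ℝ (Fin N)) : ℝ :=
  u p + ‖p - y‖ ^ 2 - u x - ‖x - y‖ ^ 2 + ε ^ 2

lemma gq_meas {N : ℕ} {u : EuclideanSpace ℝ (Fin N) → ℝ} (hu : BM N u) (ε : ℝ)
    (x y : EuclideanSpace ℝ (Fin N)) : Measurable (gq u ε x y) := by
  unfold gq
  have h1 : Measurable fun p : EuclideanSpace ℝ (Fin N) => ‖p - y‖ ^ 2 := by fun_prop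
  exact (((hu.1.add h1).sub_const _).sub_const _).add_const _

lemma gq_bdd {N : ℕ} {u : EuclideanSpace ℝ (Fin N) → ℝ} (hu : BM N u) (ε : ℝ)
    (x y : EuclideanSpace ℝ (Fin N)) : ∃ M, ∀ p ∈ ball x ε, |gq u ε x y p| ≤ M := by
  obtain ⟨hm, M, hM⟩ := hu
  refine ⟨2 * M + (‖x - y‖ + ε) ^ 2 + ‖x - y‖ ^ 2 + ε ^ 2, fun p hp => ?_⟩
  have h1 : ‖p - y‖ ≤ ‖x - y‖ + ε := by
    have h2 : p - y = (x - y) + (p - x) := by abel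
    rw [h2]
    refine (norm_add_le _ _).trans ?_
    have := mem_ball_iff_norm.1 hp
    linarith
  have h2 : ‖p - y‖ ^ 2 ≤ (‖x - y‖ + ε) ^ 2 := by gcongr
  have h3 := abs_le.1 (hM p)
  have h4 := abs_le.1 (hM x)
  have h5 := sq_nonneg ‖p - y‖
  have h6 := sq_nonneg ‖x - y‖
  have h7 := sq_nonneg ε
  unfold gq
  rw [abs_le]
  constructor <;> linarith [sq_nonneg (‖x - y‖ + ε)]

lemma gq_int {N : ℕ} {u : EuclideanSpace ℝ (Fin N) → ℝ} (hu : BM N u) (ε : ℝ)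
    (x y : EuclideanSpace ℝ (Fin N)) : IntegrableOn (gq u ε x y) (ball x ε) := by
  obtain ⟨M, hM⟩ := gq_bdd hu ε x y
  apply Measure.integrableOn_of_bounded (M := M) measure_ball_lt_top.ne
  · exact (gq_meas hu ε x y).aestronglyMeasurable
  · exact (ae_restrict_iff' measurableSet_ball).2 (Filter.Eventually.of_forall hM)

lemma contact_int {N : ℕ} {Λ β ε ρ : ℝ} {u : EuclideanSpace ℝ (Fin N) → ℝ}
    {x y : EuclideanSpace ℝ (Fin N)} (hΛ : 1 ≤ Λ) (hβ : β ∈ Set.Ioc (0 : ℝ) 1) (hε : 0 < ε)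
    (hu : BM N u) (hs : IsSuper N Λ β ε ρ u x) (hρ : ρ ≤ 2 * ε ^ 2)
    (hc : ∀ p ∈ ball x (Λ * ε), u x + ‖x - y‖ ^ 2 ≤ u p + ‖p - y‖ ^ 2 + ε ^ 2) :
    ∫ p in ball x ε, gq u ε x y p ≤ (2 * Λ ^ 2 + 4) / β * ε ^ 2 * (ε ^ N * om N) := by
  have h1 := keyK (b := 2 * Λ ^ 2 * ε ^ 2 + 2 * ε ^ 2) hΛ hβ hε hu (hs.mono hρ) (gq_meas hu ε x y)
    (gq_bdd hu ε x y) (fun p hp => by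
      have := hc p hp
      unfold gq; linarith) (fun h hh => by
      have hpar := parallelogram_law_with_norm ℝ (x - y) h
      have e1 : x + h - y = x - y + h := by abel
      have e2 : x - h - y = x - y - h := by abel
      rw [mem_ball_zero_iff] at hh
      have h2 : ‖h‖ ^ 2 ≤ (Λ * ε) ^ 2 := by gcongr
      unfold gq secondDiff
      rw [e1, e2]
      nlinarith)
  rw [div_mul_eq_mul_div, div_mul_eq_mul_div, le_div_iff₀ hβ.1]
  calc _ = _ := mul_comm _ _
    _ ≤ _ := h1
    _ = _ := by ring

lemma exists_common {N : ℕ} {ε c : ℝ} (hε : 0 < ε) (hc : 0 < c)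
    {g₁ g₂ : EuclideanSpace ℝ (Fin N) → ℝ} {x₁ x₂ z : EuclideanSpace ℝ (Fin N)}
    (hi₁ : IntegrableOn g₁ (ball x₁ ε)) (hi₂ : IntegrableOn g₂ (ball x₂ ε))
    (hp₁ : ∀ y ∈ ball x₁ ε, 0 ≤ g₁ y) (hp₂ : ∀ y ∈ ball x₂ ε, 0 ≤ g₂ y)
    (h₁ : ∫ p in ball x₁ ε, g₁ p ≤ c * (ε ^ N * om N))
    (h₂ : ∫ p in ball x₂ ε, g₂ p ≤ c * (ε ^ N * om N))
    (hz₁ : ball z (ε / 8) ⊆ ball x₁ ε) (hz₂ : ball z (ε / 8) ⊆ ball x₂ ε) :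
    ∃ p ∈ ball z (ε / 8), g₁ p + g₂ p < 3 * 8 ^ N * c := by
  by_contra! hcon
  have hS := volr_ball z (show 0 < ε / 8 by positivity)
  have hfin : volume (ball z (ε / 8)) ≠ ⊤ := measure_ball_lt_top.ne
  have e1 : ∫ y in ball z (ε / 8), g₁ y ≤ ∫ y in ball x₁ ε, g₁ y :=
    setIntegral_mono_set hi₁ ((ae_restrict_iff' measurableSet_ball).2
      (Filter.Eventually.of_forall hp₁)) (Filter.Eventually.of_forall hz₁)
  have e2 : ∫ y in ball z (ε / 8), g₂ y ≤ ∫ y in ball x₂ ε, g₂ y :=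
    setIntegral_mono_set hi₂ ((ae_restrict_iff' measurableSet_ball).2
      (Filter.Eventually.of_forall hp₂)) (Filter.Eventually.of_forall hz₂)
  have h3 := setIntegral_mono_on (f := fun _ => 3 * 8 ^ N * c) (integrableOn_const hfin)
    ((hi₁.mono_set hz₁).add (hi₂.mono_set hz₂)) measurableSet_ball hcon
  rw [setIntegral_const, smul_eq_mul, integral_add' (hi₁.mono_set hz₁) (hi₂.mono_set hz₂), hS,
    div_pow] at h3
  have h0 := om_pos N
  have h4 : ε ^ N / 8 ^ N * om N * (3 * 8 ^ N * c) = 3 * (c * (ε ^ N * om N)) := by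
    field_simp
  have h5 : 0 < c * (ε ^ N * om N) := by positivity
  linarith

lemma two_contact {N : ℕ} {ε c : ℝ} (hε : 0 < ε) (hc : 0 < c) {u : EuclideanSpace ℝ (Fin N) → ℝ}
    (hu : BM N u) {x₁ x₂ y₁ y₂ : EuclideanSpace ℝ (Fin N)}
    (hp₁ : ∀ p ∈ ball x₁ ε, 0 ≤ gq u ε x₁ y₁ p) (hp₂ : ∀ p ∈ ball x₂ ε, 0 ≤ gq u ε x₂ y₂ p)
    (h₁ : ∫ p in ball x₁ ε, gq u ε x₁ y₁ p ≤ c * ε ^ 2 * (ε ^ N * om N))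
    (h₂ : ∫ p in ball x₂ ε, gq u ε x₂ y₂ p ≤ c * ε ^ 2 * (ε ^ N * om N))
    (hx : dist x₁ x₂ ≤ ε / 2) : dist y₁ y₂ ≤ 12 * 8 ^ N * c * ε := by
  rcases eq_or_ne y₁ y₂ with rfl | hy
  · rw [dist_self]; positivity
  set v := y₁ - y₂ with hv
  have hd : 0 < ‖v‖ := norm_pos_iff.2 (sub_ne_zero.2 hy)
  have hex : ∀ s : ℝ, |s| ≤ ε / 4 → ∃ p ∈ ball (x₁ + (s / ‖v‖) • v) (ε / 8),
      gq u ε x₁ y₁ p + gq u ε x₂ y₂ p < 3 * 8 ^ N * (c * ε ^ 2) := by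
    intro s hs
    have hn : ‖(s / ‖v‖) • v‖ = |s| := by
      rw [norm_smul, Real.norm_eq_abs, abs_div, abs_norm, div_mul_cancel₀ _ hd.ne']
    have hd1 : dist (x₁ + (s / ‖v‖) • v) x₁ ≤ ε / 4 := by
      rw [dist_eq_norm, add_sub_cancel_left, hn]; exact hs
    have hd2 := dist_triangle (x₁ + (s / ‖v‖) • v) x₁ x₂
    exact exists_common hε (by positivity) (gq_int hu ε x₁ y₁) (gq_int hu ε x₂ y₂) hp₁ hp₂ h₁ h₂
      (ball_subset_ball' (by linarith)) (ball_subset_ball' (by linarith))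
  obtain ⟨p, hp, hpl⟩ := hex (ε / 4) (by rw [abs_of_pos (by positivity)])
  obtain ⟨q, hq, hql⟩ := hex (-(ε / 4)) (by rw [abs_neg, abs_of_pos (by positivity)])
  have hε8 : ε / 8 < ε := by linarith
  have hmem : ∀ s : ℝ, |s| ≤ ε / 4 → ∀ p ∈ ball (x₁ + (s / ‖v‖) • v) (ε / 8),
      0 ≤ gq u ε x₁ y₁ p ∧ 0 ≤ gq u ε x₂ y₂ p := by
    intro s hs p hp
    have hn : ‖(s / ‖v‖) • v‖ = |s| := by
      rw [norm_smul, Real.norm_eq_abs, abs_div, abs_norm, div_mul_cancel₀ _ hd.ne']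
    have hd1 : dist (x₁ + (s / ‖v‖) • v) x₁ ≤ ε / 4 := by
      rw [dist_eq_norm, add_sub_cancel_left, hn]; exact hs
    have hd2 := dist_triangle (x₁ + (s / ‖v‖) • v) x₁ x₂
    exact ⟨hp₁ p (ball_subset_ball' (by linarith) hp), hp₂ p (ball_subset_ball' (by linarith) hp)⟩
  have hp0 := hmem (ε / 4) (by rw [abs_of_pos (by positivity)]) p hp
  have hq0 := hmem (-(ε / 4)) (by rw [abs_neg, abs_of_pos (by positivity)]) q hq
  -- the difference of the two gaps is affine
  have hid : (gq u ε x₁ y₁ q - gq u ε x₂ y₂ q) - (gq u ε x₁ y₁ p - gq u ε x₂ y₂ p)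
      = 2 * inner ℝ (p - q) v := by
    unfold gq
    have e : ∀ a b : EuclideanSpace ℝ (Fin N), ‖a - b‖ ^ 2 = ‖a‖ ^ 2 - 2 * inner ℝ a b + ‖b‖ ^ 2 :=
      fun a b => norm_sub_sq_real a b
    rw [e q y₁, e q y₂, e p y₁, e p y₂, hv]
    simp only [inner_sub_left, inner_sub_right]
    ring
  have hpq : p - q = (ε / 2 / ‖v‖) • v + ((p - (x₁ + (ε / 4 / ‖v‖) • v)) -
      (q - (x₁ + (-(ε / 4) / ‖v‖) • v))) := by
    have : (ε / 2 / ‖v‖) • v = (ε / 4 / ‖v‖) • v - (-(ε / 4) / ‖v‖) • v := by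
      rw [← sub_smul]; congr 1; ring
    rw [this]; abel
  set w := (p - (x₁ + (ε / 4 / ‖v‖) • v)) - (q - (x₁ + (-(ε / 4) / ‖v‖) • v)) with hw
  have hwn : ‖w‖ ≤ ε / 4 := by
    refine (norm_sub_le _ _).trans ?_
    have a1 := mem_ball_iff_norm.1 hp
    have a2 := mem_ball_iff_norm.1 hq
    linarith
  have hin : ε / 4 * ‖v‖ ≤ inner ℝ (p - q) v := by
    rw [hpq, inner_add_left, real_inner_smul_left, real_inner_self_eq_norm_sq]
    have h1 : ε / 2 / ‖v‖ * ‖v‖ ^ 2 = ε / 2 * ‖v‖ := by field_simp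
    rw [h1]
    have h2 := abs_le.1 (abs_real_inner_le_norm w v)
    have h3 : ‖w‖ * ‖v‖ ≤ ε / 4 * ‖v‖ := by gcongr
    linarith [h2.1]
  rw [dist_eq_norm]
  change ‖v‖ ≤ _
  have hfin : ε * (‖v‖) ≤ ε * (12 * 8 ^ N * c * ε) := by nlinarith
  exact le_of_mul_le_mul_left hfin hε

lemma contact_density {N : ℕ} {ε c : ℝ} (hε : 0 < ε) {u : EuclideanSpace ℝ (Fin N) → ℝ}
    (hu : BM N u) {x y : EuclideanSpace ℝ (Fin N)}
    (hp : ∀ p ∈ ball x ε, 0 ≤ gq u ε x y p)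
    (h : ∫ p in ball x ε, gq u ε x y p ≤ c * ε ^ 2 * (ε ^ N * om N))
    (hsm : 4 * c * 10 ^ N * ε ^ 2 ≤ 1) (hv : u x + ‖x - y‖ ^ 2 ≤ 1 / 2) :
    ENNReal.ofReal ((ε / 10) ^ N * om N) ≤
      ENNReal.ofReal 2 * volume ({p | u p < 1} ∩ ball x (ε / 10)) := by
  have h0 := om_pos N
  have hSm : MeasurableSet ({p | 1 ≤ u p} ∩ ball x (ε / 10)) :=
    (measurableSet_le measurable_const hu.1).inter measurableSet_ball
  have h1 := cheb (l := 1 / 2) (gq_int hu ε x y) hp hSm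
    (Set.inter_subset_right.trans (ball_subset_ball (by linarith))) (fun p hp => by
      have : 1 ≤ u p := hp.1
      unfold gq
      nlinarith [sq_nonneg ‖p - y‖, sq_nonneg ε])
  have hball := volr_ball x (show 0 < ε / 10 by positivity)
  have hsplit : volume.real (ball x (ε / 10)) ≤ volume.real ({p | 1 ≤ u p} ∩ ball x (ε / 10)) +
      volume.real ({p | u p < 1} ∩ ball x (ε / 10)) := by
    refine (measureReal_mono ?_ ?_).trans (measureReal_union_le _ _)
    · intro p hp
      rcases le_or_gt 1 (u p) with h | h
      · exact Or.inl ⟨h, hp⟩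
      · exact Or.inr ⟨h, hp⟩
    · exact ((measure_mono (Set.union_subset Set.inter_subset_right
        Set.inter_subset_right)).trans_lt measure_ball_lt_top).ne
  have hle : volume.real ({p | 1 ≤ u p} ∩ ball x (ε / 10)) ≤ 1 / 2 * ((ε / 10) ^ N * om N) := by
    have h2 : c * ε ^ 2 * (ε ^ N * om N) = (4 * c * 10 ^ N * ε ^ 2) * (((ε / 10) ^ N * om N) / 4) := by
      rw [div_pow]; field_simp
    have h3 : (4 * c * 10 ^ N * ε ^ 2) * (((ε / 10) ^ N * om N) / 4) ≤
      1 * (((ε / 10) ^ N * om N) / 4) := by gcongr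
    linarith
  have hfin : volume ({p | u p < 1} ∩ ball x (ε / 10)) ≠ ⊤ :=
    ((measure_mono Set.inter_subset_right).trans_lt measure_ball_lt_top).ne
  rw [← ofReal_measureReal hfin, ← ENNReal.ofReal_mul (by norm_num)]
  apply ENNReal.ofReal_le_ofReal
  linarith

lemma sliding {N : ℕ} {Λ β ε c : ℝ} {u : EuclideanSpace ℝ (Fin N) → ℝ}
    (hΛ : 1 ≤ Λ) (hβ : β ∈ Set.Ioc (0 : ℝ) 1) (hε : 0 < ε)
    (hcdef : c = (2 * Λ ^ 2 + 4) / β) (hsm1 : Λ * ε ≤ 1 / 8) (hsm2 : 4 * c * 10 ^ N * ε ^ 2 ≤ 1)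
    (hu : BM N u) (hpos : ∀ x ∈ ball (0 : EuclideanSpace ℝ (Fin N)) 1, 0 ≤ u x)
    (hs : ∀ x ∈ ball (0 : EuclideanSpace ℝ (Fin N)) 1, IsSuper N Λ β ε (2 * ε ^ 2) u x)
    {x₁ : EuclideanSpace ℝ (Fin N)} (hx₁ : x₁ ∈ ball (0 : EuclideanSpace ℝ (Fin N)) (1 / 4))
    (hux : u x₁ < 1 / 16) :
    ENNReal.ofReal ((1 / 4) ^ N * om N) ≤ ENNReal.ofReal (2 * (10 * (12 * 8 ^ N * c)) ^ N) *
      volume ({p | u p < 1} ∩ ball (0 : EuclideanSpace ℝ (Fin N)) 1) := by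
  have hcpos : 0 < c := by rw [hcdef]; have := hβ.1; positivity
  have hε8 : ε ≤ 1 / 8 := by nlinarith
  have h0 := om_pos N
  -- near minimum points
  have hX : ∀ y ∈ ball (0 : EuclideanSpace ℝ (Fin N)) (1 / 4), ∃ x, x ∈ ball (0 : EuclideanSpace ℝ (Fin N)) (7 / 8) ∧
      u x + ‖x - y‖ ^ 2 ≤ 3 / 8 ∧ ∀ p ∈ ball (0 : EuclideanSpace ℝ (Fin N)) 1,
        u x + ‖x - y‖ ^ 2 ≤ u p + ‖p - y‖ ^ 2 + ε ^ 2 := by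
    intro y hy
    have hne : ((fun p => u p + ‖p - y‖ ^ 2) '' ball (0 : EuclideanSpace ℝ (Fin N)) 1).Nonempty :=
      ⟨_, x₁, ball_subset_ball (by norm_num) hx₁, rfl⟩
    have hbd : BddBelow ((fun p => u p + ‖p - y‖ ^ 2) '' ball (0 : EuclideanSpace ℝ (Fin N)) 1) := by
      refine ⟨0, ?_⟩
      rintro _ ⟨p, hp, rfl⟩
      have := hpos p hp
      positivity
    obtain ⟨_, ⟨x, hx, rfl⟩, hlt⟩ := Real.lt_sInf_add_pos hne (show 0 < ε ^ 2 by positivity)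
    have hmin : ∀ p ∈ ball (0 : EuclideanSpace ℝ (Fin N)) 1,
        u x + ‖x - y‖ ^ 2 ≤ u p + ‖p - y‖ ^ 2 + ε ^ 2 := by
      intro p hp
      have := csInf_le hbd ⟨p, hp, rfl⟩
      simp only at this hlt
      linarith
    rw [mem_ball_zero_iff] at hx₁ hy
    have h1 : ‖x₁ - y‖ ≤ 1 / 2 := (norm_sub_le _ _).trans (by linarith)
    have h2 : ‖x₁ - y‖ ^ 2 ≤ (1 / 2) ^ 2 := by gcongr
    have h3 := hmin x₁ (by rw [mem_ball_zero_iff]; linarith)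
    have h4 : u x + ‖x - y‖ ^ 2 ≤ 3 / 8 := by nlinarith
    refine ⟨x, ?_, h4, hmin⟩
    rw [mem_ball_zero_iff]
    by_contra! hge
    have h5 : 5 / 8 ≤ ‖x - y‖ := by
      have := norm_sub_norm_le x y
      linarith
    have h6 := hpos x hx
    nlinarith
  choose! X hX1 hX2 hX3 using hX
  have hsub : ∀ y ∈ ball (0 : EuclideanSpace ℝ (Fin N)) (1 / 4), ball (X y) (Λ * ε) ⊆ ball 0 1 := by
    intro y hy
    apply ball_subset_ball'
    have := mem_ball.1 (hX1 y hy)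
    linarith
  have hεΛ : ε ≤ Λ * ε := by nlinarith
  have hgp : ∀ y ∈ ball (0 : EuclideanSpace ℝ (Fin N)) (1 / 4), ∀ p ∈ ball (X y) ε, 0 ≤ gq u ε (X y) y p := by
    intro y hy p hp
    have := hX3 y hy p (hsub y hy (ball_subset_ball hεΛ hp))
    unfold gq; linarith
  have hgi : ∀ y ∈ ball (0 : EuclideanSpace ℝ (Fin N)) (1 / 4),
      ∫ p in ball (X y) ε, gq u ε (X y) y p ≤ c * ε ^ 2 * (ε ^ N * om N) := by
    intro y hy
    rw [hcdef]
    exact contact_int hΛ hβ hε hu (hs _ (ball_subset_ball (by norm_num) (hX1 y hy))) le_rfl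
      (fun p hp => hX3 y hy p (hsub y hy hp))
  obtain ⟨J, hJ, hdisj, hcov⟩ := Vitali.exists_disjoint_subfamily_covering_enlargement_closedBall
    (ball (0 : EuclideanSpace ℝ (Fin N)) (1 / 4)) X (fun _ => ε / 10) (ε / 10) (fun _ _ => le_rfl)
    5 (by norm_num)
  have hcount : J.Countable := hdisj.countable_of_nonempty_interior (fun y _ => by
    refine ⟨X y, ball_subset_interior_closedBall (mem_ball_self (by positivity))⟩)
  have hC2 : 0 < 12 * 8 ^ N * c * ε := by positivity
  have hcover : ball (0 : EuclideanSpace ℝ (Fin N)) (1 / 4) ⊆ ⋃ b ∈ J, closedBall b (12 * 8 ^ N * c * ε) := by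
    intro y hy
    obtain ⟨b, hb, hbs⟩ := hcov y hy
    have h1 := mem_closedBall.1 (hbs (mem_closedBall_self (by positivity)))
    rw [Set.mem_iUnion₂]
    refine ⟨b, hb, ?_⟩
    rw [mem_closedBall]
    exact two_contact hε hcpos hu (hgp y hy) (hgp b (hJ hb)) (hgi y hy) (hgi b (hJ hb)) (by linarith)
  set K : ℝ := 10 * (12 * 8 ^ N * c) with hK
  rw [← vol_ball (0 : EuclideanSpace ℝ (Fin N)) (show (0 : ℝ) < 1 / 4 by norm_num)]
  calc volume (ball (0 : EuclideanSpace ℝ (Fin N)) (1 / 4))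
      ≤ volume (⋃ b ∈ J, closedBall b (12 * 8 ^ N * c * ε)) := measure_mono hcover
    _ ≤ ∑' b : J, volume (closedBall (b : EuclideanSpace ℝ (Fin N)) (12 * 8 ^ N * c * ε)) :=
        measure_biUnion_le _ hcount _
    _ ≤ ∑' b : J, ENNReal.ofReal (2 * K ^ N) * volume ({p | u p < 1} ∩ ball (X b) (ε / 10)) := by
        refine ENNReal.tsum_le_tsum fun b => ?_
        have hb := hJ b.2
        rw [vol_closedBall _ hC2]
        have h1 := contact_density hε hu (hgp b hb) (hgi b hb) hsm2 (by linarith [hX2 b hb])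
        have h2 : (12 * 8 ^ N * c * ε) ^ N * om N = K ^ N * ((ε / 10) ^ N * om N) := by
          rw [← mul_assoc, ← mul_pow, hK]
          congr 2
          ring
        have hK0 : 0 ≤ K ^ N := by positivity
        rw [h2, ENNReal.ofReal_mul hK0, mul_comm (2 : ℝ) (K ^ N),
          ENNReal.ofReal_mul (q := 2) hK0, mul_assoc]
        gcongr
    _ = ENNReal.ofReal (2 * K ^ N) * volume (⋃ b ∈ J, ({p | u p < 1} ∩ ball (X b) (ε / 10))) := by
        rw [ENNReal.tsum_mul_left, measure_biUnion hcount]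
        · exact hdisj.mono fun b => Set.inter_subset_right.trans ball_subset_closedBall
        · intro b _
          exact (measurableSet_lt hu.1 measurable_const).inter measurableSet_ball
    _ ≤ _ := by
        gcongr
        refine Set.iUnion₂_subset fun b hb => Set.inter_subset_inter_right _ ?_
        exact (ball_subset_ball (by nlinarith)).trans (hsub b (hJ hb))


lemma pow_sum_ge (p : ℕ) {τ : ℝ} (h1 : -1 < τ) (h2 : τ < 1) :
    2 + p * (p + 1) * τ ^ 2 ≤ ((1 + τ)⁻¹) ^ p + ((1 - τ)⁻¹) ^ p ∧
    2 * (p + 1) * τ ^ 2 ≤ (((1 + τ)⁻¹) ^ (p + 1) + ((1 - τ)⁻¹) ^ (p + 1)) -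
      (((1 + τ)⁻¹) ^ p + ((1 - τ)⁻¹) ^ p) := by
  have ha : 0 < 1 + τ := by linarith
  have hb : 0 < 1 - τ := by linarith
  have hq : 0 < 1 - τ ^ 2 := by nlinarith
  set A := (1 + τ)⁻¹ with hA
  set B := (1 - τ)⁻¹ with hB
  have hA0 : 0 < A := inv_pos.2 ha
  have hB0 : 0 < B := inv_pos.2 hb
  set q := (1 - τ ^ 2)⁻¹ with hqd
  have hAB : A * B = q := by rw [hA, hB, hqd, ← mul_inv]; congr 1; ring
  have hS : A + B = 2 * q := by
    rw [hA, hB, hqd]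
    have : 1 - τ ^ 2 = (1 + τ) * (1 - τ) := by ring
    rw [this]; field_simp; ring
  have hq1 : 1 + τ ^ 2 ≤ q := by
    rw [hqd, le_inv_comm₀ (by positivity) hq, inv_eq_one_div, le_div_iff₀ (by positivity)]
    nlinarith [sq_nonneg (τ ^ 2)]
  induction p with
  | zero => simp only [pow_zero, zero_add, pow_one]; push_cast; constructor <;> nlinarith
  | succ p ih =>
    obtain ⟨i1, i2⟩ := ih
    have i3 : 2 + ((p + 1 : ℕ) : ℝ) * ((p + 1 : ℕ) + 1) * τ ^ 2 ≤ A ^ (p + 1) + B ^ (p + 1) := by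
      push_cast; nlinarith
    refine ⟨i3, ?_⟩
    have hrec : A ^ (p + 2) + B ^ (p + 2) =
        q * (2 * (A ^ (p + 1) + B ^ (p + 1)) - (A ^ p + B ^ p)) := by
      have : A ^ (p + 2) + B ^ (p + 2) = (A + B) * (A ^ (p + 1) + B ^ (p + 1)) -
        A * B * (A ^ p + B ^ p) := by ring
      rw [this, hAB, hS]; ring
    have hge : 2 ≤ A ^ (p + 1) + B ^ (p + 1) := by
      have : 0 ≤ ((p + 1 : ℕ) : ℝ) * ((p + 1 : ℕ) + 1) * τ ^ 2 := by positivity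
      linarith
    have hd : 0 ≤ 2 * ((p : ℝ) + 1) * τ ^ 2 := by positivity
    have hnn : 0 ≤ 2 * (A ^ (p + 1) + B ^ (p + 1)) - (A ^ p + B ^ p) := by linarith
    rw [show p + 1 + 1 = p + 2 from rfl, hrec]
    have h5 := mul_le_mul_of_nonneg_right hq1 hnn
    have h6 : 0 ≤ τ ^ 2 * (2 * (A ^ (p + 1) + B ^ (p + 1)) - (A ^ p + B ^ p) - 2) :=
      mul_nonneg (sq_nonneg _) (by linarith)
    push_cast
    nlinarith

lemma bern (n : ℕ) {a s : ℝ} (ha : 0 < a) (hs : 0 ≤ s) :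
    1 - n * (s / a) ≤ (a / (a + s)) ^ n := by
  have h1 : a / (a + s) = 1 + -(s / (a + s)) := by field_simp; ring
  have h2 : s / (a + s) ≤ s / a := div_le_div_of_nonneg_left hs ha (by linarith)
  have h3 : s / (a + s) ≤ 1 := by rw [div_le_one (by linarith)]; linarith
  have h4 := one_add_mul_le_pow (a := -(s / (a + s))) (by linarith) n
  rw [h1]
  refine le_trans ?_ h4
  have : (n : ℝ) * (s / (a + s)) ≤ n * (s / a) := by gcongr
  linarith

lemma scal_ge (p : ℕ) {a s t : ℝ} (ha : 0 < a) (hs : 0 ≤ s) (h1 : -(a + s) < t) (h2 : t < a + s)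
    (hsm : (p + 2) * (s / a) ≤ 1 / 2) :
    p * (a⁻¹) ^ (p + 1) * (-(2 * s) + (p + 1) * t ^ 2 / (2 * a)) ≤
      ((a + s + t)⁻¹) ^ p + ((a + s - t)⁻¹) ^ p - 2 * (a⁻¹) ^ p := by
  have hb : 0 < a + s := by linarith
  set b := a + s with hbd
  have e1 : (b + t)⁻¹ = b⁻¹ * (1 + t / b)⁻¹ := by rw [← mul_inv]; congr 1; field_simp
  have e2 : (b - t)⁻¹ = b⁻¹ * (1 - t / b)⁻¹ := by rw [← mul_inv]; congr 1; field_simp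
  have h3 := (pow_sum_ge p (τ := t / b) (by rw [lt_div_iff₀ hb]; linarith)
    (by rw [div_lt_one hb]; exact h2)).1
  rw [e1, e2, mul_pow, mul_pow, ← mul_add]
  have eb : b⁻¹ = a⁻¹ * (a / b) := by field_simp
  have h4 : (b⁻¹) ^ p * (2 + p * (p + 1) * (t / b) ^ 2) ≤
    (b⁻¹) ^ p * (((1 + t / b)⁻¹) ^ p + ((1 - t / b)⁻¹) ^ p) := by gcongr
  have h5 : (b⁻¹) ^ p * (2 + p * (p + 1) * (t / b) ^ 2) = (a⁻¹) ^ p * (2 * (a / b) ^ p +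
      p * (p + 1) * (t / a) ^ 2 * (a / b) ^ (p + 2)) := by
    rw [eb, mul_pow]
    have : t / b = t / a * (a / b) := by field_simp
    rw [this]; ring
  have h6 := bern p ha hs
  have h7 := bern (p + 2) ha hs
  rw [← hbd] at h6 h7
  have h8 : 1 / 2 ≤ (a / b) ^ (p + 2) := by push_cast at h7; linarith
  have h9 : (a⁻¹) ^ p * (2 * (1 - p * (s / a)) + p * (p + 1) * (t / a) ^ 2 * (1 / 2)) ≤
     (a⁻¹) ^ p * (2 * (a / b) ^ p + p * (p + 1) * (t / a) ^ 2 * (a / b) ^ (p + 2)) := by gcongr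
  have h10 : p * (a⁻¹) ^ (p + 1) * (-(2 * s) + (p + 1) * t ^ 2 / (2 * a)) =
     (a⁻¹) ^ p * (2 * (1 - p * (s / a)) + p * (p + 1) * (t / a) ^ 2 * (1 / 2)) - 2 * (a⁻¹) ^ p := by
    rw [pow_succ]; field_simp; ring
  linarith

/-- barrier profile -/
def phi {N : ℕ} (p : ℕ) (x : EuclideanSpace ℝ (Fin N)) : ℝ := ((‖x‖ ^ 2)⁻¹) ^ p

lemma phi_sd {N : ℕ} (p : ℕ) {x h : EuclideanSpace ℝ (Fin N)} (hx : 1 / 16 ≤ ‖x‖ ^ 2)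
    (hh : 32 * (p + 2) * ‖h‖ ^ 2 ≤ 1) :
    p * ((‖x‖ ^ 2)⁻¹) ^ (p + 1) * (-(2 * ‖h‖ ^ 2) + 2 * (p + 1) * (inner ℝ x h) ^ 2 / ‖x‖ ^ 2) ≤
      secondDiff N (phi p) x h := by
  have ha : 0 < ‖x‖ ^ 2 := by linarith
  have hp : (0 : ℝ) ≤ p := Nat.cast_nonneg p
  have hlt : ‖h‖ ^ 2 < ‖x‖ ^ 2 := by nlinarith [sq_nonneg ‖h‖]
  have hlt' : ‖h‖ < ‖x‖ := lt_of_pow_lt_pow_left₀ 2 (norm_nonneg _) hlt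
  have e1 : ‖x + h‖ ^ 2 = ‖x‖ ^ 2 + ‖h‖ ^ 2 + 2 * inner ℝ x h := by
    rw [norm_add_sq_real]; ring
  have e2 : ‖x - h‖ ^ 2 = ‖x‖ ^ 2 + ‖h‖ ^ 2 - 2 * inner ℝ x h := by
    rw [norm_sub_sq_real]; ring
  have p1 : 0 < ‖x + h‖ ^ 2 := by
    have := norm_sub_le_norm_add x h
    have : 0 < ‖x + h‖ := by linarith
    positivity
  have p2 : 0 < ‖x - h‖ ^ 2 := by
    have := norm_sub_norm_le x h
    have : 0 < ‖x - h‖ := by linarith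
    positivity
  have key := scal_ge p (a := ‖x‖ ^ 2) (s := ‖h‖ ^ 2) (t := 2 * inner ℝ x h) ha (sq_nonneg _)
    (by linarith) (by linarith) (by
      rw [← mul_div_assoc, div_le_iff₀ ha]
      nlinarith)
  unfold secondDiff phi
  rw [e1, e2]
  refine le_trans (le_of_eq ?_) key
  field_simp

lemma avg_ind {N : ℕ} {e : EuclideanSpace ℝ (Fin N)} (he : ‖e‖ = 1) (K : ℝ) :
    ⨍ y in ball (0 : EuclideanSpace ℝ (Fin N)) 1,
      (ball ((1 / 2 : ℝ) • e) (1 / 4)).indicator (fun _ => K) y = K / 4 ^ N := by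
  have hsub : ball ((1 / 2 : ℝ) • e) (1 / 4) ⊆ ball (0 : EuclideanSpace ℝ (Fin N)) 1 := by
    apply ball_subset_ball'
    rw [dist_zero_right, norm_smul, he]; norm_num
  rw [setAverage_eq, setIntegral_indicator measurableSet_ball, Set.inter_eq_right.2 hsub,
    setIntegral_const, volr_ball ((1 / 2 : ℝ) • e) (by norm_num), smul_eq_mul, smul_eq_mul]
  change (om N)⁻¹ * _ = _
  have := om_pos N
  rw [div_pow, one_pow]
  field_simp

set_option maxHeartbeats 1000000 in
lemma barrier {N : ℕ} {Λ β ε θ₀ c κ : ℝ} {p : ℕ} {u : EuclideanSpace ℝ (Fin N) → ℝ}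
    (hΛ : 1 ≤ Λ) (hβ : β ∈ Set.Ioc (0 : ℝ) 1) (hε : 0 < ε) (hp1 : 1 ≤ p)
    (hp : 2 * Λ ^ 2 + 2 ≤ β * ((p + 1) / 8 / 4 ^ N)) (hsm1 : Λ * ε ≤ 1 / 8)
    (hsm2 : 32 * (p + 2) * (Λ * ε) ^ 2 ≤ 1) (hθ : 0 < θ₀) (hc : c = θ₀ * (1 / 64) ^ p)
    (hκ : κ = c * (1 / 4) ^ (p + 1) / 2)
    (hu : BM N u) (hpos : ∀ x ∈ ball (0 : EuclideanSpace ℝ (Fin N)) 3, 0 ≤ u x)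
    (hin : ∀ x ∈ ball (0 : EuclideanSpace ℝ (Fin N)) (1 / 4), θ₀ ≤ u x)
    (hs : ∀ x ∈ ball (0 : EuclideanSpace ℝ (Fin N)) 2, IsSuper N Λ β ε (2 * ε ^ 2 * κ) u x) :
    ∀ x ∈ ball (0 : EuclideanSpace ℝ (Fin N)) 1, c * (3 / 4) ≤ u x := by
  have hc0 : 0 < c := by rw [hc]; positivity
  have hκ0 : 0 < κ := by rw [hκ]; positivity
  have hcθ : c ≤ θ₀ := by
    rw [hc]
    have : (1 / 64 : ℝ) ^ p ≤ 1 := pow_le_one₀ (by norm_num) (by norm_num)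
    nlinarith
  intro x₁ hx₁
  by_contra! hcon
  rw [mem_ball_zero_iff] at hx₁
  have hx₁' : 1 / 4 ≤ ‖x₁‖ := by
    by_contra! h
    have := hin x₁ (by rwa [mem_ball_zero_iff])
    linarith
  set ψ : EuclideanSpace ℝ (Fin N) → ℝ := fun x => c * (phi p x - (1 / 4) ^ p) with hψ
  have ψ1 : ∀ x : EuclideanSpace ℝ (Fin N), 1 / 8 ≤ ‖x‖ → ψ x ≤ θ₀ := by
    intro x hx
    have h1 : (‖x‖ ^ 2)⁻¹ ≤ 64 := by
      rw [inv_le_comm₀ (by positivity) (by norm_num)]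
      nlinarith
    have h2 : phi p x ≤ 64 ^ p := by unfold phi; gcongr
    have h3 : (0 : ℝ) ≤ (1 / 4) ^ p := by positivity
    have h4 : c * 64 ^ p = θ₀ := by
      rw [hc, mul_assoc, ← mul_pow]; norm_num
    calc ψ x ≤ c * 64 ^ p := by simp only [hψ]; gcongr; linarith
      _ = θ₀ := h4
  have ψ2 : ∀ x : EuclideanSpace ℝ (Fin N), 2 ≤ ‖x‖ → ψ x ≤ 0 := by
    intro x hx
    have h1 : (‖x‖ ^ 2)⁻¹ ≤ 1 / 4 := by
      rw [inv_le_comm₀ (by positivity) (by norm_num)]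
      nlinarith
    have h2 : phi p x ≤ (1 / 4) ^ p := by unfold phi; gcongr
    simp only [hψ]
    nlinarith
  have ψ3 : c * (3 / 4) ≤ ψ x₁ := by
    have h1 : 1 ≤ (‖x₁‖ ^ 2)⁻¹ := by
      rw [le_inv_comm₀ (by norm_num) (by positivity)]
      nlinarith
    have h2 : 1 ≤ phi p x₁ := by unfold phi; exact one_le_pow₀ h1
    have h3 : (1 / 4 : ℝ) ^ p ≤ 1 / 4 := by
      calc (1 / 4 : ℝ) ^ p ≤ (1 / 4) ^ 1 := pow_le_pow_of_le_one (by norm_num) (by norm_num) hp1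
        _ = 1 / 4 := by norm_num
    simp only [hψ]
    gcongr
    linarith
  set Ann : Set (EuclideanSpace ℝ (Fin N)) := {x | 1 / 4 ≤ ‖x‖ ∧ ‖x‖ < 2} with hAnn
  have hx₁A : x₁ ∈ Ann := ⟨hx₁', by linarith⟩
  set η := ε ^ 2 * κ / 2 with hη
  have hη0 : 0 < η := by positivity
  have hne : ((fun x => u x - ψ x) '' Ann).Nonempty := ⟨_, x₁, hx₁A, rfl⟩
  have hbd : BddBelow ((fun x => u x - ψ x) '' Ann) := by
    refine ⟨-θ₀, ?_⟩
    rintro _ ⟨x, hx, rfl⟩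
    have h1 := ψ1 x (by linarith [hx.1])
    have h2 := hpos x (by rw [mem_ball_zero_iff]; linarith [hx.2])
    simp only; linarith
  obtain ⟨_, ⟨x, hx, rfl⟩, hlt⟩ := Real.lt_sInf_add_pos hne hη0
  simp only at hlt
  have hmin : ∀ q : EuclideanSpace ℝ (Fin N), 1 / 8 ≤ ‖q‖ → ‖q‖ < 3 →
      u x - ψ x ≤ u q - ψ q + η := by
    intro q hq1 hq2
    by_cases hqA : q ∈ Ann
    · have := csInf_le hbd ⟨q, hqA, rfl⟩
      simp only at this
      linarith
    · have h0 : 0 ≤ u q - ψ q := by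
        rcases lt_or_ge ‖q‖ (1 / 4) with h | h
        · have h1 := hin q (by rwa [mem_ball_zero_iff])
          have h2 := ψ1 q hq1
          linarith
        · rcases lt_or_ge ‖q‖ 2 with h' | h'
          · exact absurd ⟨h, h'⟩ hqA
          · have h1 := hpos q (by rwa [mem_ball_zero_iff])
            have h2 := ψ2 q h'
            linarith
      have := csInf_le hbd ⟨x₁, hx₁A, rfl⟩
      simp only at this
      linarith
  obtain ⟨hxl, hxr⟩ := hx
  have hx2 : 1 / 16 ≤ ‖x‖ ^ 2 := by nlinarith
  have ha : 0 < ‖x‖ ^ 2 := by linarith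
  set P : ℝ := c * (p * ((‖x‖ ^ 2)⁻¹) ^ (p + 1)) with hP
  have hp1' : (1 : ℝ) ≤ p := by exact_mod_cast hp1
  have hP1 : c * (1 / 4) ^ (p + 1) ≤ P := by
    have h1 : 1 / 4 ≤ (‖x‖ ^ 2)⁻¹ := by
      rw [le_inv_comm₀ (by norm_num) (by positivity)]
      nlinarith
    have h2 : (1 / 4 : ℝ) ^ (p + 1) ≤ ((‖x‖ ^ 2)⁻¹) ^ (p + 1) := by gcongr
    have h3 : 0 ≤ ((‖x‖ ^ 2)⁻¹) ^ (p + 1) := by positivity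
    rw [hP]
    gcongr
    nlinarith
  have hP0 : 0 < P := lt_of_lt_of_le (by positivity) hP1
  have hδ : ∀ h ∈ ball (0 : EuclideanSpace ℝ (Fin N)) (Λ * ε),
      P * (-(2 * ‖h‖ ^ 2) + 2 * (p + 1) * (inner ℝ x h) ^ 2 / ‖x‖ ^ 2) - 2 * η ≤
        secondDiff N u x h := by
    intro h hh
    rw [mem_ball_zero_iff] at hh
    have hsq : ‖h‖ ^ 2 ≤ (Λ * ε) ^ 2 := by gcongr
    have h1 := phi_sd p (x := x) (h := h) hx2 (le_trans (by gcongr) hsm2)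
    have n1 := norm_sub_le_norm_add x h
    have n2 := norm_add_le x h
    have n3 := norm_sub_norm_le x h
    have n4 := norm_sub_le x h
    have m1 := hmin (x + h) (by linarith) (by linarith)
    have m2 := hmin (x - h) (by linarith) (by linarith)
    have h2 := mul_le_mul_of_nonneg_left h1 hc0.le
    have h3 : c * secondDiff N (phi p) x h = ψ (x + h) + ψ (x - h) - 2 * ψ x := by
      simp only [hψ, secondDiff]; ring
    rw [h3] at h2
    unfold secondDiff
    have h4 : P * (-(2 * ‖h‖ ^ 2) + 2 * (p + 1) * (inner ℝ x h) ^ 2 / ‖x‖ ^ 2) =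
      c * (p * ((‖x‖ ^ 2)⁻¹) ^ (p + 1) *
        (-(2 * ‖h‖ ^ 2) + 2 * (p + 1) * (inner ℝ x h) ^ 2 / ‖x‖ ^ 2)) := by rw [hP]; ring
    linarith
  have hxn : 0 < ‖x‖ := by linarith
  set e : EuclideanSpace ℝ (Fin N) := ‖x‖⁻¹ • x with he
  have hen : ‖e‖ = 1 := by
    rw [he, norm_smul, norm_inv, norm_norm, inv_mul_cancel₀ hxn.ne']
  have hxe : x = ‖x‖ • e := by rw [he, smul_smul, mul_inv_cancel₀ hxn.ne', one_smul]
  have hsup := hs x (by rw [mem_ball_zero_iff]; exact hxr) (-(P * (2 * (Λ * ε) ^ 2)) - 2 * η)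
    (fun h hh => by
      have h1 := hδ h hh
      rw [mem_ball_zero_iff] at hh
      have hsq : ‖h‖ ^ 2 ≤ (Λ * ε) ^ 2 := by gcongr
      have h2 : 0 ≤ 2 * ((p : ℝ) + 1) * (inner ℝ x h) ^ 2 / ‖x‖ ^ 2 := by positivity
      have h3 : P * -(2 * (Λ * ε) ^ 2) ≤
        P * (-(2 * ‖h‖ ^ 2) + 2 * (p + 1) * (inner ℝ x h) ^ 2 / ‖x‖ ^ 2) := by
          gcongr; linarith
      linarith)
  have havg := avg_ge (F := fun y => secondDiff N u x (ε • y))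
    (G := (ball ((1 / 2 : ℝ) • e) (1 / 4)).indicator (fun _ => P * ((p + 1) / 8 * ε ^ 2)))
    (b := P * (2 * ε ^ 2) + 2 * η) ((hu.sd x ε).integrableOn_ball 0 1)
    ((integrableOn_const measure_ball_lt_top.ne).indicator measurableSet_ball) (fun y hy => by
      rw [mem_ball_zero_iff] at hy
      have h1 := hδ (ε • y) (by
        rw [mem_ball_zero_iff, norm_smul, Real.norm_eq_abs, abs_of_pos hε]; nlinarith)
      have hn : ‖ε • y‖ ^ 2 ≤ ε ^ 2 := by
        rw [norm_smul, Real.norm_eq_abs, abs_of_pos hε, mul_pow]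
        have : ‖y‖ ^ 2 ≤ 1 := by nlinarith [norm_nonneg y]
        nlinarith [sq_nonneg ε]
      have hinn : (inner ℝ x (ε • y)) ^ 2 / ‖x‖ ^ 2 = ε ^ 2 * (inner ℝ e y) ^ 2 := by
        conv_lhs => rw [hxe]
        rw [real_inner_smul_left, real_inner_smul_right, norm_smul, hen, norm_norm]
        field_simp
      rw [mul_div_assoc, hinn] at h1
      refine le_trans ?_ h1
      have hI : (ball ((1 / 2 : ℝ) • e) (1 / 4)).indicator
          (fun _ => P * ((p + 1) / 8 * ε ^ 2)) y ≤ P * (2 * (p + 1) * (ε ^ 2 * (inner ℝ e y) ^ 2)) := by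
        apply Set.indicator_apply_le'
        · intro hyb
          have h2 : 1 / 4 ≤ inner ℝ e y := by
            have : y = (1 / 2 : ℝ) • e + (y - (1 / 2 : ℝ) • e) := by abel
            rw [this, inner_add_right, real_inner_smul_right, real_inner_self_eq_norm_sq, hen]
            have h3 := abs_le.1 (abs_real_inner_le_norm e (y - (1 / 2 : ℝ) • e))
            rw [hen] at h3
            have h4 := mem_ball_iff_norm.1 hyb
            linarith [h3.1]
          have h3 : (1 / 16 : ℝ) ≤ (inner ℝ e y) ^ 2 := by nlinarith
          refine mul_le_mul_of_nonneg_left ?_ hP0.le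
          calc ((p : ℝ) + 1) / 8 * ε ^ 2 = 2 * (p + 1) * (ε ^ 2 * (1 / 16)) := by ring
            _ ≤ _ := by gcongr
        · intro _; positivity
      have h5 : P * (2 * ‖ε • y‖ ^ 2) ≤ P * (2 * ε ^ 2) := by gcongr
      linarith)
  rw [avg_ind hen] at havg
  have hb := mul_le_mul_of_nonneg_left havg hβ.1.le
  have hβ1 := hβ.2
  have hβ0 := hβ.1
  have f1 : P * ε ^ 2 * (2 * Λ ^ 2 + 2) ≤ P * ε ^ 2 * (β * ((p + 1) / 8 / 4 ^ N)) := by gcongr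
  have f2 : β * (P * ((p + 1) / 8 * ε ^ 2) / 4 ^ N) = P * ε ^ 2 * (β * ((p + 1) / 8 / 4 ^ N)) := by
    ring
  have f3 : β * (P * (2 * ε ^ 2)) ≤ β * (P * (2 * (Λ * ε) ^ 2)) := by
    gcongr; nlinarith
  have f4 : ε ^ 2 * (c * (1 / 4) ^ (p + 1)) ≤ ε ^ 2 * P := by gcongr
  have f5 : c * (1 / 4) ^ (p + 1) = 2 * κ := by rw [hκ]; ring
  rw [f5] at f4
  have f6 : 0 < ε ^ 2 * κ := by positivity
  have f7 : 2 * η = ε ^ 2 * κ := by rw [hη]; ring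
  linarith


lemma unit_step (N : ℕ) (Λ β : ℝ) (hΛ : 1 ≤ Λ) (hβ : β ∈ Set.Ioc (0 : ℝ) 1) :
    ∃ ε₁ κ₁ μ θ : ℝ, 0 < ε₁ ∧ Λ * ε₁ ≤ 1 / 8 ∧ 0 < κ₁ ∧ 0 < μ ∧ μ < 1 ∧ 0 < θ ∧ θ < 1 ∧
      ∀ ε, 0 < ε → ε ≤ ε₁ → ∀ u : EuclideanSpace ℝ (Fin N) → ℝ, BM N u →
      (∀ x ∈ ball (0 : EuclideanSpace ℝ (Fin N)) 3, 0 ≤ u x) →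
      (∀ x ∈ ball (0 : EuclideanSpace ℝ (Fin N)) 2, IsSuper N Λ β ε (2 * ε ^ 2 * κ₁) u x) →
      volume ({p | u p < 1} ∩ ball (0 : EuclideanSpace ℝ (Fin N)) 1) ≤ ENNReal.ofReal (μ * om N) →
      ∀ x ∈ ball (0 : EuclideanSpace ℝ (Fin N)) 1, θ ≤ u x := by
  have hβ0 := hβ.1
  have hΛ0 : 0 < Λ := by linarith
  obtain ⟨p₀, hp₀⟩ := exists_nat_ge ((2 * Λ ^ 2 + 2) * 8 * 4 ^ N / β)
  set p : ℕ := p₀ + 1 with hpdef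
  have hp : 2 * Λ ^ 2 + 2 ≤ β * (((p : ℝ) + 1) / 8 / 4 ^ N) := by
    have h1 : (2 * Λ ^ 2 + 2) * 8 * 4 ^ N / β ≤ (p : ℝ) + 1 := by
      rw [hpdef]; push_cast; linarith
    rw [div_le_iff₀ hβ0] at h1
    have h2 : β * (((p : ℝ) + 1) / 8 / 4 ^ N) = (((p : ℝ) + 1) * β) / (8 * 4 ^ N) := by field_simp
    rw [h2, le_div_iff₀ (by positivity)]
    linarith
  set c := (2 * Λ ^ 2 + 4) / β with hc
  have hc0 : 0 < c := by positivity
  have hc1 : 1 ≤ c := by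
    rw [hc, le_div_iff₀ hβ0]; nlinarith [hβ.2, sq_nonneg Λ]
  set K := 10 * (12 * 8 ^ N * c) with hK
  have hK1 : 1 ≤ K := by
    have : (1 : ℝ) ≤ 8 ^ N := one_le_pow₀ (by norm_num)
    rw [hK]; nlinarith
  have hKN : 1 ≤ K ^ N := one_le_pow₀ hK1
  set cb : ℝ := 1 / 16 * (1 / 64) ^ p with hcb
  set κ₁ := cb * (1 / 4) ^ (p + 1) / 2 with hκ
  have hq1 : (1 / 64 : ℝ) ^ p ≤ 1 := pow_le_one₀ (by norm_num) (by norm_num)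
  have hq2 : (1 / 4 : ℝ) ^ (p + 1) ≤ 1 := pow_le_one₀ (by norm_num) (by norm_num)
  have hq3 : (1 / 4 : ℝ) ^ N ≤ 1 := pow_le_one₀ (by norm_num) (by norm_num)
  have hcb0 : 0 < cb := by positivity
  have hcb1 : cb ≤ 1 / 16 := by rw [hcb]; linarith
  have hκ1 : κ₁ ≤ 1 := by
    rw [hκ]
    have : cb * (1 / 4) ^ (p + 1) ≤ 1 * 1 := by gcongr; linarith
    linarith
  set ε₁ := min (1 / (8 * Λ)) (min (1 / (4 * c * 10 ^ N)) (1 / (32 * (p + 2) * Λ ^ 2))) with hε₁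
  have h0 := om_pos N
  refine ⟨ε₁, κ₁, (1 / 4) ^ N / (4 * K ^ N), cb * (3 / 4), by positivity, ?_, by positivity,
    by positivity, ?_, by positivity, by linarith, ?_⟩
  · calc Λ * ε₁ ≤ Λ * (1 / (8 * Λ)) := by gcongr; exact min_le_left _ _
      _ = 1 / 8 := by field_simp
  · rw [div_lt_one (by positivity)]; linarith
  intro ε hε hεle u hu hpos hs hvol
  have s1 : Λ * ε ≤ 1 / 8 := by
    calc Λ * ε ≤ Λ * (1 / (8 * Λ)) := by gcongr; exact hεle.trans (min_le_left _ _)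
      _ = 1 / 8 := by field_simp
  have hεle1 : ε ≤ 1 := by nlinarith
  have hsq : ε ^ 2 ≤ ε := by nlinarith
  have s2 : 4 * c * 10 ^ N * ε ^ 2 ≤ 1 := by
    have h1 : ε ≤ 1 / (4 * c * 10 ^ N) := hεle.trans ((min_le_right _ _).trans (min_le_left _ _))
    calc 4 * c * 10 ^ N * ε ^ 2 ≤ 4 * c * 10 ^ N * (1 / (4 * c * 10 ^ N)) := by
          gcongr; exact hsq.trans h1
      _ = 1 := by field_simp
  have s3 : 32 * (p + 2) * (Λ * ε) ^ 2 ≤ 1 := by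
    have h1 : ε ≤ 1 / (32 * (p + 2) * Λ ^ 2) :=
      hεle.trans ((min_le_right _ _).trans (min_le_right _ _))
    calc 32 * (p + 2) * (Λ * ε) ^ 2 = 32 * (p + 2) * Λ ^ 2 * ε ^ 2 := by ring
      _ ≤ 32 * (p + 2) * Λ ^ 2 * (1 / (32 * (p + 2) * Λ ^ 2)) := by
          gcongr; exact hsq.trans h1
      _ = 1 := by field_simp
  refine barrier (θ₀ := 1 / 16) hΛ hβ hε (by omega) hp s1 s3 (by norm_num) hcb hκ hu hpos ?_ hs
  intro x₁ hx₁
  by_contra! hlt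
  have hsl := sliding hΛ hβ hε hc s1 s2 hu
    (fun x hx => hpos x (ball_subset_ball (by norm_num) hx))
    (fun x hx => (hs x (ball_subset_ball (by norm_num) hx)).mono (by
      have : 0 < ε ^ 2 := by positivity
      nlinarith)) hx₁ hlt
  have h2 : ENNReal.ofReal ((1 / 4) ^ N * om N) ≤ ENNReal.ofReal (2 * K ^ N) *
      ENNReal.ofReal ((1 / 4) ^ N / (4 * K ^ N) * om N) := hsl.trans (by gcongr)
  rw [← ENNReal.ofReal_mul (by positivity), ENNReal.ofReal_le_ofReal_iff (by positivity)] at h2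
  have h3 : 2 * K ^ N * ((1 / 4) ^ N / (4 * K ^ N) * om N) = 1 / 2 * ((1 / 4) ^ N * om N) := by
    field_simp; norm_num
  have h4 : 0 < (1 / 4 : ℝ) ^ N * om N := by positivity
  linarith

lemma vol_scale {N : ℕ} (x₀ : EuclideanSpace ℝ (Fin N)) {r : ℝ} (hr : 0 < r)
    (S : Set (EuclideanSpace ℝ (Fin N))) :
    volume ((fun p => x₀ + r • p) ⁻¹' S) = ENNReal.ofReal ((r ^ N)⁻¹) * volume S := by
  have h1 : (fun p => x₀ + r • p) ⁻¹' S = (fun p => r • p) ⁻¹' ((fun p => x₀ + p) ⁻¹' S) := rfl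
  rw [h1, Measure.addHaar_preimage_smul _ hr.ne', measure_preimage_add]
  simp only [finrank_euclideanSpace, Fintype.card_fin]
  rw [abs_of_pos (by positivity)]

lemma BM.scale {N : ℕ} {u : EuclideanSpace ℝ (Fin N) → ℝ} (hu : BM N u)
    (x₀ : EuclideanSpace ℝ (Fin N)) (r a ω : ℝ) : BM N (fun q => (u (x₀ + r • q) - a) / ω) := by
  have h := hu.comp (φ := fun q => x₀ + r • q) (by fun_prop)
  obtain ⟨hm, M, hM⟩ := h
  refine ⟨(hm.sub_const _).div_const _, (M + |a|) / |ω|, fun y => ?_⟩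
  rw [abs_div]
  gcongr
  have := abs_sub (u (x₀ + r • y)) a
  have := hM y
  simp only at this
  linarith

lemma scale_mem {N : ℕ} {x₀ p : EuclideanSpace ℝ (Fin N)} {r s : ℝ} (hr : 0 < r) :
    x₀ + r • p ∈ ball x₀ (s * r) ↔ p ∈ ball (0 : EuclideanSpace ℝ (Fin N)) s := by
  rw [mem_ball_iff_norm, mem_ball_zero_iff, add_sub_cancel_left, norm_smul, Real.norm_eq_abs,
    abs_of_pos hr, mul_comm, mul_lt_mul_iff_left₀ hr]

lemma scaled_step (N : ℕ) (Λ β : ℝ) (hΛ : 1 ≤ Λ) (hβ : β ∈ Set.Ioc (0 : ℝ) 1) :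
    ∃ ε₁ κ₁ μ θ : ℝ, 0 < ε₁ ∧ Λ * ε₁ ≤ 1 / 8 ∧ 0 < κ₁ ∧ 0 < μ ∧ μ < 1 ∧ 0 < θ ∧ θ < 1 ∧
      ∀ ε, 0 < ε → ∀ u : EuclideanSpace ℝ (Fin N) → ℝ, BM N u →
      ∀ (x₀ : EuclideanSpace ℝ (Fin N)) (r t ρ : ℝ), 0 < r → 0 < t → ε ≤ ε₁ * r →
      (∀ x ∈ ball x₀ (3 * r), 0 ≤ u x) →
      (∀ x ∈ ball x₀ (2 * r), IsSuper N Λ β ε ρ u x) → ρ ≤ 2 * ε ^ 2 * κ₁ * t / r ^ 2 →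
      volume ({p | u p < t} ∩ ball x₀ r) ≤ ENNReal.ofReal (μ * (r ^ N * om N)) →
      ∀ x ∈ ball x₀ r, θ * t ≤ u x := by
  obtain ⟨ε₁, κ₁, μ, θ, h1, h2, h3, h4, h5, h6, h7, H⟩ := unit_step N Λ β hΛ hβ
  refine ⟨ε₁, κ₁, μ, θ, h1, h2, h3, h4, h5, h6, h7, ?_⟩
  intro ε hε u hu x₀ r t ρ hr ht hεr hpos hs hρ hvol x hx
  have h0 := om_pos N
  have hmain := H (ε / r) (by positivity) (by rwa [div_le_iff₀ hr])
    (fun q => (u (x₀ + r • q) - 0) / t) (hu.scale x₀ r 0 t)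
    (fun q hq => by
      have := hpos _ ((scale_mem hr).2 hq)
      simp only [sub_zero]; positivity)
    (fun q hq => by
      refine (IsSuper.scale x₀ q hr 0 ht (hs _ ((scale_mem hr).2 hq))).mono ?_
      rw [div_le_iff₀ ht]
      refine hρ.trans (le_of_eq ?_)
      field_simp)
    (by
      have e : ({q | (u (x₀ + r • q) - 0) / t < 1} ∩ ball (0 : EuclideanSpace ℝ (Fin N)) 1) =
          (fun q => x₀ + r • q) ⁻¹' ({p | u p < t} ∩ ball x₀ r) := by
        ext q
        have := scale_mem (x₀ := x₀) (p := q) (s := 1) hr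
        rw [one_mul] at this
        simp only [Set.mem_inter_iff, Set.mem_preimage, Set.mem_ofPred_eq, this, sub_zero,
          div_lt_one ht]
      rw [e, vol_scale x₀ hr]
      calc _ ≤ ENNReal.ofReal ((r ^ N)⁻¹) * ENNReal.ofReal (μ * (r ^ N * om N)) := by gcongr
        _ = _ := by
          rw [← ENNReal.ofReal_mul (by positivity)]
          congr 1
          field_simp)
  have hxe : x = x₀ + r • (r⁻¹ • (x - x₀)) := by
    rw [smul_smul, mul_inv_cancel₀ hr.ne', one_smul]; abel
  have hx' : r⁻¹ • (x - x₀) ∈ ball (0 : EuclideanSpace ℝ (Fin N)) 1 := by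
    rw [← scale_mem (x₀ := x₀) hr, ← hxe, one_mul]; exact hx
  have := hmain _ hx'
  simp only [← hxe, sub_zero] at this
  rwa [le_div_iff₀ ht] at this

lemma spread_one {N : ℕ} {Λ β ε ρ t s : ℝ} {u : EuclideanSpace ℝ (Fin N) → ℝ}
    {x z : EuclideanSpace ℝ (Fin N)} (hΛ : 1 ≤ Λ) (hβ : β ∈ Set.Ioc (0 : ℝ) 1) (hε : 0 < ε)
    (hu : BM N u) (hpos : ∀ y ∈ ball x (Λ * ε), 0 ≤ u y) (hs : IsSuper N Λ β ε ρ u x) (hs0 : 0 < s)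
    (hz : ball z s ⊆ ball x ε) (ht : t * (s ^ N * om N) ≤ ∫ y in ball z s, u y) :
    β * (s / ε) ^ N * t ≤ ρ + 2 * u x := by
  have h0 := om_pos N
  have h1 := keyK (b := 2 * u x) hΛ hβ hε hu hs hu.1
    (by obtain ⟨_, M, hM⟩ := hu; exact ⟨M, fun y _ => hM y⟩) hpos
    (fun h _ => by unfold secondDiff; linarith)
  have hεΛ : ε ≤ Λ * ε := by nlinarith
  have h2 : ∫ y in ball z s, u y ≤ ∫ y in ball x ε, u y :=
    setIntegral_mono_set (hu.integrableOn_ball x ε) ((ae_restrict_iff' measurableSet_ball).2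
      (Filter.Eventually.of_forall fun y hy => hpos y (ball_subset_ball hεΛ hy)))
      (Filter.Eventually.of_forall hz)
  have h3 : β * (t * (s ^ N * om N)) ≤ (ρ + 2 * u x) * (ε ^ N * om N) :=
    (mul_le_mul_of_nonneg_left (ht.trans h2) hβ.1.le).trans h1
  have hp : 0 < ε ^ N * om N := by positivity
  refine le_of_mul_le_mul_right (le_trans (le_of_eq ?_) h3) hp
  rw [div_pow]; field_simp

lemma const_int {N : ℕ} {u : EuclideanSpace ℝ (Fin N) → ℝ} (hu : BM N u) {t s : ℝ} (hs0 : 0 < s)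
    {z : EuclideanSpace ℝ (Fin N)} (h : ∀ y ∈ ball z s, t ≤ u y) :
    t * (s ^ N * om N) ≤ ∫ y in ball z s, u y := by
  have h3 := setIntegral_mono_on (f := fun _ => t) (integrableOn_const measure_ball_lt_top.ne)
    (hu.integrableOn_ball z s) measurableSet_ball h
  rw [setIntegral_const, smul_eq_mul, volr_ball z hs0] at h3
  linarith

/-- spreading positivity at scale `ε` -/
lemma spread {N : ℕ} {Λ β ε ρ t : ℝ} {u : EuclideanSpace ℝ (Fin N) → ℝ}
    {z : EuclideanSpace ℝ (Fin N)} (hΛ : 1 ≤ Λ) (hβ : β ∈ Set.Ioc (0 : ℝ) 1) (hε : 0 < ε)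
    (hu : BM N u) (ht : 0 < t) (hz : ∀ y ∈ ball z (ε / 2), t ≤ u y) (k : ℕ)
    (hpos : ∀ x ∈ ball z (ε / 2 + k * (ε / 2)), ∀ y ∈ ball x (Λ * ε), 0 ≤ u y)
    (hs : ∀ x ∈ ball z (ε / 2 + k * (ε / 2)), IsSuper N Λ β ε ρ u x)
    (hρ : ρ ≤ (β / (4 * 8 ^ N)) ^ k * t * 2) :
    ∀ y ∈ ball z (ε / 2 + k * (ε / 2)), (β / (4 * 8 ^ N)) ^ k * t ≤ u y := by
  have hβ0 := hβ.1
  have hc0 : 0 < β / (4 * 8 ^ N) := by positivity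
  have hc1 : β / (4 * 8 ^ N) ≤ 1 := by
    rw [div_le_one (by positivity)]
    have : (1 : ℝ) ≤ 8 ^ N := one_le_pow₀ (by norm_num)
    linarith [hβ.2]
  induction k with
  | zero => simpa using hz
  | succ k ih =>
    have hsub : ball z (ε / 2 + k * (ε / 2)) ⊆ ball z (ε / 2 + (k + 1 : ℕ) * (ε / 2)) := by
      apply ball_subset_ball; push_cast; linarith
    have hρ' : ρ ≤ (β / (4 * 8 ^ N)) ^ k * t * 2 := by
      refine hρ.trans ?_
      have : (β / (4 * 8 ^ N)) ^ (k + 1) ≤ (β / (4 * 8 ^ N)) ^ k :=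
        pow_le_pow_of_le_one hc0.le hc1 (Nat.le_succ k)
      gcongr
    have ih' := ih (fun x hx => hpos x (hsub hx)) (fun x hx => hs x (hsub hx)) hρ'
    intro x hx
    set r := ε / 2 + k * (ε / 2) with hr
    have hk0 : (0 : ℝ) ≤ k * (ε / 2) := by positivity
    have hr0 : ε / 2 ≤ r := by rw [hr]; linarith
    have hx' : dist x z < r + ε / 2 := by
      have := mem_ball.1 hx
      push_cast at this
      rw [hr]; linarith
    set l := (r - ε / 8) / (r + ε / 2) with hl
    have hden : 0 < r + ε / 2 := by linarith
    have hl0 : 0 ≤ l := div_nonneg (by linarith) hden.le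
    have hl1 : 1 - l = (5 * ε / 8) / (r + ε / 2) := by
      rw [hl, eq_div_iff hden.ne', sub_mul, div_mul_cancel₀ _ hden.ne']; ring
    have hl2 : 0 ≤ 1 - l := by rw [hl1]; positivity
    set q := z + l • (x - z) with hq
    have d1 : dist q z ≤ r - ε / 8 := by
      rw [dist_eq_norm, hq, add_sub_cancel_left, norm_smul, Real.norm_eq_abs, abs_of_nonneg hl0,
        ← dist_eq_norm]
      calc l * dist x z ≤ l * (r + ε / 2) := by gcongr
        _ = r - ε / 8 := by rw [hl, div_mul_cancel₀ _ hden.ne']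
    have d2 : dist q x ≤ 5 * ε / 8 := by
      have e : q - x = (-(1 - l)) • (x - z) := by
        rw [hq, neg_smul, sub_smul, one_smul]; abel
      rw [dist_eq_norm, e, norm_smul, Real.norm_eq_abs, abs_neg, abs_of_nonneg hl2, ← dist_eq_norm]
      calc (1 - l) * dist x z ≤ (1 - l) * (r + ε / 2) := by gcongr
        _ = 5 * ε / 8 := by rw [hl1, div_mul_cancel₀ _ hden.ne']
    have h8 : 0 < ε / 8 := by positivity
    have h1 := spread_one (s := ε / 8) (z := q) hΛ hβ hε hu (hpos x hx) (hs x hx) h8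
      (ball_subset_ball' (by linarith))
      (const_int hu h8 (fun y hy => ih' y (ball_subset_ball' (by linarith) hy)))
    have e8 : ε / 8 / ε = 1 / 8 := by field_simp
    rw [e8] at h1
    have e9 : β * (1 / 8) ^ N * ((β / (4 * 8 ^ N)) ^ k * t) =
        4 * ((β / (4 * 8 ^ N)) ^ (k + 1) * t) := by
      rw [pow_succ, div_pow 1 8, one_pow]; field_simp
    rw [e9] at h1
    linarith


lemma exact_ball {N : ℕ} {μ : ℝ} (hμ0 : 0 < μ) {G : Set (EuclideanSpace ℝ (Fin N))}
    {a : EuclideanSpace ℝ (Fin N)} {r : ℝ} (hr : 0 < r) (har : ‖a‖ + r ≤ 1) (hG : ball a r ⊆ G)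
    (hGf : volume G ≠ ⊤)
    (hvol : volume.real G < (1 - μ) * om N) :
    ∃ (c : EuclideanSpace ℝ (Fin N)) (s : ℝ), r ≤ s ∧ ‖c‖ + s ≤ 1 ∧ ball a r ⊆ ball c s ∧
      volume.real (G ∩ ball c s) = (1 - μ) * (s ^ N * om N) := by
  have h0 := om_pos N
  have hr1 : r ≤ 1 := by linarith [norm_nonneg a]
  set c : ℝ → EuclideanSpace ℝ (Fin N) := fun t => (1 - t) • a with hc
  set R : ℝ → ℝ := fun t => (1 - t) * r + t with hR
  set m : ℝ → ℝ := fun t => volume.real (G ∩ ball (c t) (R t)) with hm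
  set V : ℝ → ℝ := fun t => R t ^ N * om N with hV
  have hRpos : ∀ t ∈ Set.Icc (0 : ℝ) 1, r ≤ R t := fun t ht => by
    simp only [hR]; nlinarith [ht.1, ht.2]
  have hnest : ∀ s ∈ Set.Icc (0 : ℝ) 1, ∀ t ∈ Set.Icc (0 : ℝ) 1, s ≤ t →
      ball (c s) (R s) ⊆ ball (c t) (R t) := by
    intro s hs t ht hst
    apply ball_subset_ball'
    have e : c s - c t = (t - s) • a := by simp only [hc]; rw [← sub_smul]; congr 1; ring
    rw [dist_eq_norm, e, norm_smul, Real.norm_eq_abs, abs_of_nonneg (by linarith)]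
    simp only [hR]
    nlinarith
  have hinc : ∀ s ∈ Set.Icc (0 : ℝ) 1, ∀ t ∈ Set.Icc (0 : ℝ) 1, s ≤ t →
      m s ≤ m t ∧ m t - m s ≤ V t - V s := by
    intro s hs t ht hst
    have hn := hnest s hs t ht hst
    have fin : ∀ x ρ, volume (G ∩ ball x ρ) ≠ ⊤ := fun x ρ =>
      measure_ne_top_of_subset Set.inter_subset_left hGf
    refine ⟨measureReal_mono (Set.inter_subset_inter_right _ hn) (fin _ _), ?_⟩
    have h1 : V t - V s = volume.real (ball (c t) (R t) \ ball (c s) (R s)) := by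
      rw [measureReal_sdiff hn measurableSet_ball measure_ball_lt_top.ne,
        volr_ball _ (hr.trans_le (hRpos t ht)), volr_ball _ (hr.trans_le (hRpos s hs))]
    have h2 : m t ≤ m s + volume.real (ball (c t) (R t) \ ball (c s) (R s)) := by
      refine le_trans (measureReal_mono ?_ ?_) (measureReal_union_le _ _)
      · intro x hx
        by_cases hxs : x ∈ ball (c s) (R s)
        · exact Or.inl ⟨hx.1, hxs⟩
        · exact Or.inr ⟨hx.2, hxs⟩
      · exact (measure_union_lt_top (fin _ _).lt_top
          (measure_ne_top_of_subset Set.sdiff_subset measure_ball_lt_top.ne).lt_top).ne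
    linarith
  have hVc : Continuous V := by simp only [hV, hR]; fun_prop
  have hmc : ContinuousOn m (Set.Icc 0 1) := by
    intro s hs
    have key : ∀ t ∈ Set.Icc (0 : ℝ) 1, |m t - m s| ≤ |V t - V s| := by
      intro t ht
      rcases le_total s t with h | h
      · obtain ⟨h1, h2⟩ := hinc s hs t ht h
        rw [abs_of_nonneg (by linarith)]
        exact h2.trans (le_abs_self _)
      · obtain ⟨h1, h2⟩ := hinc t ht s hs h
        rw [abs_sub_comm, abs_of_nonneg (by linarith), abs_sub_comm]
        exact h2.trans (le_abs_self _)
    rw [ContinuousWithinAt, tendsto_iff_dist_tendsto_zero]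
    have hz : Filter.Tendsto (fun t => |V t - V s|) (nhdsWithin s (Set.Icc 0 1)) (nhds 0) := by
      have : Continuous fun t => |V t - V s| := by fun_prop
      have h3 := (this.tendsto s).mono_left (nhdsWithin_le_nhds (s := Set.Icc 0 1))
      simpa using h3
    refine squeeze_zero' (Filter.Eventually.of_forall fun t => dist_nonneg) ?_ hz
    filter_upwards [self_mem_nhdsWithin] with t ht
    rw [Real.dist_eq]; exact key t ht
  have hg : ContinuousOn (fun t => m t - (1 - μ) * V t) (Set.Icc 0 1) :=
    hmc.sub (by fun_prop)
  have g0 : 0 ≤ m 0 - (1 - μ) * V 0 := by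
    have e : m 0 = V 0 := by
      simp only [hm, hV, hR, hc]
      simp only [sub_zero, one_smul, one_mul, add_zero]
      rw [Set.inter_eq_right.2 hG, volr_ball _ hr]
    have : 0 < V 0 := by simp only [hV, hR]; simp only [sub_zero, one_mul, add_zero]; positivity
    rw [e]; nlinarith
  have g1 : m 1 - (1 - μ) * V 1 ≤ 0 := by
    have e : m 1 ≤ volume.real G := measureReal_mono Set.inter_subset_left hGf
    have : V 1 = om N := by simp [hV, hR]
    rw [this]; linarith
  obtain ⟨t, ht, hgt⟩ := intermediate_value_Icc' zero_le_one hg ⟨g1, g0⟩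
  refine ⟨c t, R t, hRpos t ht, ?_, ?_, ?_⟩
  · simp only [hc, hR]
    rw [norm_smul, Real.norm_eq_abs, abs_of_nonneg (by linarith [ht.2])]
    nlinarith [ht.1, ht.2]
  · have := hnest 0 ⟨le_rfl, zero_le_one⟩ t ht ht.1
    simpa [hc, hR] using this
  · have : m t - (1 - μ) * V t = 0 := hgt
    simp only [hm, hV] at this
    linarith

/-- one growth step for ink spots -/
def grow (N : ℕ) (μ r0 : ℝ) (G : Set (EuclideanSpace ℝ (Fin N))) :
    Set (EuclideanSpace ℝ (Fin N)) :=
  {x | ∃ (c : EuclideanSpace ℝ (Fin N)) (s : ℝ), r0 ≤ s ∧ ‖c‖ + s ≤ 1 ∧ x ∈ ball c s ∧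
    (1 - μ) * (s ^ N * om N) ≤ volume.real (G ∩ ball c s)}

/-- unions of balls of radius at least `r0` in the unit ball -/
def Fat (N : ℕ) (r0 : ℝ) (G : Set (EuclideanSpace ℝ (Fin N))) : Prop :=
  ∀ x ∈ G, ∃ (c : EuclideanSpace ℝ (Fin N)) (s : ℝ), r0 ≤ s ∧ ‖c‖ + s ≤ 1 ∧ x ∈ ball c s ∧
    ball c s ⊆ G

lemma Fat.sub {N : ℕ} {r0 : ℝ} {G : Set (EuclideanSpace ℝ (Fin N))} (h : Fat N r0 G) :
    G ⊆ ball 0 1 := by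
  intro x hx
  obtain ⟨c, s, h1, h2, h3, h4⟩ := h x hx
  refine ball_subset_ball' ?_ h3
  rw [dist_zero_right]; linarith

lemma Fat.isOpen {N : ℕ} {r0 : ℝ} {G : Set (EuclideanSpace ℝ (Fin N))} (h : Fat N r0 G) :
    IsOpen G := by
  rw [isOpen_iff_mem_nhds]
  intro x hx
  obtain ⟨c, s, h1, h2, h3, h4⟩ := h x hx
  exact Filter.mem_of_superset (isOpen_ball.mem_nhds h3) h4

lemma Fat.grow {N : ℕ} (μ : ℝ) {r0 : ℝ} (G : Set (EuclideanSpace ℝ (Fin N))) :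
    Fat N r0 (grow N μ r0 G) := by
  rintro x ⟨c, s, h1, h2, h3, h4⟩
  exact ⟨c, s, h1, h2, h3, fun y hy => ⟨c, s, h1, h2, hy, h4⟩⟩

lemma Fat.sub_grow {N : ℕ} {μ r0 : ℝ} (hμ : 0 < μ) (hr0 : 0 < r0)
    {G : Set (EuclideanSpace ℝ (Fin N))}
    (h : Fat N r0 G) : G ⊆ _root_.grow N μ r0 G := by
  intro x hx
  obtain ⟨c, s, h1, h2, h3, h4⟩ := h x hx
  refine ⟨c, s, h1, h2, h3, ?_⟩
  rw [Set.inter_eq_right.2 h4, volr_ball _ (hr0.trans_le h1)]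
  have := om_pos N
  have hs : 0 < s := hr0.trans_le h1
  have : 0 < s ^ N * om N := by positivity
  nlinarith

lemma growth {N : ℕ} {μ r0 : ℝ} (hμ : 0 < μ) (hμ1 : μ < 1) (hr0 : 0 < r0)
    {G : Set (EuclideanSpace ℝ (Fin N))}
    (h : Fat N r0 G) (hvol : volume.real G < (1 - μ) * om N) :
    (1 + μ / 5 ^ N) * volume.real G ≤ volume.real (grow N μ r0 G) := by
  have h0 := om_pos N
  have hGf : volume G ≠ ⊤ := measure_ne_top_of_subset h.sub measure_ball_lt_top.ne
  have hgf : volume (grow N μ r0 G) ≠ ⊤ :=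
    measure_ne_top_of_subset (Fat.grow μ G).sub measure_ball_lt_top.ne
  set T : Set (EuclideanSpace ℝ (Fin N) × ℝ) := {q | r0 ≤ q.2 ∧ ‖q.1‖ + q.2 ≤ 1 ∧
    volume.real (G ∩ ball q.1 q.2) = (1 - μ) * (q.2 ^ N * om N)} with hT
  obtain ⟨U, hUT, hdis, hcov⟩ := Vitali.exists_disjoint_subfamily_covering_enlargement_closedBall
    T (fun q => q.1) (fun q => q.2) 1
    (fun q hq => by linarith [hq.2.1, norm_nonneg q.1]) 5 (by norm_num)
  have hpos : ∀ q ∈ U, 0 < q.2 := fun q hq => hr0.trans_le (hUT hq).1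
  have hUc : U.Countable := hdis.countable_of_nonempty_interior (fun q hq => by
    refine ⟨q.1, ball_subset_interior_closedBall (mem_ball_self (hpos q hq))⟩)
  have hGsub : G ⊆ ⋃ q ∈ U, closedBall q.1 (5 * q.2) := by
    intro x hx
    obtain ⟨a, r, h1, h2, h3, h4⟩ := h x hx
    obtain ⟨c, s, g1, g2, g3, g4⟩ := exact_ball hμ (hr0.trans_le h1) h2 h4 hGf hvol
    obtain ⟨b, hb, hb2⟩ := hcov (c, s) ⟨h1.trans g1, g2, g4⟩
    exact Set.mem_biUnion hb (hb2 (ball_subset_closedBall (g3 h3)))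
  have v1 : volume G ≤ ∑' q : U, ENNReal.ofReal ((5 * q.1.2) ^ N * om N) := by
    refine (measure_mono hGsub).trans ((measure_biUnion_le _ hUc _).trans (le_of_eq ?_))
    refine tsum_congr fun q => vol_closedBall _ ?_
    have := hpos q.1 q.2
    positivity
  have hdiff : ∀ q ∈ U, volume (ball q.1 q.2 \ G) = ENNReal.ofReal (μ * (q.2 ^ N * om N)) := by
    intro q hq
    have e1 : volume.real (ball q.1 q.2 \ G) = μ * (q.2 ^ N * om N) := by
      have := measureReal_inter_add_sdiff (μ := volume) (s := ball q.1 q.2) h.isOpen.measurableSet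
        measure_ball_lt_top.ne
      rw [Set.inter_comm, (hUT hq).2.2, volr_ball _ (hpos q hq)] at this
      linarith
    rw [← e1, ofReal_measureReal
      (measure_ne_top_of_subset Set.sdiff_subset measure_ball_lt_top.ne)]
  have v2 : ∑' q : U, ENNReal.ofReal (μ * (q.1.2 ^ N * om N)) ≤ volume (grow N μ r0 G \ G) := by
    have e : ∑' q : U, ENNReal.ofReal (μ * (q.1.2 ^ N * om N)) =
        volume (⋃ q ∈ U, ball q.1 q.2 \ G) := by
      rw [measure_biUnion hUc]
      · exact tsum_congr fun q => (hdiff q.1 q.2).symm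
      · exact hdis.mono_on (fun q hq => Set.sdiff_subset.trans ball_subset_closedBall)
      · exact fun q hq => measurableSet_ball.diff h.isOpen.measurableSet
    rw [e]
    apply measure_mono
    intro x hx
    obtain ⟨q, hq, hx1, hx2⟩ := Set.mem_iUnion₂.1 hx
    exact ⟨⟨q.1, q.2, (hUT hq).1, (hUT hq).2.1, hx1, (hUT hq).2.2.ge⟩, hx2⟩
  have v3 : ∑' q : U, ENNReal.ofReal ((5 * q.1.2) ^ N * om N) =
      ENNReal.ofReal (5 ^ N / μ) * ∑' q : U, ENNReal.ofReal (μ * (q.1.2 ^ N * om N)) := by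
    rw [← ENNReal.tsum_mul_left]
    refine tsum_congr fun q => ?_
    rw [← ENNReal.ofReal_mul (by positivity)]
    congr 1
    field_simp
    try ring
  have v4 : volume G ≤ ENNReal.ofReal (5 ^ N / μ) * volume (grow N μ r0 G \ G) := by
    rw [v3] at v1
    refine v1.trans ?_
    gcongr
  have hdf : volume (grow N μ r0 G \ G) ≠ ⊤ := measure_ne_top_of_subset Set.sdiff_subset hgf
  have v5 : volume.real G ≤ 5 ^ N / μ * volume.real (grow N μ r0 G \ G) := by
    have := ENNReal.toReal_mono (ENNReal.mul_ne_top ENNReal.ofReal_ne_top hdf) v4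
    rwa [ENNReal.toReal_mul, ENNReal.toReal_ofReal (by positivity)] at this
  rw [measureReal_sdiff (h.sub_grow hμ hr0) h.isOpen.measurableSet hgf] at v5
  have v6 : μ / 5 ^ N * volume.real G ≤ volume.real (grow N μ r0 G) - volume.real G := by
    calc μ / 5 ^ N * volume.real G
        ≤ μ / 5 ^ N * (5 ^ N / μ * (volume.real (grow N μ r0 G) - volume.real G)) := by gcongr
      _ = _ := by field_simp
  linarith

lemma grow_full {N : ℕ} {μ r0 : ℝ} (hr0 : r0 ≤ 1)
    {G : Set (EuclideanSpace ℝ (Fin N))}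
    (h : Fat N r0 G) (hvol : (1 - μ) * om N ≤ volume.real G) :
    grow N μ r0 G = ball 0 1 := by
  refine Set.Subset.antisymm (Fat.grow μ G).sub fun x hx => ?_
  refine ⟨0, 1, hr0, by simp, hx, ?_⟩
  rw [Set.inter_eq_left.2 h.sub, one_pow, one_mul]
  exact hvol

lemma iter_full {N : ℕ} {μ r0 v : ℝ} (hμ : 0 < μ) (hμ1 : μ < 1) (hr0 : 0 < r0) (hr1 : r0 ≤ 1)
    {G : Set (EuclideanSpace ℝ (Fin N))} (h : Fat N r0 G) (hv : v ≤ volume.real G) (n : ℕ)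
    (hn : om N < (1 + μ / 5 ^ N) ^ n * v) :
    ball 0 1 ⊆ (grow N μ r0)^[n] G := by
  have hfat : ∀ k, Fat N r0 ((grow N μ r0)^[k] G) := by
    intro k
    cases k with
    | zero => exact h
    | succ k => rw [Function.iterate_succ_apply']; exact Fat.grow μ _
  have hmono : ∀ k l, k ≤ l → (grow N μ r0)^[k] G ⊆ (grow N μ r0)^[l] G := by
    intro k l hkl
    induction l, hkl using Nat.le_induction with
    | base => exact le_rfl
    | succ l _ ih =>
      rw [Function.iterate_succ_apply']
      exact ih.trans ((hfat l).sub_grow hμ hr0)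
  by_contra hcon
  have hlt : ∀ k < n, volume.real ((grow N μ r0)^[k] G) < (1 - μ) * om N := by
    intro k hk
    by_contra hge
    push Not at hge
    have := grow_full (μ := μ) hr1 (hfat k) hge
    apply hcon
    rw [← this, ← Function.iterate_succ_apply' (grow N μ r0)]
    exact hmono _ _ hk
  have hgr : ∀ k ≤ n, (1 + μ / 5 ^ N) ^ k * v ≤ volume.real ((grow N μ r0)^[k] G) := by
    intro k
    induction k with
    | zero => intro _; simpa using hv
    | succ k ih =>
      intro hk
      have h1 := ih (by omega)
      have h2 := growth hμ hμ1 hr0 (hfat k) (hlt k (by omega))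
      rw [Function.iterate_succ_apply']
      refine le_trans ?_ h2
      rw [pow_succ']
      have : 0 ≤ 1 + μ / 5 ^ N := by positivity
      nlinarith
  have h1 := hgr n le_rfl
  have h2 : volume.real ((grow N μ r0)^[n] G) ≤ om N := by
    have := measureReal_mono (μ := volume) (hfat n).sub measure_ball_lt_top.ne
    rwa [volr_ball _ one_pos, one_pow, one_mul] at this
  linarith


set_option maxHeartbeats 1000000 in
lemma dg_one (N : ℕ) (Λ β : ℝ) (hΛ : 1 ≤ Λ) (hβ : β ∈ Set.Ioc (0 : ℝ) 1) :
    ∃ ε₂ κ θ : ℝ, 0 < ε₂ ∧ 0 < κ ∧ 0 < θ ∧ θ ≤ 1 / 2 ∧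
      ∀ ε, 0 < ε → ε ≤ ε₂ → ∀ u : EuclideanSpace ℝ (Fin N) → ℝ, BM N u →
      (∀ x ∈ ball (0 : EuclideanSpace ℝ (Fin N)) 3, 0 ≤ u x) →
      (∀ x ∈ ball (0 : EuclideanSpace ℝ (Fin N)) 3, IsSuper N Λ β ε (2 * ε ^ 2 * κ) u x) →
      (1 / 2) ^ N * om N / 2 ≤ volume.real {x ∈ ball (0 : EuclideanSpace ℝ (Fin N)) (1 / 2) |
        1 / 2 * ((ε / 2) ^ N * om N) ≤ ∫ y in ball x (ε / 2), u y} →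
      ∀ x ∈ ball (0 : EuclideanSpace ℝ (Fin N)) 1, θ ≤ u x := by
  obtain ⟨ε₁, κ₁, μ, θ, e1, e2, k1, m0, m1, t0, t1, H⟩ := scaled_step N Λ β hΛ hβ
  have h0 := om_pos N
  have hβ0 := hβ.1
  have hβ1 := hβ.2
  have hc0 : 0 < β / (4 * 8 ^ N) := by positivity
  have hc1 : β / (4 * 8 ^ N) ≤ 1 := by
    rw [div_le_one (by positivity)]
    have : (1 : ℝ) ≤ 8 ^ N := one_le_pow₀ (by norm_num)
    linarith
  set c := β / (4 * 8 ^ N) with hc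
  set K := ⌈2 / ε₁⌉₊ with hK
  have hK1 : 2 / ε₁ ≤ K := Nat.le_ceil _
  set τ := β * (1 / 2) ^ N / 8 with hτ
  have hτ0 : 0 < τ := by positivity
  have hτ1 : τ ≤ 1 / 8 := by
    have : (1 / 2 : ℝ) ^ N ≤ 1 := pow_le_one₀ (by norm_num) (by norm_num)
    have : β * (1 / 2) ^ N ≤ 1 := by
      calc β * (1 / 2) ^ N ≤ 1 * 1 := by gcongr
        _ = 1 := by norm_num
    linarith
  set T := c ^ K * τ with hT
  have hcK : c ^ K ≤ 1 := pow_le_one₀ hc0.le hc1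
  have hT0 : 0 < T := by positivity
  have hTτ : T ≤ τ := by rw [hT]; nlinarith
  obtain ⟨n, hn⟩ : ∃ n : ℕ, 2 * 2 ^ N < (1 + μ / 5 ^ N) ^ n :=
    pow_unbounded_of_one_lt _ (by have : 0 < μ / 5 ^ N := by positivity
                                  linarith)
  have hθn : θ ^ n ≤ 1 := pow_le_one₀ t0.le t1.le
  have hθn0 : 0 < θ ^ n := by positivity
  refine ⟨min (ε₁ / 2) (1 / (1 + K)), min T (κ₁ * θ ^ n * T), θ ^ n * T,
    by positivity, by positivity, by positivity, by nlinarith, ?_⟩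
  intro ε hε hεle u hu hpos hs hE
  have hε1 : ε ≤ ε₁ / 2 := hεle.trans (min_le_left _ _)
  have hε2 : ε * (1 + K) ≤ 1 := by
    rw [← le_div_iff₀ (by positivity)]; exact hεle.trans (min_le_right _ _)
  set κ := min T (κ₁ * θ ^ n * T) with hκ
  have hκ0 : 0 < κ := by positivity
  have hκT : κ ≤ T := min_le_left _ _
  have hκ1 : κ ≤ κ₁ * θ ^ n * T := min_le_right _ _
  have hεone : ε ≤ 1 := by
    have : (0 : ℝ) ≤ K := by positivity
    nlinarith
  have hρ : 2 * ε ^ 2 * κ ≤ 2 * T := by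
    have : ε ^ 2 ≤ 1 := pow_le_one₀ hε.le hεone
    nlinarith
  have hΛε : Λ * ε ≤ 1 / 8 := by nlinarith
  set E := {x ∈ ball (0 : EuclideanSpace ℝ (Fin N)) (1 / 2) |
        1 / 2 * ((ε / 2) ^ N * om N) ≤ ∫ y in ball x (ε / 2), u y} with hEdef
  set r0 := ε / ε₁ with hr0
  have hr0p : 0 < r0 := by positivity
  have hr0h : r0 ≤ 1 / 2 := by rw [hr0, div_le_iff₀ e1]; linarith
  set G : Set (EuclideanSpace ℝ (Fin N)) := ⋃ x ∈ E, ball x r0 with hG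
  have hfat : Fat N r0 G := by
    intro x hx
    obtain ⟨z, hz, hxz⟩ := Set.mem_iUnion₂.1 hx
    refine ⟨z, r0, le_rfl, ?_, hxz, Set.subset_biUnion_of_mem (u := fun x => ball x r0) hz⟩
    have := mem_ball_zero_iff.1 hz.1
    linarith
  have hEG : E ⊆ G := fun x hx => Set.mem_biUnion hx (mem_ball_self hr0p)
  have hvG : (1 / 2) ^ N * om N / 2 ≤ volume.real G :=
    hE.trans (measureReal_mono hEG (measure_ne_top_of_subset hfat.sub measure_ball_lt_top.ne))
  have hbase : ∀ x ∈ G, T ≤ u x := by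
    intro x hx
    obtain ⟨z, hz, hxz⟩ := Set.mem_iUnion₂.1 hx
    have hz1 := mem_ball_zero_iff.1 hz.1
    have hz2 : 1 / 2 * ((ε / 2) ^ N * om N) ≤ ∫ y in ball z (ε / 2), u y := hz.2
    have hbig : ε / 2 + K * (ε / 2) ≤ 1 / 2 := by nlinarith
    have hKε : (0 : ℝ) ≤ K * (ε / 2) := by positivity
    have hin : ∀ x ∈ ball z (ε / 2 + K * (ε / 2)), ‖x‖ < 1 := by
      intro x hx
      have h1 := mem_ball.1 hx
      have h2 := norm_le_norm_add_norm_sub' x z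
      rw [← dist_eq_norm] at h2
      linarith
    have hp : ∀ x ∈ ball z (ε / 2 + K * (ε / 2)), ∀ y ∈ ball x (Λ * ε), 0 ≤ u y := by
      intro x hx y hy
      apply hpos
      rw [mem_ball_zero_iff]
      have h1 := mem_ball.1 hy
      have h2 := norm_le_norm_add_norm_sub' y x
      rw [← dist_eq_norm] at h2
      linarith [hin x hx]
    have hss : ∀ x ∈ ball z (ε / 2 + K * (ε / 2)), IsSuper N Λ β ε (2 * ε ^ 2 * κ) u x := by
      intro x hx
      apply hs
      rw [mem_ball_zero_iff]
      linarith [hin x hx]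
    have hst : ∀ y ∈ ball z (ε / 2), τ ≤ u y := by
      intro y hy
      have hy' : y ∈ ball z (ε / 2 + K * (ε / 2)) := ball_subset_ball (by linarith) hy
      have h1 := spread_one (s := ε / 2) (z := z) hΛ hβ hε hu (hp y hy') (hss y hy')
        (by positivity) (ball_subset_ball' (by
          rw [dist_comm]; linarith [mem_ball.1 hy])) hz2
      have e8 : ε / 2 / ε = 1 / 2 := by field_simp
      rw [e8] at h1
      have : β * (1 / 2) ^ N = 8 * τ := by rw [hτ]; ring
      rw [this] at h1
      linarith
    refine spread hΛ hβ hε hu hτ0 hst K hp hss (by rw [← hc, ← hT]; linarith) x ?_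
    refine ball_subset_ball ?_ hxz
    have : r0 = 2 / ε₁ * (ε / 2) := by rw [hr0]; field_simp
    rw [this]
    have : 2 / ε₁ * (ε / 2) ≤ K * (ε / 2) := by gcongr
    linarith
  have hprop : ∀ j ≤ n, ∀ x ∈ (grow N μ r0)^[j] G, θ ^ j * T ≤ u x := by
    intro j
    induction j with
    | zero => intro _ x hx; simpa using hbase x hx
    | succ j ih =>
      intro hj x hx
      have ih' := ih (by omega)
      rw [Function.iterate_succ_apply'] at hx
      obtain ⟨a, s, h1, h2, h3, h4⟩ := hx
      have hs0 : 0 < s := hr0p.trans_le h1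
      have hs1 : s ≤ 1 := by linarith [norm_nonneg a]
      have hθj : θ ^ n ≤ θ ^ j := pow_le_pow_of_le_one t0.le t1.le (by omega)
      have hfin : ∀ S : Set (EuclideanSpace ℝ (Fin N)), volume (S ∩ ball a s) ≠ ⊤ := fun S =>
        measure_ne_top_of_subset Set.inter_subset_right measure_ball_lt_top.ne
      have := H ε hε u hu a s (θ ^ j * T) (2 * ε ^ 2 * κ) hs0 (by positivity)
        (by rw [hr0, div_le_iff₀ e1] at h1; linarith)
        (fun y hy => hpos y (ball_subset_ball' (by rw [dist_zero_right]; linarith) hy))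
        (fun y hy => hs y (ball_subset_ball' (by rw [dist_zero_right]; linarith) hy))
        (by
          rw [le_div_iff₀ (by positivity)]
          have : s ^ 2 ≤ 1 := pow_le_one₀ hs0.le hs1
          calc 2 * ε ^ 2 * κ * s ^ 2 ≤ 2 * ε ^ 2 * κ * 1 := by gcongr
            _ ≤ 2 * ε ^ 2 * (κ₁ * θ ^ n * T) * 1 := by gcongr
            _ ≤ 2 * ε ^ 2 * (κ₁ * θ ^ j * T) * 1 := by gcongr
            _ = _ := by ring)
        (by
          have hm : MeasurableSet {p | u p < θ ^ j * T} := measurableSet_lt hu.1 measurable_const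
          have e := measureReal_inter_add_sdiff (μ := volume) (s := ball a s) hm
            measure_ball_lt_top.ne
          rw [volr_ball _ hs0] at e
          have hsub : (grow N μ r0)^[j] G ∩ ball a s ⊆ ball a s \ {p | u p < θ ^ j * T} :=
            fun y hy => ⟨hy.2, not_lt.2 (ih' y hy.1)⟩
          have l1 := measureReal_mono (μ := volume) hsub
            (measure_ne_top_of_subset Set.sdiff_subset measure_ball_lt_top.ne)
          rw [Set.inter_comm, ← ofReal_measureReal (by rw [Set.inter_comm]; exact hfin _)]
          apply ENNReal.ofReal_le_ofReal
          linarith) x h3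
      rw [pow_succ']; linarith
  intro x hx
  refine hprop n le_rfl x (iter_full m0 m1 hr0p (by linarith) hfat hvG n ?_ hx)
  have e : om N = 2 * 2 ^ N * ((1 / 2) ^ N * om N / 2) := by
    rw [one_div, inv_pow]; field_simp
  have hp : 0 < (1 / 2) ^ N * om N / 2 := by positivity
  calc om N = 2 * 2 ^ N * ((1 / 2) ^ N * om N / 2) := e
    _ < _ := by gcongr

lemma dg (N : ℕ) (Λ β : ℝ) (hΛ : 1 ≤ Λ) (hβ : β ∈ Set.Ioc (0 : ℝ) 1) :
    ∃ ε₂ κ θ : ℝ, 0 < ε₂ ∧ 0 < κ ∧ 0 < θ ∧ θ ≤ 1 / 2 ∧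
      ∀ ε, 0 < ε → ε ≤ ε₂ → ∀ u v : EuclideanSpace ℝ (Fin N) → ℝ, BM N u → BM N v →
      (∀ x, u x + v x = 1) →
      (∀ x ∈ ball (0 : EuclideanSpace ℝ (Fin N)) 3, 0 ≤ u x) →
      (∀ x ∈ ball (0 : EuclideanSpace ℝ (Fin N)) 3, 0 ≤ v x) →
      (∀ x ∈ ball (0 : EuclideanSpace ℝ (Fin N)) 3, IsSuper N Λ β ε (2 * ε ^ 2 * κ) u x) →
      (∀ x ∈ ball (0 : EuclideanSpace ℝ (Fin N)) 3, IsSuper N Λ β ε (2 * ε ^ 2 * κ) v x) →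
      (∀ x ∈ ball (0 : EuclideanSpace ℝ (Fin N)) 1, θ ≤ u x) ∨
      (∀ x ∈ ball (0 : EuclideanSpace ℝ (Fin N)) 1, θ ≤ v x) := by
  obtain ⟨ε₂, κ, θ, h1, h2, h3, h4, H⟩ := dg_one N Λ β hΛ hβ
  refine ⟨ε₂, κ, θ, h1, h2, h3, h4, ?_⟩
  intro ε hε hεle u v hu hv huv pu pv su sv
  have Hu := H ε hε hεle u hu pu su
  have Hv := H ε hε hεle v hv pv sv
  set A := {x ∈ ball (0 : EuclideanSpace ℝ (Fin N)) (1 / 2) |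
        1 / 2 * ((ε / 2) ^ N * om N) ≤ ∫ y in ball x (ε / 2), u y}
  set B := {x ∈ ball (0 : EuclideanSpace ℝ (Fin N)) (1 / 2) |
        1 / 2 * ((ε / 2) ^ N * om N) ≤ ∫ y in ball x (ε / 2), v y}
  by_contra hcon
  push Not at hcon
  have hA : volume.real A < (1 / 2) ^ N * om N / 2 := by
    by_contra hA
    push Not at hA
    obtain ⟨⟨x, hx, hx'⟩, _⟩ := hcon
    exact absurd (Hu hA x hx) (not_le.2 hx')
  have hB : volume.real B < (1 / 2) ^ N * om N / 2 := by
    by_contra hB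
    push Not at hB
    obtain ⟨_, ⟨x, hx, hx'⟩⟩ := hcon
    exact absurd (Hv hB x hx) (not_le.2 hx')
  have hcov : ball (0 : EuclideanSpace ℝ (Fin N)) (1 / 2) ⊆ A ∪ B := by
    intro x hx
    have hsum : (∫ y in ball x (ε / 2), u y) + ∫ y in ball x (ε / 2), v y =
        (ε / 2) ^ N * om N := by
      rw [← integral_add (hu.integrableOn_ball _ _) (hv.integrableOn_ball _ _)]
      simp only [huv]
      rw [setIntegral_const, volr_ball _ (by positivity)]; simp
    rcases le_total (1 / 2 * ((ε / 2) ^ N * om N)) (∫ y in ball x (ε / 2), u y) with h | h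
    · exact Or.inl ⟨hx, h⟩
    · exact Or.inr ⟨hx, by linarith⟩
  have hfin : volume (A ∪ B) ≠ ⊤ := measure_ne_top_of_subset
    (Set.union_subset (fun x hx => hx.1) (fun x hx => hx.1))
    (measure_ball_lt_top (x := (0 : EuclideanSpace ℝ (Fin N))) (r := 1 / 2)).ne
  have l1 := measureReal_mono (μ := volume) hcov hfin
  have l2 := measureReal_union_le (μ := volume) A B
  rw [volr_ball _ (by norm_num)] at l1
  linarith


lemma super_of_minus {N : ℕ} {Λ β ε F : ℝ} {u : EuclideanSpace ℝ (Fin N) → ℝ}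
    {x : EuclideanSpace ℝ (Fin N)} (hΛ : 1 ≤ Λ) (hβ : β ∈ Set.Ioc (0 : ℝ) 1) (hε : 0 < ε)
    (h : LepsMinus N Λ (1 - β) β ε u x ≤ F) : IsSuper N Λ β ε (2 * ε ^ 2 * F) u x := by
  intro m hm
  unfold LepsMinus at h
  rw [one_div, inv_mul_le_iff₀ (by positivity)] at h
  refine le_trans ?_ h
  have h1 : 0 ≤ 1 - β := by linarith [hβ.2]
  gcongr
  refine le_csInf ⟨_, Set.mem_image_of_mem _ (mem_ball_self (by linarith))⟩ ?_
  rintro _ ⟨z, hz, rfl⟩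
  apply hm
  rw [mem_ball_zero_iff] at hz ⊢
  rw [norm_smul, Real.norm_eq_abs, abs_of_pos hε]
  nlinarith

lemma super_of_plus {N : ℕ} {Λ β ε F : ℝ} {u : EuclideanSpace ℝ (Fin N) → ℝ}
    {x : EuclideanSpace ℝ (Fin N)} (hΛ : 1 ≤ Λ) (hβ : β ∈ Set.Ioc (0 : ℝ) 1) (hε : 0 < ε)
    (h : -F ≤ LepsPlus N Λ (1 - β) β ε u x) :
    IsSuper N Λ β ε (2 * ε ^ 2 * F) (fun y => -u y) x := by
  have key : ∀ k, secondDiff N (fun y => -u y) x k = -secondDiff N u x k := by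
    intro k; simp only [secondDiff]; ring
  intro m hm
  simp only [key] at hm ⊢
  have e : (⨍ y in ball (0 : EuclideanSpace ℝ (Fin N)) 1, -secondDiff N u x (ε • y)) =
      -⨍ y in ball (0 : EuclideanSpace ℝ (Fin N)) 1, secondDiff N u x (ε • y) := by
    simp only [setAverage_eq, integral_neg, smul_neg]
  rw [e]
  unfold LepsPlus at h
  rw [one_div, le_inv_mul_iff₀ (by positivity)] at h
  have h1 : 0 ≤ 1 - β := by linarith [hβ.2]
  have h2 : sSup ((fun z => secondDiff N u x (ε • z)) '' ball (0 : EuclideanSpace ℝ (Fin N)) Λ)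
      ≤ -m := by
    refine csSup_le ⟨_, Set.mem_image_of_mem _ (mem_ball_self (by linarith))⟩ ?_
    rintro _ ⟨z, hz, rfl⟩
    have := hm (ε • z) (by
      rw [mem_ball_zero_iff] at hz ⊢
      rw [norm_smul, Real.norm_eq_abs, abs_of_pos hε]
      nlinarith)
    simp only
    linarith
  have h3 := mul_le_mul_of_nonneg_left h2 h1
  linarith

lemma osc (N : ℕ) (Λ β : ℝ) (hΛ : 1 ≤ Λ) (hβ : β ∈ Set.Ioc (0 : ℝ) 1) :
    ∃ ε₂ κ θ : ℝ, 0 < ε₂ ∧ 0 < κ ∧ 0 < θ ∧ θ ≤ 1 / 2 ∧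
      ∀ ε R S F ω, 0 < ε → 0 < R → 0 ≤ F → 0 < ω → 2 * S ≤ ω → F * R ^ 2 ≤ κ * ω →
      ∀ u : EuclideanSpace ℝ (Fin N) → ℝ, BM N u → ∀ x₀ : EuclideanSpace ℝ (Fin N),
      (∀ x ∈ ball x₀ R, |u x| ≤ S) →
      (∀ x ∈ ball x₀ R, IsSuper N Λ β ε (2 * ε ^ 2 * F) u x) →
      (∀ x ∈ ball x₀ R, IsSuper N Λ β ε (2 * ε ^ 2 * F) (fun y => -u y) x) →
      ∀ k : ℕ, ε ≤ ε₂ * ((1 / 3) ^ k * R) →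
      ∃ a, ∀ x ∈ ball x₀ ((1 / 3) ^ k * R), a ≤ u x ∧ u x ≤ a + (1 - θ) ^ k * ω := by
  obtain ⟨ε₂, κ, θ, h1, h2, h3, h4, H⟩ := dg N Λ β hΛ hβ
  refine ⟨ε₂, κ, θ, h1, h2, h3, h4, ?_⟩
  intro ε R S F ω hε hR hF hω hS hFω u hu x₀ hb su sv k
  have hnu : BM N (fun y => -u y) := ⟨hu.1.neg, by
    obtain ⟨M, hM⟩ := hu.2
    exact ⟨M, fun y => by rw [abs_neg]; exact hM y⟩⟩
  induction k with
  | zero =>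
    intro _
    refine ⟨-S, fun x hx => ?_⟩
    simp only [pow_zero, one_mul] at hx ⊢
    have := abs_le.1 (hb x hx)
    constructor <;> linarith
  | succ k ih =>
    intro hεk
    have hp : 0 < (1 / 3 : ℝ) ^ k := by positivity
    set r := (1 / 3 : ℝ) ^ (k + 1) * R with hr
    have hr0 : 0 < r := by positivity
    have hr3 : (1 / 3 : ℝ) ^ k * R = 3 * r := by rw [hr, pow_succ]; ring
    obtain ⟨a, ha⟩ := ih (hεk.trans (by rw [hr3]; nlinarith))
    rw [hr3] at ha
    have h1θ : 0 < 1 - θ := by linarith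
    set w := (1 - θ) ^ k * ω with hw
    have hw0 : 0 < w := by positivity
    have hsub : ball x₀ (3 * r) ⊆ ball x₀ R := by
      apply ball_subset_ball
      rw [← hr3]
      have : (1 / 3 : ℝ) ^ k ≤ 1 := pow_le_one₀ (by norm_num) (by norm_num)
      nlinarith
    have hsc : 2 * ε ^ 2 * F / w ≤ 2 * (ε / r) ^ 2 * κ := by
      have key : F * r ^ 2 ≤ κ * w := by
        have l1 : (1 / 9 : ℝ) ^ k ≤ (1 - θ) ^ k := by gcongr; linarith
        have l2 : ((1 / 3 : ℝ) ^ (k + 1)) ^ 2 ≤ (1 / 9) ^ k := by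
          rw [← pow_mul, mul_comm, pow_mul, pow_succ]
          have : 0 < ((1 / 3 : ℝ) ^ 2) ^ k := by positivity
          norm_num at this ⊢
        calc F * r ^ 2 = ((1 / 3 : ℝ) ^ (k + 1)) ^ 2 * (F * R ^ 2) := by rw [hr]; ring
          _ ≤ (1 - θ) ^ k * (κ * ω) := by
            gcongr
            exact l2.trans l1
          _ = κ * w := by rw [hw]; ring
      rw [div_le_iff₀ hw0, div_pow]
      have : 2 * (ε ^ 2 / r ^ 2) * κ * w = 2 * ε ^ 2 * (κ * w / r ^ 2) := by ring
      rw [this]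
      have : F ≤ κ * w / r ^ 2 := by rwa [le_div_iff₀ (by positivity)]
      gcongr
    have hm : ∀ q ∈ ball (0 : EuclideanSpace ℝ (Fin N)) 3, x₀ + r • q ∈ ball x₀ (3 * r) :=
      fun q hq => (scale_mem hr0).2 hq
    have hinv : ∀ x ∈ ball x₀ r, r⁻¹ • (x - x₀) ∈ ball (0 : EuclideanSpace ℝ (Fin N)) 1 ∧
        x₀ + r • (r⁻¹ • (x - x₀)) = x := by
      intro x hx
      have hxe : x₀ + r • (r⁻¹ • (x - x₀)) = x := by
        rw [smul_smul, mul_inv_cancel₀ hr0.ne', one_smul]; abel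
      refine ⟨?_, hxe⟩
      rw [← scale_mem (x₀ := x₀) hr0, hxe, one_mul]; exact hx
    have hdg := H (ε / r) (by positivity) (by rwa [div_le_iff₀ hr0])
      (fun q => (u (x₀ + r • q) - a) / w) (fun q => (-u (x₀ + r • q) - (-(a + w))) / w)
      (hu.scale x₀ r a w) (hnu.scale x₀ r (-(a + w)) w)
      (fun q => by field_simp; ring)
      (fun q hq => div_nonneg (by linarith [(ha _ (hm q hq)).1]) hw0.le)
      (fun q hq => div_nonneg (by linarith [(ha _ (hm q hq)).2]) hw0.le)
      (fun q hq => (IsSuper.scale x₀ q hr0 a hw0 (su _ (hsub (hm q hq)))).mono hsc)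
      (fun q hq => (IsSuper.scale x₀ q hr0 (-(a + w)) hw0 (sv _ (hsub (hm q hq)))).mono hsc)
    have hsub' : ball x₀ r ⊆ ball x₀ (3 * r) := ball_subset_ball (by linarith)
    have hpw : (1 - θ) ^ (k + 1) * ω = (1 - θ) * w := by rw [hw, pow_succ]; ring
    rw [hpw]
    rcases hdg with hd | hd
    · refine ⟨a + θ * w, fun x hx => ?_⟩
      obtain ⟨i1, i2⟩ := hinv x hx
      have := hd _ i1
      simp only [i2] at this
      rw [le_div_iff₀ hw0] at this
      have := (ha x (hsub' hx)).2
      constructor <;> linarith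
    · refine ⟨a, fun x hx => ?_⟩
      obtain ⟨i1, i2⟩ := hinv x hx
      have := hd _ i1
      simp only [i2] at this
      rw [le_div_iff₀ hw0] at this
      have := (ha x (hsub' hx)).1
      constructor <;> linarith

set_option maxHeartbeats 1000000 in
theorem holder_aux (N : ℕ) (hN : 1 ≤ N) (Λ β : ℝ) (hΛ : 1 ≤ Λ)
    (hβ : β ∈ Set.Ioc (0 : ℝ) 1) :
    ∃ ε₀ C γ : ℝ, 0 < ε₀ ∧ 0 < C ∧ γ ∈ Set.Ioo (0 : ℝ) 1 ∧
      ∀ R ε : ℝ, 0 < R → 0 < ε → ε < ε₀ * R →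
      ∀ f u : EuclideanSpace ℝ (Fin N) → ℝ,
        Measurable f → (∃ M, ∀ y, |f y| ≤ M) →
        Measurable u → (∃ M, ∀ y, |u y| ≤ M) →
        (∀ x ∈ ball (0 : EuclideanSpace ℝ (Fin N)) (2 * R),
          LepsPlus N Λ (1 - β) β ε u x ≥ -|f x| ∧ LepsMinus N Λ (1 - β) β ε u x ≤ |f x|) →
        ∀ x ∈ ball (0 : EuclideanSpace ℝ (Fin N)) R,
        ∀ z ∈ ball (0 : EuclideanSpace ℝ (Fin N)) R,
          |u x - u z| ≤ (C / R ^ γ) *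
            ((sSup ((fun y => |u y|) '' ball (0 : EuclideanSpace ℝ (Fin N)) (2 * R))) +
              R ^ 2 * sSup ((fun y => |f y|) '' ball (0 : EuclideanSpace ℝ (Fin N)) (2 * R))) *
            (dist x z ^ γ + ε ^ γ) := by
  obtain ⟨ε₂, κ, θ, h1, h2, h3, h4, H⟩ := osc N Λ β hΛ hβ
  have hθ : 0 < 1 - θ := by linarith
  have hl3 : 0 < Real.log 3 := Real.log_pos (by norm_num)
  set γ := -Real.log (1 - θ) / Real.log 3 with hγ
  have hγ0 : 0 < γ := div_pos (neg_pos.2 (Real.log_neg hθ (by linarith))) hl3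
  have hγ1 : γ < 1 := by
    rw [hγ, div_lt_one hl3, neg_lt, ← Real.log_inv]
    exact Real.log_lt_log (by norm_num) (by norm_num; linarith)
  have hpow : (1 / 3 : ℝ) ^ γ = 1 - θ := by
    rw [Real.rpow_def_of_pos (by norm_num), one_div, Real.log_inv, hγ]
    have : -Real.log 3 * (-Real.log (1 - θ) / Real.log 3) = Real.log (1 - θ) := by field_simp
    rw [this, Real.exp_log hθ]
  have hpowk : ∀ k : ℕ, ((1 / 3 : ℝ) ^ k) ^ γ = (1 - θ) ^ k := by
    intro k
    rw [← hpow, ← Real.rpow_natCast, ← Real.rpow_natCast, ← Real.rpow_mul (by norm_num),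
      ← Real.rpow_mul (by norm_num), mul_comm]
  set D := 1 + (1 / ε₂) ^ γ with hD
  have hDp : 0 < (1 / ε₂) ^ γ := by positivity
  refine ⟨1, 2 * D * (2 + 1 / κ), γ, one_pos, by positivity, ⟨hγ0, hγ1⟩, ?_⟩
  intro R ε hR hε _ f u hfm hfb hum hub hL x hx z hz
  have bddu : BddAbove ((fun y => |u y|) '' ball (0 : EuclideanSpace ℝ (Fin N)) (2 * R)) := by
    obtain ⟨M, hM⟩ := hub
    exact ⟨M, by rintro _ ⟨y, _, rfl⟩; exact hM y⟩
  have bddf : BddAbove ((fun y => |f y|) '' ball (0 : EuclideanSpace ℝ (Fin N)) (2 * R)) := by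
    obtain ⟨M, hM⟩ := hfb
    exact ⟨M, by rintro _ ⟨y, _, rfl⟩; exact hM y⟩
  set S := sSup ((fun y => |u y|) '' ball (0 : EuclideanSpace ℝ (Fin N)) (2 * R)) with hS
  set F := sSup ((fun y => |f y|) '' ball (0 : EuclideanSpace ℝ (Fin N)) (2 * R)) with hF
  have hSu : ∀ y ∈ ball (0 : EuclideanSpace ℝ (Fin N)) (2 * R), |u y| ≤ S := fun y hy =>
    le_csSup bddu ⟨y, hy, rfl⟩
  have hFf : ∀ y ∈ ball (0 : EuclideanSpace ℝ (Fin N)) (2 * R), |f y| ≤ F := fun y hy =>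
    le_csSup bddf ⟨y, hy, rfl⟩
  have hbig : ball (0 : EuclideanSpace ℝ (Fin N)) R ⊆ ball 0 (2 * R) :=
    ball_subset_ball (by linarith)
  have hS0 : 0 ≤ S := (abs_nonneg _).trans (hSu x (hbig hx))
  have hF0 : 0 ≤ F := (abs_nonneg _).trans (hFf x (hbig hx))
  have h2S : |u x - u z| ≤ 2 * S := by
    have a1 := abs_le.1 (hSu x (hbig hx))
    have a2 := abs_le.1 (hSu z (hbig hz))
    rw [abs_le]; constructor <;> linarith
  have hRγ : 0 < R ^ γ := by positivity
  have hdg : 0 ≤ dist x z ^ γ := by positivity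
  have hεg : 0 ≤ ε ^ γ := by positivity
  set W := S + R ^ 2 * F with hW
  have hW0 : 0 ≤ W := by positivity
  rcases hW0.eq_or_lt with hW' | hWp
  · have : S = 0 := by nlinarith [mul_nonneg (sq_nonneg R) hF0]
    rw [this] at h2S
    refine h2S.trans ?_
    rw [← hW']; simp
  have hsubx : ball x R ⊆ ball (0 : EuclideanSpace ℝ (Fin N)) (2 * R) := by
    apply ball_subset_ball'
    have := mem_ball.1 hx
    linarith
  set ω := (2 + 1 / κ) * W with hω
  have hωp : 0 < ω := by positivity
  have hωe : ω = 2 * W + W / κ := by rw [hω]; ring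
  have hWk : 0 < W / κ := by positivity
  have hSω : 2 * S ≤ ω := by
    have : S ≤ W := by rw [hW]; nlinarith [mul_nonneg (sq_nonneg R) hF0]
    linarith
  have hFω : F * R ^ 2 ≤ κ * ω := by
    have e : κ * ω = 2 * κ * W + W := by rw [hωe]; field_simp
    rw [e, hW]
    have : 0 < 2 * κ * W := by positivity
    linarith
  have HH := H ε R S F ω hε hR hF0 hωp hSω hFω u ⟨hum, hub⟩ x
    (fun y hy => hSu y (hsubx hy))
    (fun y hy => super_of_minus hΛ hβ hε ((hL y (hsubx hy)).2.trans (hFf y (hsubx hy))))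
    (fun y hy => super_of_plus hΛ hβ hε
      ((neg_le_neg (hFf y (hsubx hy))).trans (hL y (hsubx hy)).1))
  set d := dist x z + ε / ε₂ with hd
  have hεε : 0 < ε / ε₂ := by positivity
  have hd0 : 0 < d := by rw [hd]; linarith [dist_nonneg (x := x) (y := z)]
  have hmain : |u x - u z| ≤ 2 * ω * (d / R) ^ γ := by
    rcases le_total (d / R) 1 with hle | hge
    · obtain ⟨n, hn1, hn2⟩ := exists_nat_pow_near_of_lt_one (x := d / R) (y := 1 / 3)
        (by positivity) hle (by norm_num) (by norm_num)
      rw [div_le_iff₀ hR] at hn2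
      obtain ⟨a, ha⟩ := HH n (by
        rw [← div_le_iff₀' h1]
        linarith [dist_nonneg (x := x) (y := z)])
      have ax := ha x (mem_ball_self (by positivity))
      have az := ha z (by rw [mem_ball, dist_comm]; linarith)
      have hosc : |u x - u z| ≤ (1 - θ) ^ n * ω := by
        rw [abs_le]; constructor <;> linarith
      have hlow : (1 - θ) ^ (n + 1) ≤ (d / R) ^ γ := by
        rw [← hpowk]
        exact Real.rpow_le_rpow (by positivity) hn1.le hγ0.le
      have : (1 - θ) ^ n ≤ 2 * (1 - θ) ^ (n + 1) := by
        have : 0 < (1 - θ) ^ n := by positivity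
        rw [pow_succ]; nlinarith
      calc |u x - u z| ≤ (1 - θ) ^ n * ω := hosc
        _ ≤ (2 * (d / R) ^ γ) * ω := by gcongr; linarith
        _ = _ := by ring
    · have : 1 ≤ (d / R) ^ γ := Real.one_le_rpow hge hγ0.le
      calc |u x - u z| ≤ 2 * ω * 1 := by linarith
        _ ≤ _ := by gcongr
  have hdγ : d ^ γ ≤ D * (dist x z ^ γ + ε ^ γ) := by
    have l1 := Real.rpow_add_le_add_rpow (dist_nonneg (x := x) (y := z)) hεε.le hγ0.le hγ1.le
    have l2 : (ε / ε₂) ^ γ = (1 / ε₂) ^ γ * ε ^ γ := by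
      rw [← Real.mul_rpow (by positivity) hε.le]; congr 1; ring
    rw [l2, ← hd] at l1
    refine l1.trans ?_
    rw [hD]
    nlinarith [mul_nonneg hDp.le hdg]
  rw [Real.div_rpow hd0.le hR.le] at hmain
  calc |u x - u z| ≤ 2 * ω * (d ^ γ / R ^ γ) := hmain
    _ ≤ 2 * ω * (D * (dist x z ^ γ + ε ^ γ) / R ^ γ) := by gcongr
    _ = _ := by rw [hω]; ring

/-- asymptotic Hölder estimate for functions satisfying the Pucci-type
inequalities `L⁺_ε u ≥ −|f|` and `L⁻_ε u ≤ |f|` in `B_{2R}`. -/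
theorem holder_estimate_pucci (N : ℕ) (hN : 1 ≤ N) (Λ β : ℝ) (hΛ : 1 ≤ Λ)
    (hβ : β ∈ Set.Ioc (0 : ℝ) 1) :
    ∃ ε₀ C γ : ℝ, 0 < ε₀ ∧ 0 < C ∧ γ ∈ Set.Ioo (0 : ℝ) 1 ∧
      ∀ R ε : ℝ, 0 < R → 0 < ε → ε < ε₀ * R →
      ∀ f u : EuclideanSpace ℝ (Fin N) → ℝ,
        Measurable f → (∃ M, ∀ y, |f y| ≤ M) →
        Measurable u → (∃ M, ∀ y, |u y| ≤ M) →
        (∀ x ∈ ball (0 : EuclideanSpace ℝ (Fin N)) (2 * R),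
          LepsPlus N Λ (1 - β) β ε u x ≥ -|f x| ∧ LepsMinus N Λ (1 - β) β ε u x ≤ |f x|) →
        ∀ x ∈ ball (0 : EuclideanSpace ℝ (Fin N)) R,
        ∀ z ∈ ball (0 : EuclideanSpace ℝ (Fin N)) R,
          |u x - u z| ≤ (C / R ^ γ) *
            ((sSup ((fun y => |u y|) '' ball (0 : EuclideanSpace ℝ (Fin N)) (2 * R))) +
              R ^ 2 * sSup ((fun y => |f y|) '' ball (0 : EuclideanSpace ℝ (Fin N)) (2 * R))) *
            (dist x z ^ γ + ε ^ γ) :=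
  holder_aux N hN Λ β hΛ hβ
end
end

section
/- Let C = αΛ² + β ⨍_{B_1} |y|² dy = αΛ² + βN/(N+2). Then the sequence of random variables M_k = |X_k − x_0|² − C k ε², k ≥ 0, is a supermartingale with respect to the filtration (F_k). -/
open MeasureTheory Metric

noncomputable section

lemma aux_sym {N : ℕ} (ρ : Measure (EuclideanSpace ℝ (Fin N))) [IsFiniteMeasure ρ]
    (hs : ρ.map (fun z => -z) = ρ) (L : ℝ) (hb : ∀ᵐ z ∂ρ, ‖z‖ ≤ L)
    (a : EuclideanSpace ℝ (Fin N)) (ε : ℝ) :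
    Integrable (fun z => ‖a + ε • z‖ ^ 2) ρ ∧
    ∫ z, ‖a + ε • z‖ ^ 2 ∂ρ = ρ.real Set.univ * ‖a‖ ^ 2 + ε ^ 2 * ∫ z, ‖z‖ ^ 2 ∂ρ := by
  have i2 : Integrable (fun z => ‖z‖ ^ 2) ρ := by
    refine Integrable.of_bound (by fun_prop) (L ^ 2) ?_
    filter_upwards [hb] with z hz
    rw [Real.norm_of_nonneg (by positivity)]
    gcongr
  have i1 : Integrable (fun z => inner ℝ a z) ρ := by
    refine Integrable.of_bound (by fun_prop) (‖a‖ * L) ?_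
    filter_upwards [hb] with z hz
    exact (norm_inner_le_norm a z).trans (by gcongr)
  have z1 : ∫ z, inner ℝ a z ∂ρ = 0 := by
    have h : ∫ z, inner ℝ a z ∂ρ = ∫ z, inner ℝ a (-z) ∂ρ := by
      conv_lhs => rw [← hs]
      rw [integral_map (by fun_prop) (by fun_prop)]
    simp only [inner_neg_right, integral_neg] at h
    linarith
  have e : (fun z => ‖a + ε • z‖ ^ 2) =
      fun z => (‖a‖ ^ 2 + (2 * ε) * inner ℝ a z) + ε ^ 2 * ‖z‖ ^ 2 := by
    funext z
    rw [norm_add_sq_real, inner_smul_right, norm_smul, mul_pow, Real.norm_eq_abs, sq_abs]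
    ring
  rw [e]
  have j : Integrable (fun z => ‖a‖ ^ 2 + (2 * ε) * inner ℝ a z) ρ :=
    (integrable_const _).add (i1.const_mul _)
  refine ⟨j.add (i2.const_mul _), ?_⟩
  rw [integral_add j (i2.const_mul _),
    integral_add (integrable_const _) (i1.const_mul _), integral_const_mul, integral_const_mul, z1]
  simp

lemma aux_ball {N : ℕ} (hN : 1 ≤ N) (ε : ℝ) (hε : 0 < ε) :
    ∫ z in ball (0 : EuclideanSpace ℝ (Fin N)) ε, ‖z‖ ^ 2 =
      volume.real (ball (0 : EuclideanSpace ℝ (Fin N)) ε) * (ε ^ 2 * ((N : ℝ) / (N + 2))) := by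
  have : Nonempty (Fin N) := ⟨⟨0, hN⟩⟩
  have h := integral_fun_norm_addHaar (volume : Measure (EuclideanSpace ℝ (Fin N)))
    ((Set.Iio ε).indicator (fun r : ℝ => r ^ 2))
  rw [← integral_indicator measurableSet_ball]
  have e : (ball (0 : EuclideanSpace ℝ (Fin N)) ε).indicator (fun z => ‖z‖ ^ 2) =
      fun z => (Set.Iio ε).indicator (fun r : ℝ => r ^ 2) ‖z‖ := by
    funext z
    simp [Set.indicator]
  have e2 : ∫ y in Set.Ioi (0 : ℝ), y ^ (N - 1) • (Set.Iio ε).indicator (fun r : ℝ => r ^ 2) y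
      = ε ^ (N + 2) / (N + 2) := by
    have : (fun y : ℝ => y ^ (N - 1) • (Set.Iio ε).indicator (fun r : ℝ => r ^ 2) y) =
        (Set.Iio ε).indicator (fun r : ℝ => r ^ (N + 1)) := by
      funext y
      by_cases hy : y < ε
      · simp only [Set.indicator, Set.mem_Iio, hy, if_true, smul_eq_mul, ← pow_add]
        congr 1; omega
      · simp [Set.indicator, hy]
    rw [this, setIntegral_indicator measurableSet_Iio, Set.Ioi_inter_Iio,
      ← integral_Ioc_eq_integral_Ioo, ← intervalIntegral.integral_of_le hε.le, integral_pow]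
    push_cast
    simp
    ring
  rw [e, h, finrank_euclideanSpace_fin, e2]
  have hv : volume.real (ball (0 : EuclideanSpace ℝ (Fin N)) ε) =
      ε ^ N * volume.real (ball (0 : EuclideanSpace ℝ (Fin N)) 1) := by
    rw [measureReal_def, Measure.addHaar_ball_of_pos _ _ hε, finrank_euclideanSpace_fin,
      ENNReal.toReal_mul, ENNReal.toReal_ofReal (by positivity), measureReal_def]
  rw [hv]
  simp only [nsmul_eq_mul, smul_eq_mul]
  ring

lemma aux_avg {N : ℕ} (hN : 1 ≤ N) (ε : ℝ) (hε : 0 < ε) (x x₀ : EuclideanSpace ℝ (Fin N)) :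
    IntegrableOn (fun y => ‖y - x₀‖ ^ 2) (ball x ε) ∧
    ⨍ y in ball x ε, ‖y - x₀‖ ^ 2 = ‖x - x₀‖ ^ 2 + ε ^ 2 * ((N : ℝ) / (N + 2)) := by
  constructor
  · refine IntegrableOn.mono_set ?_ ball_subset_closedBall
    exact ContinuousOn.integrableOn_compact (isCompact_closedBall x ε) (by fun_prop)
  have tr : ∫ y in ball x ε, ‖y - x₀‖ ^ 2 =
      ∫ z in ball (0 : EuclideanSpace ℝ (Fin N)) ε, ‖(x - x₀) + (1 : ℝ) • z‖ ^ 2 := by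
    have := (measurePreserving_add_left (volume : Measure (EuclideanSpace ℝ (Fin N)))
      x).setIntegral_preimage_emb (measurableEmbedding_addLeft x) (fun y => ‖y - x₀‖ ^ 2) (ball x ε)
    rw [← this]
    have hb : (fun y => x + y) ⁻¹' ball x ε = ball 0 ε := by
      ext y; simp
    rw [hb]
    congr 1
    funext z
    congr 2
    rw [one_smul]; abel
  have hv : volume.real (ball x ε) = volume.real (ball (0 : EuclideanSpace ℝ (Fin N)) ε) := by
    rw [Measure.addHaar_real_ball_center]
  have hpos : 0 < volume.real (ball (0 : EuclideanSpace ℝ (Fin N)) ε) :=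
    ENNReal.toReal_pos (measure_ball_pos _ _ hε).ne' measure_ball_lt_top.ne
  have : IsFiniteMeasure (volume.restrict (ball (0 : EuclideanSpace ℝ (Fin N)) ε)) :=
    ⟨by simpa using measure_ball_lt_top⟩
  have hs : (volume.restrict (ball (0 : EuclideanSpace ℝ (Fin N)) ε)).map (fun z => -z) =
      volume.restrict (ball (0 : EuclideanSpace ℝ (Fin N)) ε) := by
    have := ((Measure.measurePreserving_neg
      (volume : Measure (EuclideanSpace ℝ (Fin N)))).restrict_preimage
      (measurableSet_ball (x := (0 : EuclideanSpace ℝ (Fin N))) (ε := ε))).map_eq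
    have hb : Neg.neg ⁻¹' ball (0 : EuclideanSpace ℝ (Fin N)) ε = ball 0 ε := by
      ext y; simp
    rwa [hb] at this
  have := (aux_sym _ hs ε (by
    filter_upwards [ae_restrict_mem measurableSet_ball] with z hz
    exact (mem_ball_zero_iff.1 hz).le) (x - x₀) 1).2
  rw [setAverage_eq, tr, this, aux_ball hN ε hε, hv, smul_eq_mul, measureReal_restrict_apply_univ]
  field_simp

/-- `|X_k − x₀|² − C k ε²` is a supermartingale for
`C = αΛ² + β N/(N+2)`. -/
theorem supermartingale_dist_sq (N : ℕ) (hN : 1 ≤ N) (Λ β ε : ℝ) (hΛ : 1 ≤ Λ) (hε : 0 < ε)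
    (hβ : β ∈ Set.Ioc (0 : ℝ) 1)
    (ν : EuclideanSpace ℝ (Fin N) → Measure (EuclideanSpace ℝ (Fin N)))
    (hprob : ∀ x, IsProbabilityMeasure (ν x))
    (hsupp : ∀ x, ν x (closedBall (0 : EuclideanSpace ℝ (Fin N)) Λ)ᶜ = 0)
    (hsymm : ∀ x (E : Set (EuclideanSpace ℝ (Fin N))), MeasurableSet E → ν x E = ν x (-E))
    (hmeas : ∀ w : EuclideanSpace ℝ (Fin N) → ℝ, Measurable w → (∃ M, ∀ y, |w y| ≤ M) →
      Measurable fun x => ∫ z, w (x + z) ∂ν x)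
    {Ωhat : Type} [m0 : MeasurableSpace Ωhat] (μ : Measure Ωhat) [IsProbabilityMeasure μ]
    (𝔉 : Filtration ℕ m0)
    (X : ℕ → Ωhat → EuclideanSpace ℝ (Fin N)) (hadapted : Adapted 𝔉 X)
    (x₀ : EuclideanSpace ℝ (Fin N)) (hX0 : ∀ᵐ ω ∂μ, X 0 ω = x₀)
    (hstep : ∀ (k : ℕ) (g : EuclideanSpace ℝ (Fin N) → ℝ), Measurable g →
      (∃ M, ∀ y, |g y| ≤ M) →
      (μ[(fun ω => g (X (k + 1) ω)) | 𝔉 k]) =ᵐ[μ]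
        fun ω => (1 - β) * ∫ z, g (X k ω + ε • z) ∂ν (X k ω) +
          β * ⨍ y in ball (X k ω) ε, g y) :
    Supermartingale
      (fun (k : ℕ) (ω : Ωhat) =>
        ‖X k ω - x₀‖ ^ 2 - ((1 - β) * Λ ^ 2 + β * ((N : ℝ) / (N + 2))) * k * ε ^ 2) 𝔉 μ := by
  obtain ⟨hβ0, hβ1⟩ := hβ
  have hmX : ∀ k, Measurable (X k) := fun k => (hadapted k).mono (𝔉.le k) le_rfl
  have hνb : ∀ x, ∀ᵐ z ∂ν x, ‖z‖ ≤ Λ := by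
    intro x
    have h : ∀ᵐ z ∂ν x, z ∈ closedBall (0 : EuclideanSpace ℝ (Fin N)) Λ := hsupp x
    filter_upwards [h] with z hz
    exact mem_closedBall_zero_iff.1 hz
  have hνs : ∀ x, (ν x).map (fun z => -z) = ν x := by
    intro x
    ext E hE
    rw [Measure.map_apply measurable_neg hE, hsymm x E hE]
    rfl
  -- boundedness
  have hbd : ∀ k : ℕ, ∀ᵐ ω ∂μ, ‖X k ω - x₀‖ ≤ k * (ε * Λ) := by
    intro k
    induction k with
    | zero =>
      filter_upwards [hX0] with ω h
      simp [h]
    | succ k ih =>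
      set R : ℝ := (k + 1 : ℕ) * (ε * Λ) with hR
      have hR' : R = k * (ε * Λ) + ε * Λ := by rw [hR]; push_cast; ring
      set g : EuclideanSpace ℝ (Fin N) → ℝ := (closedBall x₀ R)ᶜ.indicator (fun _ => 1) with hg
      have hgm : Measurable g := measurable_const.indicator measurableSet_closedBall.compl
      have hg0 : ∀ y, 0 ≤ g y := fun y => Set.indicator_nonneg (by simp) y
      have hg1 : ∀ y, |g y| ≤ 1 := by
        intro y
        rw [abs_of_nonneg (hg0 y)]
        exact Set.indicator_le_self' (by simp) y
      have hgz : ∀ y, ‖y - x₀‖ ≤ R → g y = 0 := by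
        intro y hy
        simp [hg, mem_closedBall, dist_eq_norm, hy]
      have hz : (μ[(fun ω => g (X (k + 1) ω)) | 𝔉 k]) =ᵐ[μ] 0 := by
        filter_upwards [hstep k g hgm ⟨1, hg1⟩, ih] with ω h1 h2
        rw [h1]
        have a1 : ∫ z, g (X k ω + ε • z) ∂ν (X k ω) = 0 := by
          apply integral_eq_zero_of_ae
          filter_upwards [hνb (X k ω)] with z hz
          apply hgz
          rw [hR', add_sub_right_comm]
          refine (norm_add_le _ _).trans (add_le_add h2 ?_)
          rw [norm_smul, Real.norm_of_nonneg hε.le]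
          gcongr
        have a2 : ⨍ y in ball (X k ω) ε, g y = 0 := by
          rw [setAverage_eq]
          have : ∫ y in ball (X k ω) ε, g y = 0 := by
            apply integral_eq_zero_of_ae
            filter_upwards [ae_restrict_mem measurableSet_ball] with y hy
            apply hgz
            rw [mem_ball, dist_eq_norm] at hy
            have : y - x₀ = (X k ω - x₀) + (y - X k ω) := by abel
            rw [hR', this]
            refine (norm_add_le _ _).trans (add_le_add h2 ?_)
            nlinarith
          rw [this, smul_zero]
        rw [a1, a2]
        simp
      have hint : Integrable (fun ω => g (X (k + 1) ω)) μ :=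
        Integrable.of_bound (hgm.comp (hmX (k + 1))).aestronglyMeasurable 1
          (Filter.Eventually.of_forall fun ω => hg1 _)
      have hi : ∫ ω, g (X (k + 1) ω) ∂μ = 0 := by
        rw [← integral_condExp (𝔉.le k), integral_congr_ae hz]
        simp
      rw [integral_eq_zero_iff_of_nonneg (fun ω => hg0 _) hint] at hi
      filter_upwards [hi] with ω h
      by_contra hc
      have : g (X (k + 1) ω) = 1 := by
        simp only [hg]
        rw [Set.indicator_of_mem]
        simpa [mem_closedBall, dist_eq_norm] using hc
      simp [this] at h
  have hintX : ∀ k, Integrable (fun ω => ‖X k ω - x₀‖ ^ 2) μ := by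
    intro k
    refine Integrable.of_bound (((hmX k).sub_const x₀).norm.pow_const 2).aestronglyMeasurable
      ((k * (ε * Λ)) ^ 2) ?_
    filter_upwards [hbd k] with ω h
    rw [Real.norm_of_nonneg (by positivity)]
    gcongr
  refine supermartingale_nat ?_ ?_ ?_
  · intro k
    have hm : Measurable (fun y : EuclideanSpace ℝ (Fin N) => ‖y - x₀‖ ^ 2 -
      ((1 - β) * Λ ^ 2 + β * ((N : ℝ) / (N + 2))) * k * ε ^ 2) := by fun_prop
    exact (hm.comp (hadapted k)).stronglyMeasurable
  · intro k
    exact (hintX k).sub (integrable_const _)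
  · intro k
    set C : ℝ := (1 - β) * Λ ^ 2 + β * ((N : ℝ) / (N + 2)) with hC
    set R : ℝ := (k + 1 : ℕ) * (ε * Λ) with hR
    set g : EuclideanSpace ℝ (Fin N) → ℝ := fun y => min (‖y - x₀‖ ^ 2) (R ^ 2) with hg
    have hgm : Measurable g := by fun_prop
    have hg0 : ∀ y, 0 ≤ g y := fun y => by positivity
    have hg1 : ∀ y, |g y| ≤ R ^ 2 := by
      intro y
      rw [abs_of_nonneg (hg0 y)]
      exact min_le_right _ _
    have hgle : ∀ y, g y ≤ ‖y - x₀‖ ^ 2 := fun y => min_le_left _ _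
    have e1 : (fun ω => ‖X (k + 1) ω - x₀‖ ^ 2) =ᵐ[μ] fun ω => g (X (k + 1) ω) := by
      filter_upwards [hbd (k + 1)] with ω h
      simp only [hg]
      rw [min_eq_left]
      gcongr
    have e2 : μ[(fun ω => ‖X (k + 1) ω - x₀‖ ^ 2 - C * (k + 1 : ℕ) * ε ^ 2) | 𝔉 k] =ᵐ[μ]
        μ[(fun ω => ‖X (k + 1) ω - x₀‖ ^ 2) | 𝔉 k] -
          μ[(fun _ => C * (k + 1 : ℕ) * ε ^ 2) | 𝔉 k] :=
      condExp_sub (hintX (k + 1)) (integrable_const _) _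
    rw [condExp_const (𝔉.le k)] at e2
    filter_upwards [e2, condExp_congr_ae (m := 𝔉 k) e1, hstep k g hgm ⟨_, hg1⟩] with ω h1 h2 h3
    rw [h1, Pi.sub_apply, h2, h3]
    have hp := hprob (X k ω)
    have s := aux_sym (ν (X k ω)) (hνs _) Λ (hνb _) (X k ω - x₀) ε
    have b1 : ∫ z, g (X k ω + ε • z) ∂ν (X k ω) ≤ ‖X k ω - x₀‖ ^ 2 + ε ^ 2 * Λ ^ 2 := by
      have c1 : ∫ z, g (X k ω + ε • z) ∂ν (X k ω) ≤
          ∫ z, ‖(X k ω - x₀) + ε • z‖ ^ 2 ∂ν (X k ω) := by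
        refine integral_mono_of_nonneg (Filter.Eventually.of_forall fun z => hg0 _) s.1
          (Filter.Eventually.of_forall fun z => ?_)
        have := hgle (X k ω + ε • z)
        rwa [add_sub_right_comm] at this
      have c2 : ∫ z, ‖z‖ ^ 2 ∂ν (X k ω) ≤ Λ ^ 2 := by
        have : ∫ z, ‖z‖ ^ 2 ∂ν (X k ω) ≤ ∫ z, Λ ^ 2 ∂ν (X k ω) := by
          refine integral_mono_of_nonneg (Filter.Eventually.of_forall fun z => by positivity)
            (integrable_const _) ?_
          filter_upwards [hνb (X k ω)] with z hz
          gcongr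
        simpa using this
      rw [s.2] at c1
      simp only [probReal_univ, one_mul] at c1
      have := mul_le_mul_of_nonneg_left c2 (sq_nonneg ε)
      linarith
    have b2 : ⨍ y in ball (X k ω) ε, g y ≤ ‖X k ω - x₀‖ ^ 2 + ε ^ 2 * ((N : ℝ) / (N + 2)) := by
      have t := aux_avg hN ε hε (X k ω) x₀
      rw [← t.2, setAverage_eq, setAverage_eq, smul_eq_mul, smul_eq_mul]
      refine mul_le_mul_of_nonneg_left ?_ (by positivity)
      exact integral_mono_of_nonneg (Filter.Eventually.of_forall fun z => hg0 _) t.1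
        (Filter.Eventually.of_forall fun z => hgle z)
    have d1 := mul_le_mul_of_nonneg_left b1 (sub_nonneg.2 hβ1)
    have d2 := mul_le_mul_of_nonneg_left b2 hβ0.le
    rw [hC]
    push_cast
    nlinarith
end
end

section
/- Let Ω ⊂ ℝ^N be a bounded domain, let x_0 ∈ Ω, and let τ = inf{k ≥ 0 : X_k ∉ Ω} be the exit time of the process from Ω. There exist constants C₁, C₂ > 0 depending only on N, Λ and β such that if ε < 1/Λ then C₁ dist(x_0, ∂Ω)² ≤ E[ε² τ] ≤ C₂ (diam Ω + 1)²; in particular τ is almost surely finite and has finite expectation. -/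
open MeasureTheory Metric
open scoped ENNReal

noncomputable section


namespace ExitAux

lemma tau_eq {S : ℕ → Prop} [DecidablePred S] :
    (⨅ (k : ℕ) (_ : ¬ S k), (k : ℝ≥0∞)) =
      ∑' j : ℕ, (if ∀ i ≤ j, S i then (1 : ℝ≥0∞) else 0) := by
  classical
  by_cases h : ∃ k, ¬ S k
  · have hn := Nat.find_spec h
    have hmin : ∀ i, i < Nat.find h → S i := fun i hi => by
      have := Nat.find_min h hi
      simpa using this
    set n := Nat.find h with hnd
    have h1 : (⨅ (k : ℕ) (_ : ¬ S k), (k : ℝ≥0∞)) = n := by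
      apply le_antisymm
      · exact iInf₂_le n hn
      · refine le_iInf₂ fun k hk => ?_
        have : n ≤ k := by
          by_contra hlt
          exact hk (hmin k (not_le.mp hlt))
        exact_mod_cast this
    have h2 : ∀ j, (∀ i ≤ j, S i) ↔ j ∈ Finset.range n := by
      intro j
      rw [Finset.mem_range]
      constructor
      · intro hj
        by_contra hlt
        exact hn (hj n (not_lt.mp hlt))
      · intro hj i hi
        exact hmin i (lt_of_le_of_lt hi hj)
    rw [h1, tsum_eq_sum (s := Finset.range n)]
    · rw [Finset.sum_congr rfl (g := fun _ => (1 : ℝ≥0∞))]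
      · simp
      · intro j hj
        rw [if_pos ((h2 j).2 hj)]
    · intro j hj
      rw [if_neg (fun hh => hj ((h2 j).1 hh))]
  · push Not at h
    simp [h]

variable {N : ℕ}

local notation "E" => EuclideanSpace ℝ (Fin N)

lemma step (m : Measure E) [IsFiniteMeasure m]
    (hsymm : ∀ S : Set E, MeasurableSet S → m S = m (-S))
    (r : ℝ) (hr : ∀ᵐ z ∂m, ‖z‖ ≤ r) (a : E) (R : ℝ) (hR : ‖a‖ + r ≤ R) :
    ∫ z, min (‖a + z‖ ^ 2) (R ^ 2) ∂m = m.real Set.univ * ‖a‖ ^ 2 + ∫ z, ‖z‖ ^ 2 ∂m := by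
  have hmap : m.map Neg.neg = m := by
    ext S hS
    rw [Measure.map_apply measurable_neg hS, hsymm S hS]
    rfl
  have h1 : ∫ z, min (‖a + z‖ ^ 2) (R ^ 2) ∂m
      = ∫ z, (‖a‖ ^ 2 + 2 * inner ℝ a z + ‖z‖ ^ 2) ∂m := by
    apply integral_congr_ae
    filter_upwards [hr] with z hz
    rw [min_eq_left, norm_add_sq_real]
    have h3 := norm_add_le a z
    have h4 := norm_nonneg (a + z)
    gcongr
    linarith
  have hi1 : Integrable (fun z : E => 2 * inner ℝ a z) m := by
    refine Integrable.of_bound (by fun_prop) (2 * (‖a‖ * r)) ?_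
    filter_upwards [hr] with z hz
    rw [norm_mul]
    have := norm_inner_le_norm (𝕜 := ℝ) a z
    have h5 : ‖a‖ * ‖z‖ ≤ ‖a‖ * r := by gcongr
    simp only [Real.norm_ofNat]
    linarith
  have hi2 : Integrable (fun z : E => ‖z‖ ^ 2) m := by
    refine Integrable.of_bound (by fun_prop) (r ^ 2) ?_
    filter_upwards [hr] with z hz
    rw [norm_pow, norm_norm]
    gcongr
  have h0 : ∫ z, 2 * inner ℝ a z ∂m = 0 := by
    have h6 : ∫ z, 2 * inner ℝ a z ∂(m.map Neg.neg) = ∫ z, 2 * inner ℝ a (-z) ∂m :=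
      integral_map (by fun_prop) (by fun_prop)
    rw [hmap] at h6
    simp only [inner_neg_right, mul_neg, integral_neg] at h6
    linarith
  rw [h1, integral_add (f := fun z : E => ‖a‖ ^ 2 + 2 * inner ℝ a z) ((integrable_const _).add hi1) hi2,
    integral_add (integrable_const _) hi1, h0]
  simp

lemma nu_step (m : Measure E) [IsProbabilityMeasure m]
    (hsymm : ∀ S : Set E, MeasurableSet S → m S = m (-S))
    (Λ ε : ℝ) (hε : 0 < ε) (hs : m (closedBall (0 : E) Λ)ᶜ = 0) (x x₀ : E) (R : ℝ)
    (hR : ‖x - x₀‖ + ε * Λ ≤ R) :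
    ‖x - x₀‖ ^ 2 ≤ ∫ z, min (‖x + ε • z - x₀‖ ^ 2) (R ^ 2) ∂m ∧
    ∫ z, min (‖x + ε • z - x₀‖ ^ 2) (R ^ 2) ∂m ≤ ‖x - x₀‖ ^ 2 + ε ^ 2 * Λ ^ 2 := by
  have hmeas : Measurable (fun z : E => ε • z) := by fun_prop
  have hb : ∀ᵐ z ∂m, ‖z‖ ≤ Λ := by
    have : ∀ᵐ z ∂m, z ∈ closedBall (0 : E) Λ := by
      rw [ae_iff]; exact hs
    filter_upwards [this] with z hz
    simpa using hz
  have hb' : ∀ᵐ z ∂(m.map (fun z : E => ε • z)), ‖z‖ ≤ ε * Λ := by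
    rw [ae_map_iff hmeas.aemeasurable (measurableSet_le (by fun_prop) (by fun_prop))]
    filter_upwards [hb] with z hz
    rw [norm_smul, Real.norm_of_nonneg hε.le]
    gcongr
  have : IsProbabilityMeasure (m.map (fun z : E => ε • z)) :=
    Measure.isProbabilityMeasure_map hmeas.aemeasurable
  have hst := step (m.map (fun z : E => ε • z)) (fun S hS => by
    rw [Measure.map_apply hmeas hS, Measure.map_apply hmeas hS.neg, hsymm _ (hmeas hS)]
    congr 1
    ext z
    simp) (ε * Λ) hb' (x - x₀) R hR
  rw [integral_map (by fun_prop) (by fun_prop)] at hst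
  have heq : ∀ z : E, x + ε • z - x₀ = x - x₀ + ε • z := fun z => by abel
  simp only [heq]
  rw [hst]
  simp only [probReal_univ, one_mul]
  have h1 : 0 ≤ ∫ z, ‖z‖ ^ 2 ∂(m.map (fun z : E => ε • z)) :=
    integral_nonneg fun z => by positivity
  have h2 : ∫ z, ‖z‖ ^ 2 ∂(m.map (fun z : E => ε • z)) ≤ ∫ z, ε ^ 2 * Λ ^ 2 ∂(m.map (fun z : E => ε • z)) := by
    apply integral_mono_of_nonneg (Filter.Eventually.of_forall fun z => by positivity)
      (integrable_const _)
    filter_upwards [hb'] with z hz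
    rw [← mul_pow]
    gcongr
  simp at h2
  constructor <;> linarith

lemma ball_second_moment (hN : 1 ≤ N) (ε : ℝ) (hε : 0 < ε) :
    ε ^ 2 / 8 * volume.real (ball (0 : E) ε) ≤ ∫ z in ball (0 : E) ε, ‖z‖ ^ 2 ∧
    ∫ z in ball (0 : E) ε, ‖z‖ ^ 2 ≤ ε ^ 2 * volume.real (ball (0 : E) ε) := by
  have hint : IntegrableOn (fun z : E => ‖z‖ ^ 2) (ball 0 ε) := by
    refine ((by fun_prop : Continuous fun z : E => ‖z‖ ^ 2).locallyIntegrable.integrableOn_isCompact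
      (isCompact_closedBall (0 : E) ε)).mono_set ball_subset_closedBall
  have hfin : ∀ r, volume (ball (0 : E) r) ≠ ∞ := fun r => measure_ball_lt_top.ne
  constructor
  · have hsub : ball (0 : E) (ε / 2) ⊆ ball (0 : E) ε := ball_subset_ball (by linarith)
    have hvol : volume.real (ball (0 : E) (ε / 2)) ≤ 1 / 2 * volume.real (ball (0 : E) ε) := by
      have h := Measure.addHaar_ball_mul_of_pos (volume : Measure E) (0 : E)
        (r := 1 / 2) (by norm_num) ε
      rw [show (1 / 2 : ℝ) * ε = ε / 2 by ring] at h
      rw [Measure.real, Measure.real, h, ENNReal.toReal_mul,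
        ENNReal.toReal_ofReal (by positivity)]
      gcongr
      rw [finrank_euclideanSpace_fin]
      calc (1 / 2 : ℝ) ^ N ≤ (1 / 2) ^ 1 := pow_le_pow_of_le_one (by norm_num) (by norm_num) hN
        _ = 1 / 2 := by norm_num
    have hd : volume.real (ball (0 : E) ε \ ball (0 : E) (ε / 2)) =
        volume.real (ball (0 : E) ε) - volume.real (ball (0 : E) (ε / 2)) :=
      measureReal_sdiff hsub measurableSet_ball
    have h1 : ∫ z in ball (0 : E) ε \ ball (0 : E) (ε / 2), ‖z‖ ^ 2 ≤
        ∫ z in ball (0 : E) ε, ‖z‖ ^ 2 :=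
      setIntegral_mono_set hint (Filter.Eventually.of_forall fun z => by positivity)
        (Set.sdiff_subset.eventuallyLE)
    have h2 : (ε / 2) ^ 2 * volume.real (ball (0 : E) ε \ ball (0 : E) (ε / 2)) ≤
        ∫ z in ball (0 : E) ε \ ball (0 : E) (ε / 2), ‖z‖ ^ 2 := by
      apply setIntegral_ge_of_const_le_real (measurableSet_ball.diff measurableSet_ball)
      · exact ((measure_mono Set.sdiff_subset).trans_lt measure_ball_lt_top).ne
      · intro z hz
        have : ε / 2 ≤ ‖z‖ := by simpa using hz.2
        gcongr
      · exact hint.mono_set Set.sdiff_subset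
    rw [hd] at h2
    nlinarith [sq_nonneg ε]
  · have : ∫ z in ball (0 : E) ε, ‖z‖ ^ 2 ≤ ∫ z in ball (0 : E) ε, ε ^ 2 := by
      apply setIntegral_mono_on hint (integrableOn_const (hfin ε)) measurableSet_ball
      intro z hz
      have : ‖z‖ < ε := by simpa using hz
      gcongr
    simpa [mul_comm] using this

lemma ball_step (hN : 1 ≤ N) (ε : ℝ) (hε : 0 < ε) (x x₀ : E) (R : ℝ)
    (hR : ‖x - x₀‖ + ε ≤ R) :
    ‖x - x₀‖ ^ 2 + ε ^ 2 / 8 ≤ ⨍ y in ball x ε, min (‖y - x₀‖ ^ 2) (R ^ 2) ∧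
    ⨍ y in ball x ε, min (‖y - x₀‖ ^ 2) (R ^ 2) ≤ ‖x - x₀‖ ^ 2 + ε ^ 2 := by
  have hpos : 0 < volume.real (ball (0 : E) ε) :=
    ENNReal.toReal_pos (measure_ball_pos _ _ hε).ne' measure_ball_lt_top.ne
  have hvol : volume.real (ball x ε) = volume.real (ball (0 : E) ε) := by
    rw [Measure.real, Measure.real, Measure.addHaar_ball_center]
  have htr : ∫ y in ball x ε, min (‖y - x₀‖ ^ 2) (R ^ 2) =
      ∫ z in ball (0 : E) ε, min (‖(x - x₀) + z‖ ^ 2) (R ^ 2) := by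
    have hmp : MeasurePreserving (fun z : E => x + z) volume volume :=
      measurePreserving_add_left volume x
    have := hmp.setIntegral_preimage_emb (measurableEmbedding_addLeft x)
      (fun y => min (‖y - x₀‖ ^ 2) (R ^ 2)) (ball x ε)
    rw [← this]
    congr 1
    · congr 1
      ext z
      simp
    · ext z
      rw [show x + z - x₀ = x - x₀ + z by abel]
  have : IsFiniteMeasure (volume.restrict (ball (0 : E) ε)) :=
    ⟨by rw [Measure.restrict_apply_univ]; exact measure_ball_lt_top⟩
  have hst := step (volume.restrict (ball (0 : E) ε)) (fun S hS => by
    rw [Measure.restrict_apply hS, Measure.restrict_apply hS.neg, ← Measure.measure_neg]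
    congr 1
    ext z
    simp) ε (by
      filter_upwards [ae_restrict_mem measurableSet_ball] with z hz
      have : ‖z‖ < ε := by simpa using hz
      exact this.le) (x - x₀) R hR
  rw [setAverage_eq, htr, hst, hvol, smul_eq_mul]
  have h := ball_second_moment hN ε hε
  rw [measureReal_restrict_apply_univ]
  set V := volume.real (ball (0 : E) ε)
  constructor
  · rw [le_inv_mul_iff₀ hpos]
    linarith [h.1]
  · rw [inv_mul_le_iff₀ hpos]
    linarith [h.2]

lemma dist_le_of_notMem {D : Set E} {x₀ y : E} (hDo : IsOpen D) (hx : x₀ ∈ D) (hy : y ∉ D) :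
    infDist x₀ (frontier D) ≤ ‖y - x₀‖ := by
  have hpc : IsPreconnected (segment ℝ x₀ y) := (convex_segment x₀ y).isPreconnected
  obtain ⟨z, hz, hzf⟩ : (segment ℝ x₀ y ∩ frontier D).Nonempty := by
    by_contra hne
    rw [Set.not_nonempty_iff_eq_empty, Set.eq_empty_iff_forall_notMem] at hne
    have hcase : ∀ z ∈ segment ℝ x₀ y, z ∈ closure D → z ∈ D := by
      intro z hz hzc
      by_contra hzD
      exact hne z ⟨hz, by rw [hDo.frontier_eq]; exact ⟨hzc, hzD⟩⟩
    obtain ⟨w, -, hw1, hw2⟩ := hpc D (closure D)ᶜ hDo isClosed_closure.isOpen_compl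
      (fun z hz => by
        by_cases hzc : z ∈ closure D
        · exact Or.inl (hcase z hz hzc)
        · exact Or.inr hzc)
      ⟨x₀, left_mem_segment _ _ _, hx⟩
      ⟨y, right_mem_segment _ _ _, fun hyc => hy (hcase y (right_mem_segment _ _ _) hyc)⟩
    exact hw2 (subset_closure hw1)
  refine (infDist_le_dist_of_mem hzf).trans ?_
  obtain ⟨t, ht, rfl⟩ := (segment_eq_image_lineMap ℝ x₀ y ▸ hz : z ∈ AffineMap.lineMap x₀ y '' Set.Icc (0:ℝ) 1)
  rw [dist_left_lineMap, Real.norm_of_nonneg ht.1, dist_eq_norm, norm_sub_rev x₀ y]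
  exact mul_le_of_le_one_left (norm_nonneg _) ht.2

lemma infDist_le_diam {D : Set E} {x₀ : E} (hx : x₀ ∈ D) (hD : Bornology.IsBounded D) :
    infDist x₀ (frontier D) ≤ diam D := by
  rcases (frontier D).eq_empty_or_nonempty with h | ⟨z, hz⟩
  · rw [h, infDist_empty]; exact diam_nonneg
  · refine (infDist_le_dist_of_mem hz).trans ?_
    rw [← diam_closure]
    exact dist_le_diam_of_mem hD.closure (subset_closure hx) (frontier_subset_closure hz)


lemma process {Ω : Type} [MeasurableSpace Ω] (μ : Measure Ω) [IsProbabilityMeasure μ]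
    (G : ℕ → Ω → ℝ) (A : ℕ → Set Ω) (hA : ∀ k, MeasurableSet (A k))
    (hanti : ∀ k, A (k + 1) ⊆ A k) (hG : ∀ k, Measurable (G k)) (M lo hi d : ℝ)
    (hG0 : ∀ k ω, 0 ≤ G k ω) (hGM : ∀ k ω, G k ω ≤ M)
    (hlo : ∀ k, lo * μ.real (A k) ≤ ∫ ω in A k, (G (k + 1) ω - G k ω) ∂μ)
    (hhi : ∀ k, ∫ ω in A k, (G (k + 1) ω - G k ω) ∂μ ≤ hi * μ.real (A k))
    (hinit : ∀ᵐ ω ∂μ, G 0 ω = 0 ∧ ω ∈ A 0)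
    (hd : ∀ k ω, ω ∈ A k → ω ∉ A (k + 1) → d ≤ G (k + 1) ω) (k : ℕ) :
    lo * ∑ j ∈ Finset.range k, μ.real (A j) ≤ M ∧
    d * (1 - μ.real (A k)) ≤ hi * ∑ j ∈ Finset.range k, μ.real (A j) := by
  classical
  let Y : ℕ → Ω → ℝ := fun k ω =>
    G 0 ω + ∑ j ∈ Finset.range k, (A j).indicator (fun ω => G (j + 1) ω - G j ω) ω
  have hYs : ∀ k ω, Y (k + 1) ω = Y k ω + (A k).indicator (fun ω => G (k + 1) ω - G k ω) ω := by
    intro k ω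
    simp only [Y, Finset.sum_range_succ]
    ring
  have hinv : ∀ k ω, (ω ∈ A k → Y k ω = G k ω) ∧ (0 ≤ Y k ω ∧ Y k ω ≤ M) ∧
      (ω ∈ A 0 → ω ∉ A k → d ≤ Y k ω) := by
    intro k ω
    induction k with
    | zero => exact ⟨fun _ => by simp [Y], ⟨by simpa [Y] using hG0 0 ω, by simpa [Y] using hGM 0 ω⟩,
        fun h h' => absurd h h'⟩
    | succ k ih =>
      by_cases hk : ω ∈ A k
      · have : Y (k + 1) ω = G (k + 1) ω := by
          rw [hYs, ih.1 hk, Set.indicator_of_mem hk]; ring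
        rw [this]
        exact ⟨fun _ => rfl, ⟨hG0 _ _, hGM _ _⟩, fun _ h => hd k ω hk h⟩
      · have : Y (k + 1) ω = Y k ω := by
          rw [hYs, Set.indicator_of_notMem hk]; ring
        rw [this]
        exact ⟨fun h => absurd (hanti k h) hk, ih.2.1, fun h _ => ih.2.2 h hk⟩
  have hGi : ∀ k, Integrable (G k) μ := fun k =>
    Integrable.of_bound (hG k).aestronglyMeasurable M (Filter.Eventually.of_forall fun ω => by
      rw [Real.norm_of_nonneg (hG0 k ω)]; exact hGM k ω)
  have hIi : ∀ j, Integrable ((A j).indicator (fun ω => G (j + 1) ω - G j ω)) μ := fun j =>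
    ((hGi (j + 1)).sub (hGi j)).indicator (hA j)
  have hYint : ∀ k, Integrable (Y k) μ := fun k =>
    (hGi 0).add (integrable_finsetSum _ fun j _ => hIi j)
  have hEY : ∫ ω, Y k ω ∂μ =
      ∑ j ∈ Finset.range k, ∫ ω in A j, (G (j + 1) ω - G j ω) ∂μ := by
    simp only [Y]
    rw [integral_add (hGi 0) (integrable_finsetSum _ fun j _ => hIi j),
      integral_finsetSum _ (fun j _ => hIi j),
      integral_congr_ae (hinit.mono fun ω h => h.1), integral_zero, zero_add]
    exact Finset.sum_congr rfl fun j _ => integral_indicator (hA j)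
  constructor
  · calc lo * ∑ j ∈ Finset.range k, μ.real (A j)
        ≤ ∫ ω, Y k ω ∂μ := by
          rw [hEY, Finset.mul_sum]
          exact Finset.sum_le_sum fun j _ => hlo j
      _ ≤ ∫ ω, M ∂μ := integral_mono (hYint k) (integrable_const _) fun ω => (hinv k ω).2.1.2
      _ = M := by simp
  · calc d * (1 - μ.real (A k)) = ∫ ω, (A k)ᶜ.indicator (fun _ => d) ω ∂μ := by
          rw [integral_indicator (hA k).compl, setIntegral_const, probReal_compl_eq_one_sub (hA k),
            smul_eq_mul, mul_comm]
      _ ≤ ∫ ω, Y k ω ∂μ := by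
          apply integral_mono_ae ((integrable_const d).indicator (hA k).compl) (hYint k)
          filter_upwards [hinit] with ω hω
          by_cases hk : ω ∈ A k
          · rw [Set.indicator_of_notMem (by simpa using hk)]
            exact (hinv k ω).2.1.1
          · rw [Set.indicator_of_mem (by simpa using hk)]
            exact (hinv k ω).2.2 hω.2 hk
      _ ≤ _ := by
          rw [hEY, Finset.mul_sum]
          exact Finset.sum_le_sum fun j _ => hhi j

end ExitAux

/-- the expected exit time from a bounded domain satisfies
`C₁ dist(x₀,∂Ω)² ≤ E[ε²τ] ≤ C₂ (diam Ω + 1)²` for `ε < 1/Λ`; in particular the exit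
time is a.s. finite and has finite expectation. -/
theorem exit_time_bounds (N : ℕ) (hN : 1 ≤ N) (Λ β : ℝ) (hΛ : 1 ≤ Λ)
    (hβ : β ∈ Set.Ioc (0 : ℝ) 1) :
    ∃ C₁ C₂ : ℝ, 0 < C₁ ∧ 0 < C₂ ∧
      ∀ ε : ℝ, 0 < ε → ε < 1 / Λ →
      ∀ (ν : EuclideanSpace ℝ (Fin N) → Measure (EuclideanSpace ℝ (Fin N))),
        (∀ x, IsProbabilityMeasure (ν x)) →
        (∀ x, ν x (closedBall (0 : EuclideanSpace ℝ (Fin N)) Λ)ᶜ = 0) →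
        (∀ x (E : Set (EuclideanSpace ℝ (Fin N))), MeasurableSet E → ν x E = ν x (-E)) →
        (∀ w : EuclideanSpace ℝ (Fin N) → ℝ, Measurable w → (∃ M, ∀ y, |w y| ≤ M) →
          Measurable fun x => ∫ z, w (x + z) ∂ν x) →
      ∀ (D : Set (EuclideanSpace ℝ (Fin N))), IsOpen D → IsConnected D →
        Bornology.IsBounded D →
      ∀ x₀ ∈ D,
      ∀ (Ωhat : Type) [m0 : MeasurableSpace Ωhat] (μ : Measure Ωhat),
        IsProbabilityMeasure μ →
      ∀ (𝔉 : Filtration ℕ m0) (X : ℕ → Ωhat → EuclideanSpace ℝ (Fin N)),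
        Adapted 𝔉 X → (∀ᵐ ω ∂μ, X 0 ω = x₀) →
        (∀ (k : ℕ) (g : EuclideanSpace ℝ (Fin N) → ℝ), Measurable g →
          (∃ M, ∀ y, |g y| ≤ M) →
          (μ[(fun ω => g (X (k + 1) ω)) | 𝔉 k]) =ᵐ[μ]
            fun ω => (1 - β) * ∫ z, g (X k ω + ε • z) ∂ν (X k ω) +
              β * ⨍ y in ball (X k ω) ε, g y) →
        (ENNReal.ofReal (C₁ * infDist x₀ (frontier D) ^ 2) ≤
            ENNReal.ofReal (ε ^ 2) * ∫⁻ ω, (⨅ (k : ℕ) (_ : X k ω ∉ D), (k : ℝ≥0∞)) ∂μ) ∧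
          (ENNReal.ofReal (ε ^ 2) * ∫⁻ ω, (⨅ (k : ℕ) (_ : X k ω ∉ D), (k : ℝ≥0∞)) ∂μ ≤
            ENNReal.ofReal (C₂ * (diam D + 1) ^ 2)) ∧
          (∀ᵐ ω ∂μ, (⨅ (k : ℕ) (_ : X k ω ∉ D), (k : ℝ≥0∞)) < ⊤) := by
  classical
  obtain ⟨hβ0, hβ1⟩ := hβ
  have hΛ0 : 0 < Λ := by linarith
  refine ⟨1 / Λ ^ 2, 8 / β, by positivity, by positivity, ?_⟩
  intro ε hε hεΛ ν hν hsupp hsymm _ D hDo hDc hDb x₀ hx₀ Ωhat m0 μ hμ 𝔉 X hX hX0 hstep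
  have hεΛ1 : ε * Λ ≤ 1 := ((lt_div_iff₀ hΛ0).1 hεΛ).le
  have hε1 : ε ≤ 1 := by nlinarith
  set R : ℝ := diam D + 1 with hR
  have hdd : 0 ≤ diam D := diam_nonneg
  have hR0 : 0 < R := by linarith
  set d : ℝ := infDist x₀ (frontier D) with hdef
  have hd0 : 0 ≤ d := infDist_nonneg
  have hdR : d ≤ R := by
    have := ExitAux.infDist_le_diam hx₀ hDb
    linarith
  let g : EuclideanSpace ℝ (Fin N) → ℝ := fun y => min (‖y - x₀‖ ^ 2) (R ^ 2)
  have hgm : Measurable g := by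
    have : Continuous g := by fun_prop
    exact this.measurable
  have hg0 : ∀ y, 0 ≤ g y := fun y => le_min (by positivity) (by positivity)
  have hgR : ∀ y, g y ≤ R ^ 2 := fun y => min_le_right _ _
  have hgb : ∃ M, ∀ y, |g y| ≤ M := ⟨R ^ 2, fun y => by rw [abs_of_nonneg (hg0 y)]; exact hgR y⟩
  have hXm : ∀ k, Measurable (X k) := fun k => (hX k).mono (𝔉.le k) le_rfl
  let A : ℕ → Set Ωhat := fun k => {ω | ∀ i ≤ k, X i ω ∈ D}
  have hAm : ∀ k, MeasurableSet[𝔉 k] (A k) := by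
    intro k
    have : A k = ⋂ i ∈ Set.Iic k, X i ⁻¹' D := by
      ext ω; simp [A]
    rw [this]
    refine MeasurableSet.biInter (Set.to_countable _) fun i hi => ?_
    exact ((hX i).mono (𝔉.mono hi) le_rfl) hDo.measurableSet
  have hAm0 : ∀ k, MeasurableSet (A k) := fun k => 𝔉.le k _ (hAm k)
  have hgi : ∀ k, Integrable (fun ω => g (X k ω)) μ := fun k =>
    Integrable.of_bound (hgm.comp (hXm k)).aestronglyMeasurable (R ^ 2)
      (Filter.Eventually.of_forall fun ω => by
        rw [Real.norm_of_nonneg (hg0 _)]; exact hgR _)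
  have hone : ∀ x ∈ D, g x + β * ε ^ 2 / 8 ≤
      (1 - β) * ∫ z, g (x + ε • z) ∂ν x + β * ⨍ y in ball x ε, g y ∧
      (1 - β) * ∫ z, g (x + ε • z) ∂ν x + β * ⨍ y in ball x ε, g y ≤ g x + ε ^ 2 * Λ ^ 2 := by
    intro x hx
    have hxd : ‖x - x₀‖ ≤ diam D := by
      rw [← dist_eq_norm]; exact dist_le_diam_of_mem hDb hx hx₀
    have := hν x
    have h1 := ExitAux.nu_step (ν x) (hsymm x) Λ ε hε (hsupp x) x x₀ R (by linarith)
    have h2 := ExitAux.ball_step hN ε hε x x₀ R (by linarith)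
    have hgx : g x = ‖x - x₀‖ ^ 2 := min_eq_left (by gcongr; linarith)
    rw [hgx]
    change _ ≤ (1 - β) * (∫ z, min (‖x + ε • z - x₀‖ ^ 2) (R ^ 2) ∂ν x) +
      β * (⨍ y in ball x ε, min (‖y - x₀‖ ^ 2) (R ^ 2)) ∧
      (1 - β) * (∫ z, min (‖x + ε • z - x₀‖ ^ 2) (R ^ 2) ∂ν x) +
      β * (⨍ y in ball x ε, min (‖y - x₀‖ ^ 2) (R ^ 2)) ≤ _
    generalize (∫ z, min (‖x + ε • z - x₀‖ ^ 2) (R ^ 2) ∂ν x) = I at *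
    generalize (⨍ y in ball x ε, min (‖y - x₀‖ ^ 2) (R ^ 2)) = J at *
    have hb : 0 ≤ 1 - β := by linarith
    have e1 := mul_le_mul_of_nonneg_left h1.1 hb
    have e2 := mul_le_mul_of_nonneg_left h1.2 hb
    have e3 := mul_le_mul_of_nonneg_left h2.1 hβ0.le
    have e4 := mul_le_mul_of_nonneg_left h2.2 hβ0.le
    have e5 : β * ε ^ 2 ≤ β * (ε ^ 2 * Λ ^ 2) := by
      have : (1 : ℝ) ≤ Λ ^ 2 := one_le_pow₀ hΛ
      have : ε ^ 2 ≤ ε ^ 2 * Λ ^ 2 := le_mul_of_one_le_right (by positivity) this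
      gcongr
    constructor <;> linarith
  have hkey : ∀ k, β * ε ^ 2 / 8 * μ.real (A k) ≤
        ∫ ω in A k, (g (X (k + 1) ω) - g (X k ω)) ∂μ ∧
      ∫ ω in A k, (g (X (k + 1) ω) - g (X k ω)) ∂μ ≤ ε ^ 2 * Λ ^ 2 * μ.real (A k) := by
    intro k
    have hc := hstep k g hgm hgb
    have h1 : ∫ ω in A k, (g (X (k + 1) ω) - g (X k ω)) ∂μ =
        ∫ ω in A k, ((μ[(fun ω => g (X (k + 1) ω)) | 𝔉 k]) ω - g (X k ω)) ∂μ := by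
      rw [integral_sub (hgi _).integrableOn (hgi _).integrableOn,
        integral_sub integrable_condExp.integrableOn (hgi _).integrableOn,
        setIntegral_condExp (𝔉.le k) (hgi _) (hAm k)]
    have hint : IntegrableOn (fun ω => (μ[(fun ω => g (X (k + 1) ω)) | 𝔉 k]) ω - g (X k ω))
        (A k) μ := (integrable_condExp.sub (hgi k)).integrableOn
    have hbd : ∀ᵐ ω ∂(μ.restrict (A k)),
        β * ε ^ 2 / 8 ≤ (μ[(fun ω => g (X (k + 1) ω)) | 𝔉 k]) ω - g (X k ω) ∧
        (μ[(fun ω => g (X (k + 1) ω)) | 𝔉 k]) ω - g (X k ω) ≤ ε ^ 2 * Λ ^ 2 := by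
      filter_upwards [ae_restrict_of_ae hc, ae_restrict_mem (hAm0 k)] with ω hω hωA
      have := hone (X k ω) (hωA k le_rfl)
      rw [hω]
      constructor <;> linarith
    rw [h1]
    constructor
    · have := integral_mono_ae (integrable_const (β * ε ^ 2 / 8)) hint (hbd.mono fun ω h => h.1)
      simpa [mul_comm] using this
    · have := integral_mono_ae hint (integrable_const (ε ^ 2 * Λ ^ 2)) (hbd.mono fun ω h => h.2)
      simpa [mul_comm] using this
  have hproc := ExitAux.process μ (fun k ω => g (X k ω)) A hAm0
    (fun k ω h i hi => h i (hi.trans (Nat.le_succ k))) (fun k => hgm.comp (hXm k))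
    (R ^ 2) (β * ε ^ 2 / 8) (ε ^ 2 * Λ ^ 2) (d ^ 2) (fun k ω => hg0 _) (fun k ω => hgR _)
    (fun k => (hkey k).1) (fun k => (hkey k).2)
    (by
      filter_upwards [hX0] with ω hω
      refine ⟨?_, ?_⟩
      · simp only [g, hω, sub_self, norm_zero]
        rw [min_eq_left] <;> simp [sq_nonneg]
      · intro i hi
        rw [Nat.le_zero.1 hi, hω]; exact hx₀)
    (by
      intro k ω hk hk1
      have hnot : X (k + 1) ω ∉ D := by
        intro hin
        apply hk1
        intro i hi
        rcases Nat.le_succ_iff.1 hi with h | h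
        · exact hk i h
        · rw [h]; exact hin
      have := ExitAux.dist_le_of_notMem hDo hx₀ hnot
      exact le_min (by gcongr) (by gcongr))
  have hc0 : 0 < β * ε ^ 2 / 8 := by positivity
  have hbound : ∀ k, ∑ j ∈ Finset.range k, μ.real (A j) ≤ R ^ 2 / (β * ε ^ 2 / 8) := by
    intro k
    rw [le_div_iff₀ hc0, mul_comm]
    exact (hproc k).1
  have hsum : Summable fun j => μ.real (A j) :=
    summable_of_sum_range_le (fun _ => measureReal_nonneg) hbound
  have hT1 : ∑' j, μ.real (A j) ≤ R ^ 2 / (β * ε ^ 2 / 8) :=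
    hsum.tsum_le_of_sum_range_le hbound
  have hT2 : d ^ 2 ≤ ε ^ 2 * Λ ^ 2 * ∑' j, μ.real (A j) := by
    have hl : Filter.Tendsto (fun k => d ^ 2 * (1 - μ.real (A k))) Filter.atTop
        (nhds (d ^ 2 * (1 - 0))) :=
      (tendsto_const_nhds.sub hsum.tendsto_atTop_zero).const_mul _
    have hr := (hsum.hasSum.tendsto_sum_nat).const_mul (ε ^ 2 * Λ ^ 2)
    have := le_of_tendsto_of_tendsto' hl hr fun k => (hproc k).2
    simpa using this
  have hτ : ∀ ω, (⨅ (k : ℕ) (_ : X k ω ∉ D), (k : ℝ≥0∞)) =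
      ∑' j, (A j).indicator (fun _ => (1 : ℝ≥0∞)) ω := by
    intro ω
    rw [ExitAux.tau_eq (S := fun k => X k ω ∈ D)]
    refine tsum_congr fun j => ?_
    simp only [Set.indicator_apply, A, Set.mem_setOf_eq]
  have hτm : Measurable fun ω => (⨅ (k : ℕ) (_ : X k ω ∉ D), (k : ℝ≥0∞)) := by
    simp_rw [hτ]
    exact Measurable.tsum fun j => measurable_const.indicator (hAm0 j)
  have hE : ∫⁻ ω, (⨅ (k : ℕ) (_ : X k ω ∉ D), (k : ℝ≥0∞)) ∂μ =
      ENNReal.ofReal (∑' j, μ.real (A j)) := by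
    simp_rw [hτ]
    rw [lintegral_tsum fun j => (measurable_const.indicator (hAm0 j)).aemeasurable,
      ENNReal.ofReal_tsum_of_nonneg (fun _ => measureReal_nonneg) hsum]
    congr 1
    ext j
    rw [lintegral_indicator (hAm0 j), setLIntegral_const, one_mul, ofReal_measureReal]
  refine ⟨?_, ?_, ?_⟩
  · rw [hE, ← ENNReal.ofReal_mul (by positivity)]
    apply ENNReal.ofReal_le_ofReal
    rw [div_mul_eq_mul_div, one_mul, div_le_iff₀ (by positivity)]
    linarith
  · rw [hE, ← ENNReal.ofReal_mul (by positivity)]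
    apply ENNReal.ofReal_le_ofReal
    calc ε ^ 2 * ∑' j, μ.real (A j) ≤ ε ^ 2 * (R ^ 2 / (β * ε ^ 2 / 8)) := by gcongr
      _ = 8 / β * R ^ 2 := by field_simp
  · exact ae_lt_top hτm (by rw [hE]; exact ENNReal.ofReal_ne_top)
end
end

section
/- Let Ω ⊂ ℝ^N be a bounded domain, g : ℝ^N ∖ Ω → ℝ a bounded Borel measurable function and f : Ω → ℝ a bounded Borel measurable function. There exists a constant C, depending only on N, β, ε, diam Ω, sup_Ω f and sup_{ℝ^N∖Ω} g (in particular independent of u and of the family (ν_x)), such that every bounded Borel measurable u : ℝ^N → ℝ with u = g on ℝ^N ∖ Ω which satisfies u(x) ≤ α ∫ u(x+εz) dν_x(z) + β ⨍_{B_ε(x)} u(y) dy + ε² f(x) for every x ∈ Ω, satisfies u ≤ C on ℝ^N. -/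
open MeasureTheory Metric

noncomputable section

lemma avg_bound {N : ℕ} (ε : ℝ) (hε : 0 < ε) (i : Fin N)
    (u : EuclideanSpace ℝ (Fin N) → ℝ) (hu : Measurable u) (M : ℝ) (hM : ∀ y, |u y| ≤ M)
    (S b : ℝ) (hS : ∀ y, u y ≤ S) (x : EuclideanSpace ℝ (Fin N))
    (hb : ∀ y, x i + ε / 2 < y i → u y ≤ b) :
    ⨍ y in ball x ε, u y ≤ S + ((1:ℝ) / 4) ^ N * (b - S) := by
  set c : EuclideanSpace ℝ (Fin N) := x + EuclideanSpace.single i (3 / 4 * ε) with hc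
  have hcx : dist c x = 3 / 4 * ε := by
    rw [hc, dist_eq_norm, add_sub_cancel_left, EuclideanSpace.norm_single, Real.norm_eq_abs,
      abs_of_pos (by positivity)]
  have hsub : ball c (ε / 4) ⊆ ball x ε := by
    apply ball_subset_ball'
    rw [hcx]; linarith
  have hint : ∀ s : Set (EuclideanSpace ℝ (Fin N)), s ⊆ ball x ε →
      IntegrableOn u s volume := by
    intro s hs
    have h1 : IntegrableOn u (ball x ε) volume := by
      refine Measure.integrableOn_of_bounded (M := M) measure_ball_lt_top.ne
        hu.aestronglyMeasurable ?_
      exact Filter.Eventually.of_forall fun y => hM y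
    exact h1.mono_set hs
  have hB' : ∀ y ∈ ball c (ε / 4), u y ≤ b := by
    intro y hy
    apply hb
    have h1 : |(y - c) i| ≤ ‖y - c‖ := by
      simpa using PiLp.norm_apply_le (y - c) i
    rw [mem_ball, dist_eq_norm] at hy
    have h2 : (y - c) i = y i - (x i + 3 / 4 * ε) := by simp [hc]
    rw [h2] at h1
    have := (abs_le.1 h1).1
    linarith
  set V := volume.real (ball x ε) with hV
  set V' := volume.real (ball c (ε / 4)) with hV'
  have hVpos : 0 < V := by
    rw [hV, measureReal_def]
    exact ENNReal.toReal_pos (measure_ball_pos _ _ hε).ne' measure_ball_lt_top.ne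
  have hratio : V' = (1 / 4 : ℝ) ^ N * V := by
    rw [hV, hV', measureReal_def, measureReal_def, show ε / 4 = (1 / 4) * ε by ring,
      Measure.addHaar_ball_mul_of_pos _ c (by norm_num : (0:ℝ) < 1 / 4) ε,
      Measure.addHaar_ball_center _ x ε, ENNReal.toReal_mul, finrank_euclideanSpace_fin,
      ENNReal.toReal_ofReal (by positivity)]
  have hI : ∫ y in ball x ε, u y ≤ b * V' + S * (V - V') := by
    have hsplit := setIntegral_diff (μ := volume) (f := u) measurableSet_ball
      (hint _ subset_rfl) hsub
    have h1 : ∫ y in ball c (ε / 4), u y ≤ ∫ y in ball c (ε / 4), b :=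
      setIntegral_mono_on (hint _ hsub) (integrableOn_const measure_ball_lt_top.ne)
        measurableSet_ball hB'
    have hfin : volume (ball x ε \ ball c (ε / 4)) ≠ ⊤ :=
      (lt_of_le_of_lt (measure_mono Set.diff_subset) measure_ball_lt_top).ne
    have h2 : ∫ y in ball x ε \ ball c (ε / 4), u y ≤ ∫ y in ball x ε \ ball c (ε / 4), S :=
      setIntegral_mono_on (hint _ Set.diff_subset) (integrableOn_const hfin)
        (measurableSet_ball.diff measurableSet_ball) (fun y _ => hS y)
    rw [setIntegral_const, smul_eq_mul] at h1 h2
    rw [measureReal_diff hsub measurableSet_ball measure_ball_lt_top.ne] at h2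
    rw [hsplit] at h2
    linarith
  rw [setAverage_eq, smul_eq_mul, inv_mul_le_iff₀ hVpos]
  rw [hratio] at hI
  linarith

lemma level_bound {N : ℕ} (i : Fin N) (β ε : ℝ)
    (hβ : β ∈ Set.Ioc (0 : ℝ) 1) (hε : 0 < ε) (D : Set (EuclideanSpace ℝ (Fin N)))
    (u : EuclideanSpace ℝ (Fin N) → ℝ) (hu : Measurable u) (M : ℝ) (hM : ∀ y, |u y| ≤ M)
    (S G F d : ℝ) (hS : ∀ y, u y ≤ S) (hGS : G ≤ S) (hF : 0 ≤ F)
    (hG : ∀ y ∉ D, u y ≤ G) (hd : ∀ y ∈ D, y i ≤ d)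
    (hD : ∀ x ∈ D, u x ≤ (1 - β) * S + β * (⨍ y in ball x ε, u y) + F) (n : ℕ) :
    ∀ x, d - n * (ε / 2) < x i → u x ≤ S - (β * (1 / 4) ^ N) ^ n * (S - G) + n * F := by
  have hp1 : ((1:ℝ) / 4) ^ N ≤ 1 := pow_le_one₀ (by norm_num) (by norm_num)
  have hp0 : 0 < ((1:ℝ) / 4) ^ N := by positivity
  set p := ((1:ℝ) / 4) ^ N with hp
  have hq0 : 0 < β * p := mul_pos hβ.1 hp0
  have hq1 : β * p ≤ 1 := mul_le_one₀ hβ.2 hp0.le hp1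
  have hout : ∀ n : ℕ, ∀ x ∉ D, u x ≤ S - (β * p) ^ n * (S - G) + n * F := by
    intro n x hx
    have h1 := hG x hx
    have h2 : (β * p) ^ n ≤ 1 := pow_le_one₀ hq0.le hq1
    have h3 : (β * p) ^ n * (S - G) ≤ 1 * (S - G) :=
      mul_le_mul_of_nonneg_right h2 (by linarith)
    have h4 : 0 ≤ (n : ℝ) * F := by positivity
    linarith
  induction n with
  | zero =>
    intro x hx
    apply hout
    intro hxD
    have := hd x hxD
    simp at hx
    linarith
  | succ n ih =>
    intro x hx
    by_cases hxD : x ∈ D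
    · have h1 := hD x hxD
      have h2 := avg_bound ε hε i u hu M hM S (S - (β * p) ^ n * (S - G) + n * F) hS x
        (fun y hy => ih y (by push_cast at hx; linarith))
      rw [← hp] at h2
      have h3 := mul_le_mul_of_nonneg_left h2 hβ.1.le
      have h4 : β * p * (n * F) ≤ 1 * (n * F) :=
        mul_le_mul_of_nonneg_right hq1 (by positivity)
      rw [pow_succ]
      push_cast
      nlinarith
    · exact hout _ x hxD

/-- uniform upper bound for bounded subsolutions of the DPP, with a constant
depending only on `N`, `β`, `ε`, `diam Ω`, `sup_Ω f` and `sup_{ℝᴺ∖Ω} g` (in particular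
independent of `u`, of `Λ` and of the family `ν`). -/
theorem subsolution_bound (N : ℕ) (hN : 1 ≤ N) (β ε : ℝ)
    (hβ : β ∈ Set.Ioc (0 : ℝ) 1) (hε : 0 < ε) :
    ∃ C : ℝ → ℝ → ℝ → ℝ,
      ∀ Λ : ℝ, 1 ≤ Λ →
      ∀ (ν : EuclideanSpace ℝ (Fin N) → Measure (EuclideanSpace ℝ (Fin N))),
        (∀ x, IsProbabilityMeasure (ν x)) →
        (∀ x, ν x (closedBall (0 : EuclideanSpace ℝ (Fin N)) Λ)ᶜ = 0) →
        (∀ x (E : Set (EuclideanSpace ℝ (Fin N))), MeasurableSet E → ν x E = ν x (-E)) →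
        (∀ w : EuclideanSpace ℝ (Fin N) → ℝ, Measurable w → (∃ M, ∀ y, |w y| ≤ M) →
          Measurable fun x => ∫ z, w (x + z) ∂ν x) →
      ∀ (D : Set (EuclideanSpace ℝ (Fin N))), IsOpen D → IsConnected D →
        Bornology.IsBounded D →
      ∀ g f u : EuclideanSpace ℝ (Fin N) → ℝ,
        Measurable g → (∃ M, ∀ y, |g y| ≤ M) →
        Measurable f → (∃ M, ∀ y, |f y| ≤ M) →
        Measurable u → (∃ M, ∀ y, |u y| ≤ M) →
        (∀ x ∉ D, u x = g x) →
        (∀ x ∈ D, u x ≤ (1 - β) * ∫ z, u (x + ε • z) ∂ν x +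
          β * ⨍ y in ball x ε, u y + ε ^ 2 * f x) →
        ∀ x, u x ≤ C (diam D) (sSup (f '' D)) (sSup (g '' Dᶜ)) := by
  let i : Fin N := ⟨0, hN⟩
  set q : ℝ := β * (1 / 4) ^ N with hq
  have hq0 : 0 < q := mul_pos hβ.1 (by positivity)
  refine ⟨fun d s t => t + (⌈4 * d / ε⌉₊ + 1 : ℕ) * (ε ^ 2 * max s 0) /
    q ^ (⌈4 * d / ε⌉₊ + 1), ?_⟩
  intro Λ _ ν hν _ _ _ D _ hDc hDb g f u _ hgb _ hfb hu hub hug hsub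
  obtain ⟨M, hM⟩ := hub
  obtain ⟨Mg, hMg⟩ := hgb
  obtain ⟨Mf, hMf⟩ := hfb
  obtain ⟨x0, hx0⟩ := hDc.nonempty
  set G := sSup (g '' Dᶜ) with hGdef
  set n := ⌈4 * diam D / ε⌉₊ + 1 with hn
  set F := ε ^ 2 * max (sSup (f '' D)) 0 with hFdef
  have hF : 0 ≤ F := by positivity
  have hG : ∀ y ∉ D, u y ≤ G := by
    intro y hy
    rw [hug y hy]
    refine le_csSup ⟨Mg, ?_⟩ ⟨y, hy, rfl⟩
    rintro _ ⟨z, _, rfl⟩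
    exact (le_abs_self _).trans (hMg z)
  have hf : ∀ y ∈ D, f y ≤ max (sSup (f '' D)) 0 := by
    intro y hy
    refine le_max_of_le_left (le_csSup ⟨Mf, ?_⟩ ⟨y, hy, rfl⟩)
    rintro _ ⟨z, _, rfl⟩
    exact (le_abs_self _).trans (hMf z)
  have hbdd : BddAbove (Set.range u) :=
    ⟨M, by rintro _ ⟨z, rfl⟩; exact (le_abs_self _).trans (hM z)⟩
  set S := max G (⨆ y, u y) with hSdef
  have hS : ∀ y, u y ≤ S := fun y => le_max_of_le_right (le_ciSup hbdd y)
  have hGS : G ≤ S := le_max_left _ _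
  have hcoord : ∀ y ∈ D, |y i - x0 i| ≤ diam D := by
    intro y hy
    have h1 : |(y - x0) i| ≤ ‖y - x0‖ := by
      simpa using PiLp.norm_apply_le (y - x0) i
    rw [← dist_eq_norm] at h1
    exact h1.trans (dist_le_diam_of_mem hDb hy hx0)
  have hD : ∀ x ∈ D, u x ≤ (1 - β) * S + β * (⨍ y in ball x ε, u y) + F := by
    intro x hx
    have h := hsub x hx
    have hint : ∫ z, u (x + ε • z) ∂ν x ≤ S := by
      have := hν x
      have hi : Integrable (fun z => u (x + ε • z)) (ν x) := by
        refine Integrable.of_bound (C := M) ?_ (Filter.Eventually.of_forall fun z => hM _)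
        exact (hu.comp (by fun_prop)).aestronglyMeasurable
      calc ∫ z, u (x + ε • z) ∂ν x ≤ ∫ z, S ∂ν x :=
            integral_mono hi (integrable_const _) (fun z => hS _)
        _ = S := by simp
    have h1 := mul_le_mul_of_nonneg_left hint (sub_nonneg.2 hβ.2)
    have hV : 0 < volume.real (ball x ε) := by
      rw [measureReal_def]
      exact ENNReal.toReal_pos (measure_ball_pos _ _ hε).ne' measure_ball_lt_top.ne
    have hiu : IntegrableOn u (ball x ε) volume := by
      refine Measure.integrableOn_of_bounded (M := M) measure_ball_lt_top.ne
        hu.aestronglyMeasurable ?_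
      exact Filter.Eventually.of_forall fun y => hM y
    have havg : (⨍ y in ball x ε, (u y + ε ^ 2 * f x)) =
        (⨍ y in ball x ε, u y) + ε ^ 2 * f x := by
      rw [setAverage_eq, setAverage_eq, integral_add hiu
        (integrableOn_const measure_ball_lt_top.ne), setIntegral_const]
      simp only [smul_eq_mul]
      field_simp
    rw [havg] at h
    have h2 : ε ^ 2 * f x ≤ F := mul_le_mul_of_nonneg_left (hf x hx) (by positivity)
    have h3 : β * (ε ^ 2 * f x) ≤ β * F := mul_le_mul_of_nonneg_left h2 hβ.1.le
    have h4 : β * F ≤ 1 * F := mul_le_mul_of_nonneg_right hβ.2 hF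
    linarith
  have hlev := level_bound i β ε hβ hε D u hu M hM S G F (x0 i + diam D) hS hGS hF hG
    (fun y hy => by have := (abs_le.1 (hcoord y hy)).2; linarith) hD n
  rw [← hq] at hlev
  have hnlarge : 2 * diam D < n * (ε / 2) := by
    have h1 : 4 * diam D / ε < n := by
      have := Nat.le_ceil (4 * diam D / ε)
      rw [hn]; push_cast; linarith
    rw [div_lt_iff₀ hε] at h1
    linarith
  have hq1 : q ≤ 1 :=
    mul_le_one₀ hβ.2 (by positivity) (pow_le_one₀ (by norm_num) (by norm_num))
  have hqn1 : q ^ n ≤ 1 := pow_le_one₀ hq0.le hq1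
  have hqn0 : 0 < q ^ n := by positivity
  have hGT : G ≤ S - q ^ n * (S - G) + n * F := by
    have h3 : q ^ n * (S - G) ≤ 1 * (S - G) :=
      mul_le_mul_of_nonneg_right hqn1 (by linarith)
    have h4 : 0 ≤ (n : ℝ) * F := by positivity
    linarith
  have hall : ∀ x, u x ≤ S - q ^ n * (S - G) + n * F := by
    intro x
    by_cases hx : x ∈ D
    · apply hlev
      have := (abs_le.1 (hcoord x hx)).1
      linarith
    · exact (hG x hx).trans hGT
  have hST : S ≤ S - q ^ n * (S - G) + n * F := max_le hGT (ciSup_le hall)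
  have hfin : S ≤ G + n * F / q ^ n := by
    have : S - G ≤ n * F / q ^ n := by
      rw [le_div_iff₀ hqn0]; linarith
    linarith
  intro x
  exact (hS x).trans hfin
end
end
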